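/- arXiv:1805.03566 — 2 statements merged into one kernel-verified Lean document; each statement's English description precedes it below -/
import Mathlib

section
/- Let ν be a lattice path with m east and n north steps. For every ν-tree T, the product in reading order of the simple transpositions s_{d(p)+1} over the points p ∈ A_ν \ T equals one and the same permutation π_ν, independent of T, and this product is reduced: |A_ν \ T| equals the Coxeter length of π_ν. Conversely, for every subset C ⊆ A_ν such that the transpositions s_{d(p)+1} for p ∈ C, multiplied in reading order, form a reduced expression of π_ν, the complement A_ν \ C is a ν-tree. -/
open scoped Classical

/-! Lattice paths: `true` = north step, `false` = east step. -/

def eastSteps (ν : List Bool) : ℕ := ν.count false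
def northSteps (ν : List Bool) : ℕ := ν.count true

/-- Height at which the path first reaches abscissa `x`. -/
def heightAt : List Bool → ℕ → ℕ
  | _, 0 => 0
  | [], _ + 1 => 0
  | true :: rest, x + 1 => heightAt rest (x + 1) + 1
  | false :: rest, x + 1 => heightAt rest x

/-- Lattice point of a path after `i` steps. -/
def pointAt (μ : List Bool) (i : ℕ) : ℕ × ℕ :=
  ((μ.take i).count false, (μ.take i).count true)

/-- The set `A_ν` of lattice points weakly above `ν`. -/
def APts (ν : List Bool) : Set (ℕ × ℕ) :=
  {p | p.1 ≤ eastSteps ν ∧ heightAt ν p.1 ≤ p.2 ∧ p.2 ≤ northSteps ν}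

def Incompatible (ν : List Bool) (p q : ℕ × ℕ) : Prop :=
  (p.1 < q.1 ∧ p.2 < q.2 ∧ (q.1, p.2) ∈ APts ν) ∨
    (q.1 < p.1 ∧ q.2 < p.2 ∧ (p.1, q.2) ∈ APts ν)

def Compatible (ν : List Bool) (p q : ℕ × ℕ) : Prop := ¬ Incompatible ν p q

def IsNuTree (ν : List Bool) (T : Set (ℕ × ℕ)) : Prop :=
  T ⊆ APts ν ∧ T.Pairwise (Compatible ν) ∧
    ∀ T', T' ⊆ APts ν → T'.Pairwise (Compatible ν) → T ⊆ T' → T' = T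

def IsRightRotationAt (T T' : Set (ℕ × ℕ)) (q q' : ℕ × ℕ) : Prop :=
  ∃ x y x'' y', q = (x, y) ∧ q' = (x'', y') ∧ x < x'' ∧ y < y' ∧
    (x, y) ∈ T ∧ (x, y') ∈ T ∧ (x'', y) ∈ T ∧
    (∀ b, y < b → b < y' → (x, b) ∉ T) ∧
    (∀ a, x < a → a < x'' → (a, y) ∉ T) ∧
    (∀ a, x < a → a < x'' → (a, y') ∉ T) ∧
    (∀ b, y < b → b < y' → (x'', b) ∉ T) ∧
    T' = (T \ {(x, y)}) ∪ {(x'', y')}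

def IsRightRotation (T T' : Set (ℕ × ℕ)) : Prop :=
  ∃ q q', IsRightRotationAt T T' q q'

/-- Order relation of the rotation poset of ν-trees. -/
def TreeLE (ν : List Bool) : Set (ℕ × ℕ) → Set (ℕ × ℕ) → Prop :=
  Relation.ReflTransGen fun A B => IsNuTree ν A ∧ IsNuTree ν B ∧ IsRightRotation A B

def IsNuPath (ν μ : List Bool) : Prop :=
  eastSteps μ = eastSteps ν ∧ northSteps μ = northSteps ν ∧
    ∀ i ≤ μ.length, pointAt μ i ∈ APts ν

noncomputable def horiz (ν : List Bool) (p : ℕ × ℕ) : ℕ :=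
  sSup {k | (p.1 + k, p.2) ∈ APts ν}

/-- Covering relation of the ν-Tamari lattice. -/
def TamariCover (ν μ μ' : List Bool) : Prop :=
  IsNuPath ν μ ∧ IsNuPath ν μ' ∧
    ∃ i j, 0 < i ∧ i < j ∧ j ≤ μ.length ∧
      μ.getD (i - 1) true = false ∧ μ.getD i false = true ∧
      horiz ν (pointAt μ j) = horiz ν (pointAt μ i) ∧
      (∀ k, i < k → k < j → horiz ν (pointAt μ k) ≠ horiz ν (pointAt μ i)) ∧
      μ' = μ.take (i - 1) ++ (μ.drop i).take (j - i) ++ [false] ++ μ.drop j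

def TamariLE (ν : List Bool) : List Bool → List Bool → Prop :=
  Relation.ReflTransGen (TamariCover ν)

/-! Flushing maps -/

def rowAvail (ν : List Bool) (y : ℕ) : List ℕ :=
  ((List.range (eastSteps ν + 1)).filter fun x => decide (heightAt ν x ≤ y)).reverse

def pointsAtHeight (μ : List Bool) (y : ℕ) : ℕ :=
  ((List.range (μ.length + 1)).filter fun i => decide ((μ.take i).count true = y)).length

def rflushAux (ν : List Bool) : List ℕ → ℕ → List ℕ → List (ℕ × ℕ)
  | [], _, _ => []
  | c :: rest, y, forbidden =>
    let placed := ((rowAvail ν y).filter fun x => decide (x ∉ forbidden)).take c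
    placed.map (fun x => (x, y)) ++ rflushAux ν rest (y + 1) (forbidden ++ placed.dropLast)

/-- Right-flushing map `R`. -/
def Rflush (ν μ : List Bool) : Set (ℕ × ℕ) :=
  {p | p ∈ rflushAux ν ((List.range (northSteps ν + 1)).map (pointsAtHeight μ)) 0 []}

def lflushAux (m : ℕ) : List ℕ → ℕ → List ℕ → List (ℕ × ℕ)
  | [], _, _ => []
  | c :: rest, y, forbidden =>
    let placed := ((List.range (m + 1)).filter fun x => decide (x ∉ forbidden)).take c
    placed.map (fun x => (x, y)) ++ lflushAux m rest (y + 1) (forbidden ++ placed.dropLast)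

noncomputable def rowCount (T : Set (ℕ × ℕ)) (y : ℕ) : ℕ := {x | (x, y) ∈ T}.ncard

/-- Left-flushing map `L`. -/
noncomputable def Lflush (ν : List Bool) (T : Set (ℕ × ℕ)) : Set (ℕ × ℕ) :=
  {p | p ∈ lflushAux (eastSteps ν) ((List.range (northSteps ν + 1)).map (rowCount T)) 0 []}

def pathPointSet (μ : List Bool) : Set (ℕ × ℕ) := {p | ∃ i ≤ μ.length, pointAt μ i = p}

/-! Bracket vectors (0-indexed positions `0,…,ℓ`). -/

noncomputable def fpos (ν : List Bool) (k : ℕ) : ℕ :=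
  sSup {i | i ≤ ν.length ∧ (ν.take i).count true = k}

def bmin (ν : List Bool) : List ℕ :=
  (List.range (ν.length + 1)).map fun i => (ν.take i).count true

def IsBracketVector (ν : List Bool) (b : List ℕ) : Prop :=
  b.length = ν.length + 1 ∧
    (∀ k ≤ northSteps ν, b.getD (fpos ν k) 0 = k) ∧
    (∀ i < b.length, (bmin ν).getD i 0 ≤ b.getD i 0 ∧ b.getD i 0 ≤ northSteps ν) ∧
    ∀ i j k, i < j → j < k → k < b.length →
      ¬(b.getD i 0 = b.getD k 0 ∧ b.getD i 0 < b.getD j 0)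

noncomputable def leftChild (T : Set (ℕ × ℕ)) (p : ℕ × ℕ) : Option (ℕ × ℕ) :=
  if ∃ b, (p.1, b) ∈ T ∧ b < p.2 then some (p.1, sSup {b | (p.1, b) ∈ T ∧ b < p.2})
  else none

noncomputable def rightChild (T : Set (ℕ × ℕ)) (p : ℕ × ℕ) : Option (ℕ × ℕ) :=
  if ∃ a, (a, p.2) ∈ T ∧ p.1 < a then
    if ∃ b, (sInf {a | (a, p.2) ∈ T ∧ p.1 < a}, b) ∈ T ∧ p.2 < b then none
    else some (sInf {a | (a, p.2) ∈ T ∧ p.1 < a}, p.2)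
  else none

noncomputable def inorderAux (T : Set (ℕ × ℕ)) : ℕ → ℕ × ℕ → List (ℕ × ℕ)
  | 0, _ => []
  | fuel + 1, p =>
    (match leftChild T p with
      | none => []
      | some l => inorderAux T fuel l) ++ p ::
      (match rightChild T p with
        | none => []
        | some r => inorderAux T fuel r)

/-- Bracket vector of a ν-tree: y-coordinates read in in-order from the root `(0,n)`. -/
noncomputable def bracketOfTree (ν : List Bool) (T : Set (ℕ × ℕ)) : List ℕ :=
  (inorderAux T T.ncard (0, northSteps ν)).map Prod.snd

noncomputable def bracketAssign (ν μ : List Bool) : List (ℕ × ℕ) :=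
  ((List.range (northSteps ν + 1)).foldl
    (fun (st : List (ℕ × ℕ) × List ℕ) k =>
      let picked := ((st.2.filter fun i => decide (i ≤ fpos ν k)).reverse).take
        (pointsAtHeight μ k)
      (st.1 ++ picked.map fun i => (i, k), st.2.filter fun i => decide (i ∉ picked)))
    ([], List.range (ν.length + 1))).1

/-- Bracket vector of a ν-path. -/
noncomputable def bracketOfPath (ν μ : List Bool) : List ℕ :=
  (List.range (ν.length + 1)).map fun i => ((bracketAssign ν μ).lookup i).getD 0

/-- Componentwise order on (equal length) integer vectors. -/
def listLE (b b' : List ℕ) : Prop :=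
  b.length = b'.length ∧ ∀ i, b.getD i 0 ≤ b'.getD i 0

/-! Reversal -/

def revPath (ν : List Bool) : List Bool := ν.reverse.map fun s => !s

def revTree (ν : List Bool) (T : Set (ℕ × ℕ)) : Set (ℕ × ℕ) :=
  (fun p : ℕ × ℕ => (northSteps ν - p.2, eastSteps ν - p.1)) '' T

/-! Pipe dreams and subword complexes -/

def dOf (ν : List Bool) (p : ℕ × ℕ) : ℕ := p.1 + (northSteps ν - p.2)

def labelPerm (ν : List Bool) (p : ℕ × ℕ) : Equiv.Perm ℕ :=
  Equiv.swap (dOf ν p + 1) (dOf ν p + 2)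

/-- The points of `A_ν` in reading order: rows from bottom to top, each left to right. -/
def readingList (ν : List Bool) : List (ℕ × ℕ) :=
  ((List.range (northSteps ν + 1)).map fun y =>
    ((List.range (eastSteps ν + 1)).filter fun x => decide (heightAt ν x ≤ y)).map
      fun x => (x, y)).flatten

/-- The minimal ν-tree. -/
def TminSet (ν : List Bool) : Set (ℕ × ℕ) :=
  {p | p ∈ APts ν ∧ (p.1 = 0 ∨ ∃ i < ν.length, ν.getD i true = false ∧ p = pointAt ν (i + 1))}

noncomputable def prodOver (ν : List Bool) (C : Set (ℕ × ℕ)) : Equiv.Perm ℕ :=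
  (((readingList ν).filter fun p => decide (p ∈ C)).map (labelPerm ν)).prod

/-- Coxeter length: number of inversions. -/
noncomputable def lenInv (π : Equiv.Perm ℕ) : ℕ :=
  {q : ℕ × ℕ | q.1 < q.2 ∧ π q.2 < π q.1}.ncard

noncomputable def piNu (ν : List Bool) : Equiv.Perm ℕ := prodOver ν (APts ν \ TminSet ν)

def Qword (ν : List Bool) : List (Equiv.Perm ℕ) := (readingList ν).map (labelPerm ν)

noncomputable def prodAt (Q : List (Equiv.Perm ℕ)) (P : Finset ℕ) : Equiv.Perm ℕ :=
  (((List.range Q.length).filter fun i => decide (i ∈ P)).map fun i => Q.getD i 1).prod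

def IsFacet (Q : List (Equiv.Perm ℕ)) (π : Equiv.Perm ℕ) (I : Finset ℕ) : Prop :=
  I ⊆ Finset.range Q.length ∧
    prodAt Q (Finset.range Q.length \ I) = π ∧
    (Finset.range Q.length \ I).card = lenInv π

def IncFlip (Q : List (Equiv.Perm ℕ)) (π : Equiv.Perm ℕ) (I J : Finset ℕ) : Prop :=
  IsFacet Q π I ∧ IsFacet Q π J ∧ ∃ i ∈ I, ∃ j ∈ J, i < j ∧ I.erase i = J.erase j

def FlipLE (Q : List (Equiv.Perm ℕ)) (π : Equiv.Perm ℕ) : Finset ℕ → Finset ℕ → Prop :=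
  Relation.ReflTransGen (IncFlip Q π)

/-- The maximal ν-tree. -/
def TmaxSet (ν : List Bool) : Set (ℕ × ℕ) :=
  {p | (p.1 ≤ eastSteps ν ∧ p.2 = northSteps ν) ∨ ∃ i < ν.length, ν.getD i false = true ∧ p = pointAt ν i}

namespace NuPD

noncomputable def sg (k : ℕ) : Equiv.Perm ℕ := Equiv.swap (k+1) (k+2)

noncomputable def ev (W : List ℕ) : Equiv.Perm ℕ := (W.map sg).prod

theorem ev_nil : ev [] = 1 := rfl
theorem ev_cons (k : ℕ) (W : List ℕ) : ev (k :: W) = sg k * ev W := by simp [ev]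
theorem ev_append (V W : List ℕ) : ev (V ++ W) = ev V * ev W := by simp [ev]

theorem sg_apply (k v : ℕ) : sg k v = if v = k+1 then k+2 else if v = k+2 then k+1 else v := by
  simp [sg, Equiv.swap_apply_def]

theorem sg_sg (k : ℕ) (σ : Equiv.Perm ℕ) : sg k * (sg k * σ) = σ := by
  simp [sg]

/-! inversions -/
def Inv (π : Equiv.Perm ℕ) : Set (ℕ × ℕ) := {q : ℕ × ℕ | q.1 < q.2 ∧ π q.2 < π q.1}

theorem lenInv_eq (π : Equiv.Perm ℕ) : lenInv π = (Inv π).ncard := rfl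

theorem Inv_sg_lt (k : ℕ) (σ : Equiv.Perm ℕ) (h : σ⁻¹ (k+1) < σ⁻¹ (k+2)) :
    Inv (sg k * σ) = insert (σ⁻¹ (k+1), σ⁻¹ (k+2)) (Inv σ) ∧
      (σ⁻¹ (k+1), σ⁻¹ (k+2)) ∉ Inv σ := by
  constructor
  · ext ⟨p, q⟩
    obtain ⟨p, rfl⟩ := σ⁻¹.surjective p
    obtain ⟨q, rfl⟩ := σ⁻¹.surjective q
    have hs : ∀ x, σ (σ⁻¹ x) = x := fun x => by simp
    simp only [Inv, Set.mem_ofPred_eq, Equiv.Perm.mul_apply, hs, sg_apply,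
      Set.mem_insert_iff, Prod.mk.injEq, EmbeddingLike.apply_eq_iff_eq]
    by_cases h1 : p = k+1 <;> by_cases h2 : p = k+2 <;> by_cases h3 : q = k+1 <;>
      by_cases h4 : q = k+2 <;> (try subst h1) <;> (try subst h2) <;> (try subst h3) <;>
      (try subst h4) <;> simp_all <;> omega
  · simp [Inv]

theorem lenInv_up (k : ℕ) (σ : Equiv.Perm ℕ) (hf : (Inv σ).Finite)
    (h : σ⁻¹ (k+1) < σ⁻¹ (k+2)) : lenInv (sg k * σ) = lenInv σ + 1 := by
  obtain ⟨h1, h2⟩ := Inv_sg_lt k σ h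
  rw [lenInv_eq, lenInv_eq, h1, Set.ncard_insert_of_notMem h2 hf]

theorem inv_mul_sg (k : ℕ) (σ : Equiv.Perm ℕ) (v : ℕ) : (sg k * σ)⁻¹ v = σ⁻¹ (sg k v) := by
  simp [sg]

theorem inv_mul_sg1 (k : ℕ) (σ : Equiv.Perm ℕ) : (sg k * σ)⁻¹ (k+1) = σ⁻¹ (k+2) := by
  rw [inv_mul_sg, sg_apply, if_pos rfl]

theorem inv_mul_sg2 (k : ℕ) (σ : Equiv.Perm ℕ) : (sg k * σ)⁻¹ (k+2) = σ⁻¹ (k+1) := by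
  rw [inv_mul_sg, sg_apply, if_neg (by omega), if_pos rfl]

theorem Inv_sub (k : ℕ) (σ : Equiv.Perm ℕ) (h : σ⁻¹ (k+2) < σ⁻¹ (k+1)) :
    Inv σ = insert (σ⁻¹ (k+2), σ⁻¹ (k+1)) (Inv (sg k * σ)) ∧
      (σ⁻¹ (k+2), σ⁻¹ (k+1)) ∉ Inv (sg k * σ) := by
  have := Inv_sg_lt k (sg k * σ) (by rw [inv_mul_sg1, inv_mul_sg2]; exact h)
  rw [inv_mul_sg1, inv_mul_sg2, sg_sg] at this
  exact this

theorem lenInv_down (k : ℕ) (σ : Equiv.Perm ℕ) (hf : (Inv σ).Finite)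
    (h : σ⁻¹ (k+2) < σ⁻¹ (k+1)) : lenInv σ = lenInv (sg k * σ) + 1 := by
  obtain ⟨h1, h2⟩ := Inv_sub k σ h
  have hf' : (Inv (sg k * σ)).Finite := hf.subset (by rw [h1]; exact Set.subset_insert _ _)
  rw [lenInv_eq, lenInv_eq, h1, Set.ncard_insert_of_notMem h2 hf']

theorem Inv_fin_step (k : ℕ) (σ : Equiv.Perm ℕ) (hf : (Inv σ).Finite) :
    (Inv (sg k * σ)).Finite := by
  rcases lt_trichotomy (σ⁻¹ (k+1)) (σ⁻¹ (k+2)) with h | h | h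
  · rw [(Inv_sg_lt k σ h).1]; exact hf.insert _
  · simp at h
  · exact hf.subset (by conv_rhs => rw [(Inv_sub k σ h).1]
                        exact Set.subset_insert _ _)

theorem Inv_fin (W : List ℕ) : (Inv (ev W)).Finite := by
  induction W with
  | nil =>
    have : Inv (ev []) = ∅ := by
      ext ⟨p, q⟩; simp [Inv, ev_nil]; omega
    rw [this]; exact Set.finite_empty
  | cons k W ih => rw [ev_cons]; exact Inv_fin_step k _ ih

theorem lenInv_nil : lenInv (ev []) = 0 := by
  have : Inv (ev []) = ∅ := by
    ext ⟨p, q⟩; simp [Inv, ev_nil]; omega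
  rw [lenInv_eq, this]; simp

theorem lenInv_le (W : List ℕ) : lenInv (ev W) ≤ W.length := by
  induction W with
  | nil => rw [lenInv_nil]; simp
  | cons k W ih =>
    rw [ev_cons, List.length_cons]
    rcases lt_trichotomy ((ev W)⁻¹ (k+1)) ((ev W)⁻¹ (k+2)) with h | h | h
    · rw [lenInv_up k _ (Inv_fin W) h]; omega
    · simp at h
    · have := lenInv_down k _ (Inv_fin W) h; omega

def Red (W : List ℕ) : Prop := lenInv (ev W) = W.length

theorem Red_cons {k : ℕ} {W : List ℕ} (h : Red (k :: W)) :
    Red W ∧ (ev (k :: W))⁻¹ (k+2) < (ev (k :: W))⁻¹ (k+1) := by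
  unfold Red at *
  have hl := lenInv_le W
  rw [ev_cons, List.length_cons] at h
  rw [ev_cons]
  rcases lt_trichotomy ((ev W)⁻¹ (k+1)) ((ev W)⁻¹ (k+2)) with h' | h' | h'
  · rw [lenInv_up k _ (Inv_fin W) h'] at h
    refine ⟨by omega, ?_⟩
    rw [inv_mul_sg1, inv_mul_sg2]; exact h'
  · simp at h'
  · have := lenInv_down k _ (Inv_fin W) h'; omega

theorem Red_cons_of {k : ℕ} {W : List ℕ} (h : Red W)
    (h' : (ev W)⁻¹ (k+1) < (ev W)⁻¹ (k+2)) : Red (k :: W) := by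
  unfold Red at *
  rw [ev_cons, lenInv_up k _ (Inv_fin W) h', h]; simp

/-! rows -/
noncomputable def rowW (C : ℕ → ℕ → Prop) (i : ℕ) : ℕ → ℕ → List ℕ
  | _, 0 => []
  | t, l+1 => if C t i then (t+i) :: rowW C i (t+1) l else rowW C i (t+1) l

noncomputable def WW (C : ℕ → ℕ → Prop) (u : ℕ → ℕ) : ℕ → List ℕ
  | 0 => rowW C 0 0 (u 0 + 1)
  | n+1 => rowW C (n+1) 0 (u (n+1) + 1) ++ WW C u n

theorem rowW_split (C : ℕ → ℕ → Prop) (i t l l' : ℕ) :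
    rowW C i t (l + l') = rowW C i t l ++ rowW C i (t+l) l' := by
  induction l generalizing t with
  | zero => simp [rowW]
  | succ l ih =>
    rw [show l + 1 + l' = (l + l') + 1 by ring]
    simp only [rowW, ih]
    rw [show t + 1 + l = t + (l+1) by ring]
    split_ifs <;> simp

theorem rowW_congr (C C' : ℕ → ℕ → Prop) (i t l : ℕ)
    (h : ∀ x, t ≤ x → x < t + l → (C x i ↔ C' x i)) : rowW C i t l = rowW C' i t l := by
  induction l generalizing t with
  | zero => rfl
  | succ l ih =>
    simp only [rowW]
    rw [ih (t+1) (fun x h1 h2 => h x (by omega) (by omega))]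
    simp only [h t le_rfl (by omega)]

theorem WW_congr (C C' : ℕ → ℕ → Prop) (u : ℕ → ℕ) (n : ℕ)
    (h : ∀ i ≤ n, ∀ x ≤ u i, (C x i ↔ C' x i)) : WW C u n = WW C' u n := by
  induction n with
  | zero => exact rowW_congr _ _ _ _ _ (fun x _ h2 => h 0 le_rfl x (by omega))
  | succ n ih =>
    simp only [WW]
    rw [ih (fun i hi => h i (by omega)),
      rowW_congr C C' _ _ _ (fun x _ h2 => h (n+1) le_rfl x (by omega))]

theorem rowW_nil (C : ℕ → ℕ → Prop) (i t l : ℕ)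
    (h : ∀ x, t ≤ x → x < t + l → ¬ C x i) : rowW C i t l = [] := by
  induction l generalizing t with
  | zero => rfl
  | succ l ih =>
    simp only [rowW]
    rw [ih (t+1) (fun x h1 h2 => h x (by omega) (by omega)), if_neg (h t le_rfl (by omega))]

theorem rowW_eq_nil (C : ℕ → ℕ → Prop) (i t l : ℕ) (h : rowW C i t l = []) :
    ∀ x, t ≤ x → x < t + l → ¬ C x i := by
  induction l generalizing t with
  | zero => intro x; omega
  | succ l ih =>
    simp only [rowW] at h
    split_ifs at h with hc
    intro x h1 h2
    rcases eq_or_lt_of_le h1 with rfl | h1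
    · exact hc
    · exact ih (t+1) h x h1 (by omega)

theorem rowW_length_full (C : ℕ → ℕ → Prop) (i t l : ℕ)
    (h : ∀ x, t ≤ x → x < t + l → C x i) : (rowW C i t l).length = l := by
  induction l generalizing t with
  | zero => rfl
  | succ l ih =>
    simp only [rowW]
    rw [if_pos (h t le_rfl (by omega)), List.length_cons,
      ih (t+1) (fun x h1 h2 => h x (by omega) (by omega))]

/-- positions outside are fixed -/
theorem row_fix_low (C : ℕ → ℕ → Prop) (i t l v : ℕ) (h : v ≤ t + i) :
    ev (rowW C i t l) v = v := by
  induction l generalizing t with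
  | zero => rfl
  | succ l ih =>
    simp only [rowW]
    split_ifs
    · rw [ev_cons, Equiv.Perm.mul_apply, ih (t+1) (by omega), sg_apply]
      split_ifs <;> omega
    · exact ih (t+1) (by omega)

theorem row_fix_high (C : ℕ → ℕ → Prop) (i t l v : ℕ) (h : t + l + i + 1 < v) :
    ev (rowW C i t l) v = v := by
  induction l generalizing t with
  | zero => rfl
  | succ l ih =>
    simp only [rowW]
    split_ifs
    · rw [ev_cons, Equiv.Perm.mul_apply, ih (t+1) (by omega), sg_apply]
      split_ifs <;> omega
    · exact ih (t+1) (by omega)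

/-- a row raises positions by at most one, and by one iff there is a cross. -/
theorem row_raise (C : ℕ → ℕ → Prop) (i t l v : ℕ) :
    ev (rowW C i t l) v ≤ v + 1 ∧
     (ev (rowW C i t l) v = v + 1 ↔ ∃ x, t ≤ x ∧ x < t + l ∧ x + i + 1 = v ∧ C x i) := by
  induction l generalizing t with
  | zero =>
    refine ⟨by simp [rowW, ev_nil], ?_⟩
    simp only [rowW, ev_nil, Equiv.Perm.one_apply]
    constructor
    · omega
    · rintro ⟨x, h⟩; omega
  | succ l ih =>
    have key : (∃ x, t ≤ x ∧ x < t + (l+1) ∧ x + i + 1 = v ∧ C x i) ↔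
       (t + i + 1 = v ∧ C t i) ∨ (∃ x, t+1 ≤ x ∧ x < t + 1 + l ∧ x + i + 1 = v ∧ C x i) := by
      constructor
      · rintro ⟨x, h1, h2, h3, h4⟩
        rcases eq_or_lt_of_le h1 with rfl | h1
        · left; exact ⟨h3, h4⟩
        · right; exact ⟨x, h1, by omega, h3, h4⟩
      · rintro (⟨h1, h2⟩ | ⟨x, h1, h2, h3, h4⟩)
        · exact ⟨t, le_rfl, by omega, h1, h2⟩
        · exact ⟨x, by omega, by omega, h3, h4⟩
    rw [key]
    obtain ⟨ih1, ih2⟩ := ih (t+1)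
    rw [← ih2]
    by_cases hc : C t i
    · simp only [rowW, if_pos hc, ev_cons, Equiv.Perm.mul_apply]
      by_cases hv : v ≤ t + i + 1
      · rw [row_fix_low C i (t+1) l v (by omega), sg_apply]
        simp only [hc, and_true]
        split_ifs <;> omega
      · have : ev (rowW C i (t+1) l) v ≠ t+i+1 := by
          intro h
          have h2 := row_fix_low C i (t+1) l (t+i+1) (by omega)
          rw [← h2] at h
          have := (ev (rowW C i (t+1) l)).injective h
          omega
        rw [sg_apply, if_neg this]
        simp only [hc, and_true]
        split_ifs <;> omega
    · simp only [rowW, if_neg hc]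
      simp [hc, ih1]

theorem row_full_end (C : ℕ → ℕ → Prop) (i t l : ℕ)
    (h : ∀ x, t ≤ x → x < t + l → C x i) :
    ev (rowW C i t l) (t + i + l + 1) = t + i + 1 := by
  induction l generalizing t with
  | zero => rfl
  | succ l ih =>
    simp only [rowW]
    rw [if_pos (h t le_rfl (by omega)), ev_cons, Equiv.Perm.mul_apply]
    have := ih (t+1) (fun x h1 h2 => h x (by omega) (by omega))
    rw [show t + i + (l+1) + 1 = t + 1 + i + l + 1 by ring, this, sg_apply]
    split_ifs <;> omega

/-! column deletion -/
def skip (j c x : ℕ) : ℕ := if x ≤ j then x else x + c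
def sk (C : ℕ → ℕ → Prop) (j c : ℕ) : ℕ → ℕ → Prop := fun x i => C (skip j c x) i
/-- embedding of positions -/
def em (j c i v : ℕ) : ℕ := if v ≤ i + j + 1 then v else v + c

theorem row_right (C : ℕ → ℕ → Prop) (j c i t l v : ℕ) (ht : j < t) :
    ev (rowW C i (t+c) l) (em j c i v) = em j c i (ev (rowW (sk C j c) i t l) v) ∧
    (rowW C i (t+c) l).length = (rowW (sk C j c) i t l).length := by
  induction l generalizing t with
  | zero => simp [rowW, ev_nil]
  | succ l ih =>
    obtain ⟨ih1, ih2⟩ := ih (t+1) (by omega)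
    have e : sk C j c t i ↔ C (t+c) i := by
      simp only [sk, skip]; rw [if_neg (by omega)]
    have e2 : t + 1 + c = t + c + 1 := by ring
    rw [e2] at ih1 ih2
    simp only [rowW, e]
    split_ifs
    · simp only [ev_cons, Equiv.Perm.mul_apply, ih1, List.length_cons, ih2, and_true]
      generalize ev (rowW (sk C j c) i (t+1) l) v = z
      simp only [em, sg_apply]
      split_ifs <;> omega
    · exact ⟨ih1, ih2⟩

theorem row_left (C : ℕ → ℕ → Prop) (j c i t l v : ℕ) (ht : t + l ≤ j + 1) :
    ev (rowW C i t l) (em j c (i+1) v) = em j c (i+1) (ev (rowW (sk C j c) i t l) v) ∧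
    (rowW C i t l).length = (rowW (sk C j c) i t l).length := by
  induction l generalizing t with
  | zero => simp [rowW, ev_nil]
  | succ l ih =>
    obtain ⟨ih1, ih2⟩ := ih (t+1) (by omega)
    have e : sk C j c t i ↔ C t i := by
      simp only [sk, skip]; rw [if_pos (by omega)]
    simp only [rowW, e]
    split_ifs
    · simp only [ev_cons, Equiv.Perm.mul_apply, ih1, List.length_cons, ih2, and_true]
      generalize ev (rowW (sk C j c) i (t+1) l) v = z
      simp only [em, sg_apply]
      split_ifs <;> omega
    · exact ⟨ih1, ih2⟩

theorem row_mid (C : ℕ → ℕ → Prop) (j c i v : ℕ)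
    (h : ∀ x, j < x → x ≤ j + c → C x i) :
    ev (rowW C i (j+1) c) (em j c i v) = em j c (i+1) v := by
  rcases lt_trichotomy v (i+j+2) with hv | rfl | hv
  · simp only [em]
    rw [if_pos (by omega), if_pos (by omega), row_fix_low _ _ _ _ _ (by omega)]
  · simp only [em]
    rw [if_neg (by omega), if_pos (by omega)]
    have := row_full_end C i (j+1) c (fun x h1 h2 => h x (by omega) (by omega))
    rw [show i + j + 2 + c = j + 1 + i + c + 1 by ring, this]; ring
  · simp only [em]
    rw [if_neg (by omega), if_neg (by omega), row_fix_high _ _ _ _ _ (by omega)]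

theorem row_del (C : ℕ → ℕ → Prop) (j c i U v : ℕ) (hU : j + c ≤ U)
    (h : ∀ x, j < x → x ≤ j + c → C x i) :
    ev (rowW C i 0 (U+1)) (em j c i v) = em j c (i+1) (ev (rowW (sk C j c) i 0 (U-c+1)) v) ∧
    (rowW C i 0 (U+1)).length = c + (rowW (sk C j c) i 0 (U-c+1)).length := by
  have e1 : rowW C i 0 (U+1) =
      rowW C i 0 (j+1) ++ (rowW C i (j+1) c ++ rowW C i (j+1+c) (U-c-j)) := by
    rw [← rowW_split, show U + 1 = (j+1) + (c + (U-c-j)) by omega, rowW_split]; simp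
  have e2 : rowW (sk C j c) i 0 (U-c+1) =
      rowW (sk C j c) i 0 (j+1) ++ rowW (sk C j c) i (j+1) (U-c-j) := by
    rw [show U - c + 1 = (j+1) + (U-c-j) by omega, rowW_split]; simp
  rw [e1, e2]
  simp only [ev_append, Equiv.Perm.mul_apply, List.length_append]
  rw [(row_right C j c i (j+1) _ v (by omega)).1, row_mid C j c i _ h,
    (row_left C j c i 0 (j+1) _ (by omega)).1, (row_right C j c i (j+1) _ v (by omega)).2,
    (row_left C j c i 0 (j+1) v (by omega)).2,
    rowW_length_full C i (j+1) c (fun x h1 h2 => h x (by omega) (by omega))]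
  exact ⟨rfl, by ring⟩

theorem WW_del (C : ℕ → ℕ → Prop) (u : ℕ → ℕ) (j c n : ℕ) (hU : ∀ i ≤ n, j + c ≤ u i)
    (h : ∀ i ≤ n, ∀ x, j < x → x ≤ j + c → C x i) :
    (∀ v, ev (WW C u n) (em j c 0 v) =
        em j c (n+1) (ev (WW (sk C j c) (fun i => u i - c) n) v)) ∧
    (∀ v, j + 1 < v → v ≤ j + c + 1 → ev (WW C u n) v = v + n + 1) ∧
    (WW C u n).length = (n+1) * c + (WW (sk C j c) (fun i => u i - c) n).length := by
  induction n with
  | zero =>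
    simp only [WW]
    refine ⟨fun v => (row_del C j c 0 _ v (hU 0 le_rfl) (h 0 le_rfl)).1, ?_, ?_⟩
    · intro v h1 h2
      have := (row_raise C 0 0 (u 0 + 1) v).2.2
        ⟨v-1, by omega, by have := hU 0 le_rfl; omega, by omega, h 0 le_rfl _ (by omega) (by omega)⟩
      omega
    · rw [(row_del C j c 0 _ 0 (hU 0 le_rfl) (h 0 le_rfl)).2]; ring
  | succ n ih =>
    obtain ⟨ih1, ih2, ih3⟩ := ih (fun i hi => hU i (by omega)) (fun i hi => h i (by omega))
    have hn := hU (n+1) le_rfl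
    have hh := h (n+1) le_rfl
    simp only [WW, ev_append, Equiv.Perm.mul_apply, List.length_append]
    refine ⟨fun v => ?_, ?_, ?_⟩
    · rw [ih1, (row_del C j c (n+1) _ _ hn hh).1]
    · intro v h1 h2
      rw [ih2 v h1 h2]
      have := (row_raise C (n+1) 0 (u (n+1) + 1) (v+n+1)).2.2
        ⟨v-1, by omega, by omega, by omega, hh _ (by omega) (by omega)⟩
      rw [this]; ring
    · rw [(row_del C j c (n+1) _ 0 hn hh).2, ih3]; ring

theorem em_inj (j c i : ℕ) : Function.Injective (em j c i) := by
  intro a b h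
  simp only [em] at h
  split_ifs at h <;> omega

theorem WW_del_iff (C C' : ℕ → ℕ → Prop) (u : ℕ → ℕ) (j c n : ℕ) (hU : ∀ i ≤ n, j + c ≤ u i)
    (h : ∀ i ≤ n, ∀ x, j < x → x ≤ j + c → C x i)
    (h' : ∀ i ≤ n, ∀ x, j < x → x ≤ j + c → C' x i) :
    ev (WW C u n) = ev (WW C' u n) ↔
    ev (WW (sk C j c) (fun i => u i - c) n) = ev (WW (sk C' j c) (fun i => u i - c) n) := by
  obtain ⟨a1, a2, -⟩ := WW_del C u j c n hU h
  obtain ⟨b1, b2, -⟩ := WW_del C' u j c n hU h'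
  constructor
  · intro e
    ext v
    apply em_inj j c (n+1)
    rw [← a1, ← b1, e]
  · intro e
    ext v
    by_cases hv : j + 1 < v ∧ v ≤ j + c + 1
    · rw [a2 v hv.1 hv.2, b2 v hv.1 hv.2]
    · obtain ⟨w, rfl⟩ : ∃ w, v = em j c 0 w := by
        by_cases h1 : v ≤ j + 1
        · exact ⟨v, by simp only [em]; split_ifs <;> omega⟩
        · exact ⟨v - c, by simp only [em]; split_ifs <;> omega⟩
      rw [a1, b1, e]

/-- maximal raise forces full columns. -/
theorem WW_raise (C : ℕ → ℕ → Prop) (u : ℕ → ℕ) (n v : ℕ) :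
    ev (WW C u n) v ≤ v + n + 1 ∧
    (ev (WW C u n) v = v + n + 1 → ∀ i ≤ n, ∃ x, x + 1 = v ∧ C x i) := by
  induction n with
  | zero =>
    obtain ⟨h1, h2⟩ := row_raise C 0 0 (u 0 + 1) v
    refine ⟨h1, fun h i hi => ?_⟩
    obtain rfl : i = 0 := by omega
    obtain ⟨x, _, _, h3, h4⟩ := h2.1 h
    exact ⟨x, by omega, h4⟩
  | succ n ih =>
    obtain ⟨ih1, ih2⟩ := ih
    simp only [WW, ev_append, Equiv.Perm.mul_apply]
    obtain ⟨h1, h2⟩ := row_raise C (n+1) 0 (u (n+1) + 1) (ev (WW C u n) v)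
    refine ⟨by omega, fun h i hi => ?_⟩
    have e : ev (WW C u n) v = v + n + 1 := by omega
    rcases Nat.lt_or_ge n i with hi' | hi'
    · obtain rfl : i = n + 1 := by omega
      obtain ⟨x, _, _, h3, h4⟩ := h2.1 (by omega)
      exact ⟨x, by omega, h4⟩
    · exact ih2 e i hi'

end NuPD
namespace NuPD

def tt : ℕ → ℕ → Prop := fun _ _ => True
def Cmin (n : ℕ) (u : ℕ → ℕ) : ℕ → ℕ → Prop := fun x i => 1 ≤ x ∧ i < n ∧ x ≤ u (i+1)
def Cst (n j a : ℕ) (u : ℕ → ℕ) : ℕ → ℕ → Prop :=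
  fun x i => Cmin n u x i ∨ (i = n ∧ j < x ∧ x ≤ a)

noncomputable def Wmin (n : ℕ) (u : ℕ → ℕ) : List ℕ := WW (Cmin n u) u n

theorem WW_last (C C' : ℕ → ℕ → Prop) (u : ℕ → ℕ) (n : ℕ)
    (h : ∀ i < n, ∀ x ≤ u i, (C x i ↔ C' x i)) (h' : ∀ x ≤ u n, ¬ C' x n) :
    WW C u n = rowW C n 0 (u n + 1) ++ WW C' u n := by
  cases n with
  | zero =>
    simp only [WW]
    rw [rowW_nil C' 0 0 _ (fun x _ h2 => h' x (by omega))]; simp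
  | succ n =>
    simp only [WW]
    rw [rowW_nil C' (n+1) 0 _ (fun x _ h2 => h' x (by omega)),
      WW_congr C C' u n (fun i hi => h i (by omega))]; simp

theorem rowW_interval (C : ℕ → ℕ → Prop) (i U j a : ℕ) (hj : j ≤ a) (ha : a ≤ U + 1)
    (h : ∀ x ≤ U, (C x i ↔ j ≤ x ∧ x < a)) :
    rowW C i 0 (U+1) = rowW tt i j (a-j) := by
  rw [show U + 1 = j + ((a-j) + (U+1-a)) by omega, rowW_split, rowW_split,
    rowW_nil C i 0 j (fun x h1 h2 => by rw [h x (by omega)]; omega),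
    rowW_nil C i _ (U+1-a) (fun x h1 h2 => by rw [h x (by omega)]; omega),
    rowW_congr C tt i (0+j) (a-j) (fun x h1 h2 => by
      rw [h x (by omega)]; simp only [tt, iff_true]; omega)]
  simp

theorem rowW_tt_shift (i t l : ℕ) : rowW tt (i+1) t l = rowW tt i (t+1) l := by
  induction l generalizing t with
  | zero => rfl
  | succ l ih =>
    rw [rowW, rowW, if_pos (show tt t (i+1) from trivial),
      if_pos (show tt (t+1) i from trivial), ih (t+1)]
    congr 1; ring

theorem Wst (n j a : ℕ) (u : ℕ → ℕ) (hj : j ≤ a) (ha : a ≤ u n) :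
    WW (Cst n j a u) u n = rowW tt n (j+1) (a-j) ++ Wmin n u := by
  rw [WW_last (Cst n j a u) (Cmin n u) u n]
  · rw [rowW_interval (Cst n j a u) n (u n) (j+1) (a+1)]
    · rw [Wmin, show a + 1 - (j+1) = a - j by omega]
    · omega
    · omega
    · intro x hx
      simp only [Cst, Cmin, true_and]; omega
  · intro i hi x hx
    simp only [Cst]; constructor
    · rintro (h | h)
      · exact h
      · omega
    · exact Or.inl
  · intro x hx; simp [Cmin]

theorem Wmin_succ (n j : ℕ) (u : ℕ → ℕ) (hu : Antitone u) (hj : j ≤ u (n+1)) :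
    Wmin (n+1) u = rowW tt (n+1) 0 j ++ WW (Cst n j (u (n+1)) u) u n := by
  have ha : u (n+1) ≤ u n := hu (by omega)
  have h1 : Wmin (n+1) u = WW (Cst n 0 (u (n+1)) u) u n := by
    rw [Wmin, WW, rowW_nil, List.nil_append]
    · apply WW_congr
      intro i hi x hx
      simp only [Cst, Cmin]
      rcases eq_or_lt_of_le hi with rfl | hi'
      · simp; omega
      · constructor
        · rintro ⟨h1, h2, h3⟩; left; exact ⟨h1, hi', h3⟩
        · rintro (⟨h1, h2, h3⟩ | h)
          · exact ⟨h1, by omega, h3⟩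
          · omega
    · intro x _ _; simp [Cmin]
  rw [h1, Wst n 0 _ u (by omega) ha, Wst n j _ u hj ha, rowW_tt_shift, ← List.append_assoc]
  congr 1
  rw [show u (n+1) - 0 = j + (u (n+1) - j) by omega, rowW_split]
  simp [Nat.add_comm]

theorem Wmin_succ' (n : ℕ) (u : ℕ → ℕ) (hu : Antitone u) :
    Wmin (n+1) u = rowW tt n 1 (u (n+1)) ++ Wmin n u := by
  rw [Wmin_succ n 0 u hu (by omega), Wst n 0 _ u (by omega) (hu (by omega))]
  simp [rowW]

theorem Cst_full (n j a : ℕ) (u : ℕ → ℕ) (hu : Antitone u) (ha : a ≤ u (n+1)) :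
    ∀ i ≤ n, ∀ x, j < x → x ≤ a → Cst n j a u x i := by
  intro i hi x h1 h2
  rcases eq_or_lt_of_le hi with rfl | hi'
  · right; exact ⟨rfl, h1, h2⟩
  · left
    have : u (n+1) ≤ u (i+1) := hu (by omega)
    exact ⟨by omega, hi', by omega⟩

theorem W_sk_st (n j a : ℕ) (u : ℕ → ℕ) (hu : Antitone u) (hj : j ≤ a) (ha : a ≤ u (n+1)) :
    WW (sk (Cst n j a u) j (a-j)) (fun i => u i - (a-j)) n = Wmin n (fun i => u i - (a-j)) := by
  apply WW_congr
  intro i hi x hx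
  simp only [sk, skip, Cst, Cmin]
  have : u (n+1) ≤ u (i+1) := hu (by omega)
  split_ifs <;> omega

/-- strict monotonicity of the inverse on positions `≥ k`. -/
def Mo (k : ℕ) (σ : Equiv.Perm ℕ) : Prop := ∀ p q, k ≤ p → p < q → σ⁻¹ p < σ⁻¹ q

theorem inv_fix {σ : Equiv.Perm ℕ} {v : ℕ} (h : σ v = v) : σ⁻¹ v = v := by
  rw [Equiv.Perm.inv_eq_iff_eq]; exact h.symm

theorem row_inv_ge (C : ℕ → ℕ → Prop) (i t l v : ℕ) (h : t + i < v) :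
    t + i < (ev (rowW C i t l))⁻¹ v := by
  by_contra hc
  have := row_fix_low C i t l ((ev (rowW C i t l))⁻¹ v) (by omega)
  have h2 : ev (rowW C i t l) ((ev (rowW C i t l))⁻¹ v) = v := by simp
  omega

theorem Mo_step (n : ℕ) (W : List ℕ) (hR : Red W) (hM : Mo (n+2) (ev W)) (j l : ℕ) :
    Red (rowW tt n (j+1) l ++ W) ∧ Mo (n+j+3) (ev (rowW tt n (j+1) l ++ W)) := by
  induction l generalizing j with
  | zero =>
    simp only [rowW, List.nil_append]
    exact ⟨hR, fun p q h1 h2 => hM p q (by omega) h2⟩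
  | succ l ih =>
    obtain ⟨ih1, ih2⟩ := ih (j+1)
    have e : rowW tt n (j+1) (l+1) ++ W = (j+1+n) :: (rowW tt n (j+1+1) l ++ W) := by
      simp [rowW, tt]
    rw [e]
    have low : (ev (rowW tt n (j+1+1) l ++ W))⁻¹ (j+1+n+1) = (ev W)⁻¹ (j+1+n+1) := by
      rw [ev_append, mul_inv_rev, Equiv.Perm.mul_apply,
        inv_fix (row_fix_low tt n (j+1+1) l (j+1+n+1) (by omega))]
    have high : ∀ q, j + 1 + n + 1 < q →
        (ev W)⁻¹ (j+1+n+1) < (ev (rowW tt n (j+1+1) l ++ W))⁻¹ q := by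
      intro q hq
      rw [ev_append, mul_inv_rev, Equiv.Perm.mul_apply]
      apply hM _ _ (by omega)
      have := row_inv_ge tt n (j+1+1) l q (by omega)
      omega
    constructor
    · apply Red_cons_of ih1
      rw [low]; exact high _ (by omega)
    · intro p q hp hq
      rw [ev_cons, inv_mul_sg, inv_mul_sg, sg_apply, sg_apply]
      rw [if_neg (show p ≠ j+1+n+1 by omega), if_neg (show q ≠ j+1+n+1 by omega),
        if_neg (show q ≠ j+1+n+2 by omega)]
      split_ifs with h
      · rw [low]; exact high _ (by omega)
      · exact ih2 _ _ (by omega) hq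

theorem Wmin_red (n : ℕ) (u : ℕ → ℕ) (hu : Antitone u) :
    Red (Wmin n u) ∧ Mo (n+2) (ev (Wmin n u)) := by
  induction n with
  | zero =>
    have : Wmin 0 u = [] := by
      rw [Wmin, WW, rowW_nil]
      intro x _ _; simp [Cmin]
    rw [this]
    refine ⟨lenInv_nil, fun p q _ h => by simpa [ev_nil] using h⟩
  | succ n ih =>
    rw [Wmin_succ' n u hu]
    exact Mo_step n _ ih.1 ih.2 0 _

theorem no_cross (C : ℕ → ℕ → Prop) (n : ℕ) (W : List ℕ) (t l : ℕ)
    (hR : Red (rowW C (n+1) t l ++ W)) (hM : Mo (n+t+2) (ev (rowW C (n+1) t l ++ W))) :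
    ∀ x, t ≤ x → x < t + l → ¬ C x (n+1) := by
  induction l generalizing t with
  | zero => intro x; omega
  | succ l ih =>
    by_cases hc : C t (n+1)
    · exfalso
      simp only [rowW, if_pos hc, List.cons_append] at hR hM
      have h1 := (Red_cons hR).2
      have h2 := hM (t+(n+1)+1) (t+(n+1)+2) (by omega) (by omega)
      omega
    · simp only [rowW, if_neg hc] at hR hM
      intro x h1 h2
      rcases eq_or_lt_of_le h1 with rfl | h1
      · exact hc
      · exact ih (t+1) hR (fun p q hp hq => hM p q (by omega) hq) x h1 (by omega)

theorem peel (C : ℕ → ℕ → Prop) (n a : ℕ) (W V : List ℕ) (hV : Red V) (hM : Mo (n+2) (ev V))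
    (l t : ℕ) (ht : t + l = a)
    (hR : Red (rowW C (n+1) t (l+1) ++ W))
    (he : ev (rowW C (n+1) t (l+1) ++ W) = ev (rowW tt n (t+1) l ++ V)) :
    ∃ j, t ≤ j ∧ j ≤ a ∧ ∀ x, t ≤ x → x ≤ a → (C x (n+1) ↔ x < j) := by
  induction l generalizing t with
  | zero =>
    obtain rfl : t = a := by omega
    refine ⟨t, le_rfl, le_rfl, fun x h1 h2 => ?_⟩
    obtain rfl : x = t := by omega
    simp only [lt_irrefl, iff_false]
    intro hc
    simp only [rowW, if_pos hc, List.cons_append, List.nil_append] at hR he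
    have h1 := (Red_cons hR).2
    rw [he] at h1
    have h2 := hM (x+(n+1)+1) (x+(n+1)+2) (by omega) (by omega)
    omega
  | succ l ih =>
    by_cases hc : C t (n+1)
    · rw [rowW, if_pos hc, List.cons_append] at hR he
      have e : rowW tt n (t+1) (l+1) ++ V = (t+(n+1)) :: (rowW tt n (t+1+1) l ++ V) := by
        simp [rowW, tt]; ring
      rw [e, ev_cons, ev_cons] at he
      obtain ⟨j, h1, h2, h3⟩ := ih (t+1) (by omega) (Red_cons hR).1 (mul_left_cancel he)
      refine ⟨j, by omega, h2, fun x h4 h5 => ?_⟩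
      rcases eq_or_lt_of_le h4 with rfl | h4
      · simp only [hc, true_iff]; omega
      · exact h3 x h4 h5
    · refine ⟨t, le_rfl, by omega, fun x h1 h2 => ?_⟩
      have hm := (Mo_step n V hV hM t (l+1)).2
      rw [← he] at hm
      rw [rowW, if_neg hc] at hR hm
      rcases eq_or_lt_of_le h1 with rfl | h1
      · simp [hc]
      · have := no_cross C n W (t+1) (l+1) hR (fun p q hp hq => hm p q (by omega) hq) x h1
          (by omega)
        simp only [this, false_iff]; omega

def PD (n : ℕ) (u : ℕ → ℕ) (C : ℕ → ℕ → Prop) : Prop :=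
  ev (WW C u n) = ev (Wmin n u) ∧ (WW C u n).length = (Wmin n u).length

def Str (G : ℕ → (ℕ → ℕ) → (ℕ → ℕ → Prop) → Prop)
    (n : ℕ) (u : ℕ → ℕ) (C : ℕ → ℕ → Prop) : Prop :=
  ∃ j ≤ u (n+1), (∀ x ≤ u (n+1), (C x (n+1) ↔ x < j)) ∧
    (∀ i ≤ n, ∀ x, j < x → x ≤ u (n+1) → C x i) ∧
    G n (fun i => u i - (u (n+1) - j)) (sk C j (u (n+1) - j))

theorem PD_succ (n : ℕ) (u : ℕ → ℕ) (C : ℕ → ℕ → Prop) (hu : Antitone u) :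
    PD (n+1) u C ↔ Str PD n u C := by
  obtain ⟨hVR, hVM⟩ := Wmin_red n u hu
  -- common part
  have bot : ∀ j ≤ u (n+1), (∀ x ≤ u (n+1), (C x (n+1) ↔ x < j)) →
      WW C u (n+1) = rowW tt (n+1) 0 j ++ WW C u n := by
    intro j hj h
    rw [WW, rowW_interval C (n+1) (u (n+1)) 0 j (by omega) (by omega) (fun x hx => by
      rw [h x hx]; omega)]
    simp
  have hUj : ∀ j ≤ u (n+1), ∀ i ≤ n, j + (u (n+1) - j) ≤ u i := by
    intro j hj i hi
    have : u (n+1) ≤ u i := hu (by omega)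
    omega
  have fullst : ∀ j ≤ u (n+1), ∀ i ≤ n, ∀ x, j < x → x ≤ j + (u (n+1) - j) →
      Cst n j (u (n+1)) u x i := by
    intro j hj i hi x h1 h2
    exact Cst_full n j _ u hu le_rfl i hi x h1 (by omega)
  have common : ∀ j ≤ u (n+1), (∀ x ≤ u (n+1), (C x (n+1) ↔ x < j)) →
    (∀ i ≤ n, ∀ x, j < x → x ≤ u (n+1) → C x i) →
    (PD (n+1) u C ↔ PD n (fun i => u i - (u (n+1) - j)) (sk C j (u (n+1) - j))) := by
    intro j hj h1 h2
    have h2' : ∀ i ≤ n, ∀ x, j < x → x ≤ j + (u (n+1) - j) → C x i :=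
      fun i hi x h3 h4 => h2 i hi x h3 (by omega)
    have e := WW_del_iff C (Cst n j (u (n+1)) u) u j (u (n+1) - j) n (hUj j hj) h2' (fullst j hj)
    have l1 := (WW_del C u j (u (n+1) - j) n (hUj j hj) h2').2.2
    have l2 := (WW_del _ u j (u (n+1) - j) n (hUj j hj) (fullst j hj)).2.2
    rw [W_sk_st n j _ u hu hj le_rfl] at e l2
    unfold PD
    rw [bot j hj h1, Wmin_succ n j u hu hj, ← e, ev_append, ev_append, mul_right_inj,
      List.length_append, List.length_append, l1, l2]
    simp
  constructor
  · intro h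
    have hR : Red (WW C u (n+1)) := by
      have := (Wmin_red (n+1) u hu).1
      unfold Red at *
      rw [h.1, this, h.2]
    have he := h.1
    rw [Wmin_succ' n u hu, WW] at he
    rw [WW] at hR
    obtain ⟨j, -, hj, h1⟩ := peel C n (u (n+1)) _ (Wmin n u) hVR hVM (u (n+1)) 0 (by omega) hR
      (by simpa using he)
    have h1' : ∀ x ≤ u (n+1), (C x (n+1) ↔ x < j) := fun x hx => h1 x (by omega) hx
    have h2 : ∀ i ≤ n, ∀ x, j < x → x ≤ u (n+1) → C x i := by
      intro i hi x h3 h4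
      have he := h.1
      rw [bot j hj h1', Wmin_succ n j u hu hj, ev_append, ev_append, mul_right_inj] at he
      have := (WW_del _ u j (u (n+1) - j) n (hUj j hj) (fullst j hj)).2.1 (x+1) (by omega) (by omega)
      rw [← he] at this
      obtain ⟨y, hy, hC⟩ := (WW_raise C u n (x+1)).2 this i hi
      obtain rfl : y = x := by omega
      exact hC
    exact ⟨j, hj, h1', h2, (common j hj h1' h2).1 h⟩
  · rintro ⟨j, hj, h1, h2, h3⟩
    exact (common j hj h1 h2).2 h3

/-! trees -/
def Tr (n : ℕ) (u : ℕ → ℕ) (C : ℕ → ℕ → Prop) : Prop :=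
  (∀ x1 i1 x2 i2, x1 < x2 → i2 < i1 → i1 ≤ n → x2 ≤ u i1 → C x1 i1 ∨ C x2 i2) ∧
  (∀ x i, i ≤ n → x ≤ u i → C x i → ∃ x' i', ¬ C x' i' ∧ i' ≤ n ∧ x' ≤ u i' ∧
    ((x < x' ∧ i' < i ∧ x' ≤ u i) ∨ (x' < x ∧ i < i' ∧ x ≤ u i')))

theorem unskip (j c x : ℕ) (h : ¬ (j < x ∧ x ≤ j + c)) : ∃ y, skip j c y = x := by
  by_cases h1 : x ≤ j
  · exact ⟨x, by simp only [skip]; split_ifs; rfl⟩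
  · exact ⟨x - c, by simp only [skip]; split_ifs <;> omega⟩

theorem skip_lt (j c x y : ℕ) : skip j c x < skip j c y ↔ x < y := by
  simp only [skip]; split_ifs <;> omega

theorem skip_le (j c x U : ℕ) (h : j + c ≤ U) : skip j c x ≤ U ↔ x ≤ U - c := by
  simp only [skip]; split_ifs <;> omega

theorem skip_not (j c x : ℕ) : ¬ (j < skip j c x ∧ skip j c x ≤ j + c) ∨ c = 0 := by
  simp only [skip]; split_ifs <;> omega

theorem Tr_str (n : ℕ) (u : ℕ → ℕ) (C : ℕ → ℕ → Prop) (hu : Antitone u) (h : Tr (n+1) u C) :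
    Str Tr n u C := by
  obtain ⟨hc, hm⟩ := h
  have hua : ∀ i ≤ n, u (n+1) ≤ u i := fun i hi => hu (by omega)
  have ha : ¬ C (u (n+1)) (n+1) := by
    intro hC
    obtain ⟨x', i', -, h2, -, h4⟩ := hm _ _ le_rfl le_rfl hC
    omega
  have hex : ∃ x, ¬ C x (n+1) := ⟨_, ha⟩
  set j := Nat.find hex with hj
  have hj1 : ¬ C j (n+1) := Nat.find_spec hex
  have hj2 : j ≤ u (n+1) := Nat.find_min' hex ha
  have hj3 : ∀ x < j, C x (n+1) := fun x hx => by
    have := Nat.find_min hex hx; simpa using this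
  have dead : ∀ i ≤ n, ∀ x, j < x → x ≤ u (n+1) → C x i := by
    intro i hi x h1 h2
    exact (hc j (n+1) x i h1 (by omega) le_rfl h2).resolve_left hj1
  refine ⟨j, hj2, ?_, dead, ?_, ?_⟩
  · intro x hx
    constructor
    · intro hC
      by_contra hlt
      obtain ⟨x', i', h1, h2, h3, h4⟩ := hm x (n+1) le_rfl hx hC
      rcases h4 with h4 | h4
      · exact h1 (dead i' (by omega) x' (by omega) h4.2.2)
      · omega
    · exact hj3 x
  · intro x1 i1 x2 i2 h1 h2 h3 h4
    have := hua i1 h3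
    exact hc _ _ _ _ ((skip_lt _ _ _ _).2 h1) h2 (by omega) ((skip_le _ _ _ _ (by omega)).2 h4)
  · intro x i hi hx hC
    have := hua i hi
    obtain ⟨x', i', h1, h2, h3, h4⟩ := hm _ i (by omega) ((skip_le _ _ _ _ (by omega)).2 hx) hC
    have hi' : i' ≤ n := by
      by_contra hcon
      obtain rfl : i' = n + 1 := by omega
      rcases h4 with h4 | ⟨h5, -, h6⟩
      · omega
      · have : j ≤ x' := by
          by_contra h7; exact h1 (hj3 x' (by omega))
        rcases skip_not j (u (n+1) - j) x with h8 | h8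
        · omega
        · omega
    obtain ⟨y, rfl⟩ := unskip j (u (n+1) - j) x' (fun h => h1 (dead i' hi' x' h.1 (by omega)))
    have := hua i' hi'
    refine ⟨y, i', h1, hi', (skip_le _ _ _ _ (by omega)).1 h3, ?_⟩
    rw [skip_lt, skip_lt, skip_le _ _ _ _ (by omega), skip_le _ _ _ _ (by omega)] at h4
    exact h4

theorem anti_sub {u : ℕ → ℕ} (hu : Antitone u) (c : ℕ) : Antitone (fun i => u i - c) :=
  fun _ _ h => Nat.sub_le_sub_right (hu h) c

theorem Tr_col (n : ℕ) : ∀ (u : ℕ → ℕ) (C : ℕ → ℕ → Prop), Antitone u → Tr n u C →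
    ∀ x ≤ u n, ∃ i ≤ n, ¬ C x i := by
  induction n with
  | zero =>
    intro u C hu h x hx
    refine ⟨0, le_rfl, fun hC => ?_⟩
    obtain ⟨x', i', -, h2, -, h4⟩ := h.2 x 0 le_rfl hx hC
    omega
  | succ n ih =>
    intro u C hu h x hx
    obtain ⟨j, hj, h1, h2, h3⟩ := Tr_str n u C hu h
    by_cases hxj : x < j
    · have : u (n+1) ≤ u n := hu (by omega)
      obtain ⟨i, hi, hC⟩ := ih _ _ (anti_sub hu _) h3 x (by omega)
      refine ⟨i, by omega, ?_⟩
      simp only [sk, skip] at hC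
      rwa [if_pos (by omega)] at hC
    · exact ⟨n+1, le_rfl, by rw [h1 x hx]; exact hxj⟩

theorem Str_tr (n : ℕ) (u : ℕ → ℕ) (C : ℕ → ℕ → Prop) (hu : Antitone u) (h : Str Tr n u C) :
    Tr (n+1) u C := by
  obtain ⟨j, hj, h1, dead, ht⟩ := h
  have hua : ∀ i ≤ n, u (n+1) ≤ u i := fun i hi => hu (by omega)
  have hcol := Tr_col n _ _ (anti_sub hu _) ht j (by have := hua n le_rfl; omega)
  obtain ⟨hc, hm⟩ := ht
  constructor
  · intro x1 i1 x2 i2 h2 h3 h4 h5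
    by_contra hcon
    push Not at hcon
    rcases Nat.lt_or_ge n i1 with h6 | h6
    · obtain rfl : i1 = n + 1 := by omega
      have : j ≤ x1 := by
        have := hcon.1
        rw [h1 x1 (by omega)] at this; omega
      exact hcon.2 (dead i2 (by omega) x2 (by omega) h5)
    · have := hua i1 h6
      obtain ⟨y1, rfl⟩ := unskip j (u (n+1) - j) x1
        (fun h => hcon.1 (dead i1 h6 x1 h.1 (by omega)))
      obtain ⟨y2, rfl⟩ := unskip j (u (n+1) - j) x2
        (fun h => hcon.2 (dead i2 (by omega) x2 h.1 (by omega)))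
      rw [skip_lt] at h2
      rw [skip_le _ _ _ _ (by omega)] at h5
      rcases hc y1 i1 y2 i2 h2 h3 h6 h5 with h7 | h7
      · exact hcon.1 h7
      · exact hcon.2 h7
  · intro x i hi hx hC
    rcases Nat.lt_or_ge n i with h6 | h6
    · obtain rfl : i = n + 1 := by omega
      rw [h1 x hx] at hC
      obtain ⟨i', hi', hC'⟩ := hcol
      simp only [sk, skip] at hC'
      rw [if_pos le_rfl] at hC'
      have := hua i' hi'
      exact ⟨j, i', hC', by omega, by omega, Or.inl ⟨hC, by omega, hj⟩⟩
    · by_cases hd : j < x ∧ x ≤ j + (u (n+1) - j)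
      · refine ⟨j, n+1, by rw [h1 j hj]; omega, le_rfl, hj, Or.inr ⟨hd.1, by omega, by omega⟩⟩
      · obtain ⟨y, rfl⟩ := unskip _ _ _ hd
        have hi2 := hua i h6
        rw [skip_le _ _ _ _ (by omega)] at hx
        obtain ⟨y', i', k1, k2, k3, k4⟩ := hm y i h6 hx hC
        have := hua i' k2
        refine ⟨skip j (u (n+1) - j) y', i', k1, by omega, (skip_le _ _ _ _ (by omega)).2 k3, ?_⟩
        rw [skip_lt, skip_lt, skip_le _ _ _ _ (by omega), skip_le _ _ _ _ (by omega)]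
        exact k4

theorem Tr_iff_PD (n : ℕ) : ∀ (u : ℕ → ℕ) (C : ℕ → ℕ → Prop), Antitone u →
    (Tr n u C ↔ PD n u C) := by
  induction n with
  | zero =>
    intro u C hu
    have e : Wmin 0 u = [] := by
      rw [Wmin, WW, rowW_nil]
      intro x _ _; simp [Cmin]
    unfold PD
    rw [e]
    constructor
    · intro h
      have : WW C u 0 = [] := by
        rw [WW, rowW_nil]
        intro x _ hx hC
        obtain ⟨x', i', -, h2, -, h4⟩ := h.2 x 0 le_rfl (by omega) hC
        omega
      rw [this]; exact ⟨rfl, rfl⟩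
    · rintro ⟨-, h⟩
      have h := rowW_eq_nil C 0 0 (u 0 + 1) (List.length_eq_zero_iff.1 h)
      refine ⟨fun x1 i1 x2 i2 _ _ _ _ => by omega, fun x i hi hx hC => ?_⟩
      obtain rfl : i = 0 := by omega
      exact absurd hC (h x (by omega) (by omega))
  | succ n ih =>
    intro u C hu
    rw [PD_succ n u C hu]
    have : Tr (n+1) u C ↔ Str Tr n u C := ⟨Tr_str n u C hu, Str_tr n u C hu⟩
    rw [this]
    unfold Str
    constructor
    · rintro ⟨j, h1, h2, h3, h4⟩
      exact ⟨j, h1, h2, h3, (ih _ _ (anti_sub hu _)).1 h4⟩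
    · rintro ⟨j, h1, h2, h3, h4⟩
      exact ⟨j, h1, h2, h3, (ih _ _ (anti_sub hu _)).2 h4⟩

end NuPD
namespace NuPD

theorem heightAt_zero (ν : List Bool) : heightAt ν 0 = 0 := by
  unfold heightAt; cases ν <;> rfl

theorem heightAt_nil (x : ℕ) : heightAt [] x = 0 := by
  cases x <;> simp [heightAt]

theorem heightAt_step (ν : List Bool) (x : ℕ) : heightAt ν x ≤ heightAt ν (x+1) := by
  induction ν generalizing x with
  | nil => simp [heightAt_nil]
  | cons b ν ih =>
    cases b with
    | true =>
      cases x with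
      | zero => simp [heightAt_zero]
      | succ x => simp only [heightAt]; have := ih (x+1); omega
    | false =>
      cases x with
      | zero => simp [heightAt_zero]
      | succ x => simp only [heightAt]; exact ih x

theorem heightAt_mono (ν : List Bool) : Monotone (heightAt ν) :=
  monotone_nat_of_le_succ (heightAt_step ν)

theorem heightAt_le (ν : List Bool) (x : ℕ) : heightAt ν x ≤ northSteps ν := by
  induction ν generalizing x with
  | nil => simp [heightAt_nil]
  | cons b ν ih =>
    cases x with
    | zero => simp [heightAt_zero]
    | succ x =>
      cases b with
      | true =>
        have := ih (x+1)
        simp only [heightAt, northSteps, List.count_cons_self] at *; omega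
      | false =>
        have := ih x
        simp only [heightAt, northSteps, List.count_cons] at *; simpa using this

noncomputable def wd (ν : List Bool) (y : ℕ) : ℕ :=
  Nat.findGreatest (fun x => heightAt ν x ≤ y) (eastSteps ν)

noncomputable def uu (ν : List Bool) (i : ℕ) : ℕ := wd ν (northSteps ν - i)

theorem le_wd (ν : List Bool) (x y : ℕ) :
    x ≤ wd ν y ↔ x ≤ eastSteps ν ∧ heightAt ν x ≤ y := by
  constructor
  · intro h
    refine ⟨h.trans (Nat.findGreatest_le _), ?_⟩
    have : heightAt ν (wd ν y) ≤ y :=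
      Nat.findGreatest_spec (P := fun x => heightAt ν x ≤ y) (m := 0) (Nat.zero_le _)
        (by simp [heightAt_zero])
    exact (heightAt_mono ν h).trans this
  · rintro ⟨h1, h2⟩
    exact Nat.le_findGreatest h1 h2

theorem mem_APts (ν : List Bool) (x y : ℕ) :
    (x, y) ∈ APts ν ↔ x ≤ wd ν y ∧ y ≤ northSteps ν := by
  rw [le_wd]
  show (x ≤ eastSteps ν ∧ heightAt ν x ≤ y ∧ y ≤ northSteps ν) ↔ _
  tauto

theorem wd_mono (ν : List Bool) : Monotone (wd ν) := by
  intro y y' h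
  obtain ⟨h1, h2⟩ := (le_wd ν (wd ν y) y).1 le_rfl
  exact (le_wd _ _ _).2 ⟨h1, h2.trans h⟩

theorem uu_anti (ν : List Bool) : Antitone (uu ν) :=
  fun _ _ h => wd_mono ν (Nat.sub_le_sub_left h _)

theorem mem_APts' (ν : List Bool) (x i : ℕ) :
    (x, northSteps ν - i) ∈ APts ν ↔ x ≤ uu ν i := by
  rw [mem_APts]; simp [uu]

theorem east_end (ν : List Bool) (x y : ℕ) :
    (∃ i < ν.length, ν.getD i true = false ∧ (x, y) = pointAt ν (i+1)) ↔
      1 ≤ x ∧ x ≤ eastSteps ν ∧ y = heightAt ν x := by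
  induction ν generalizing x y with
  | nil => simp [eastSteps]; omega
  | cons b ν ih =>
    have e : (∃ i < (b :: ν).length, (b :: ν).getD i true = false ∧
        (x, y) = pointAt (b :: ν) (i+1)) ↔
        ((b = false ∧ (x, y) = pointAt (b :: ν) 1) ∨
         ∃ i < ν.length, ν.getD i true = false ∧ (x, y) = pointAt (b :: ν) (i+1+1)) := by
      constructor
      · rintro ⟨i, h1, h2, h3⟩
        cases i with
        | zero => left; exact ⟨by simpa using h2, h3⟩
        | succ i => right; exact ⟨i, by simpa using h1, by simpa using h2, h3⟩
      · rintro (⟨h1, h2⟩ | ⟨i, h1, h2, h3⟩)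
        · exact ⟨0, by simp, by simpa using h1, h2⟩
        · exact ⟨i+1, by simpa using h1, by simpa using h2, h3⟩
    rw [e]
    cases b with
    | true =>
      have p : ∀ i, pointAt (true :: ν) (i+1+1) = ((pointAt ν (i+1)).1, (pointAt ν (i+1)).2 + 1) := by
        intro i; simp [pointAt]
      simp only [p]
      cases x with
      | zero =>
        have := fun y => ih 0 y
        constructor
        · rintro (h | ⟨i, h1, h2, h3⟩)
          · simp at h
          · exfalso
            have := (ih 0 (pointAt ν (i+1)).2).1 ⟨i, h1, h2, by
              rw [Prod.ext_iff] at h3 ⊢; exact ⟨h3.1, rfl⟩⟩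
            omega
        · omega
      | succ x =>
        simp only [heightAt]
        have es : eastSteps (true :: ν) = eastSteps ν := by simp [eastSteps]
        rw [es]
        constructor
        · rintro (h | ⟨i, h1, h2, h3⟩)
          · simp at h
          · rw [Prod.ext_iff] at h3
            have := (ih (x+1) (pointAt ν (i+1)).2).1 ⟨i, h1, h2, by
              rw [Prod.ext_iff]; exact ⟨h3.1, rfl⟩⟩
            have h4 := h3.2
            simp only at h4
            exact ⟨this.1, this.2.1, by omega⟩
        · rintro ⟨h1, h2, h3⟩
          obtain ⟨i, k1, k2, k3⟩ := (ih (x+1) (heightAt ν (x+1))).2 ⟨h1, h2, rfl⟩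
          right
          refine ⟨i, k1, k2, ?_⟩
          rw [← k3, h3]
    | false =>
      have p : ∀ i, pointAt (false :: ν) (i+1+1) = ((pointAt ν (i+1)).1 + 1, (pointAt ν (i+1)).2) := by
        intro i; simp [pointAt]
      have p0 : pointAt (false :: ν) 1 = (1, 0) := by simp [pointAt]
      have es : eastSteps (false :: ν) = eastSteps ν + 1 := by simp [eastSteps]
      simp only [p, p0, es]
      cases x with
      | zero =>
        constructor
        · rintro (h | ⟨i, h1, h2, h3⟩)
          · simp at h
          · simp at h3
        · omega
      | succ x =>
        simp only [heightAt]
        constructor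
        · rintro (h | ⟨i, h1, h2, h3⟩)
          · simp at h
            obtain ⟨rfl, rfl⟩ := h
            simp [heightAt_zero]
          · rw [Prod.ext_iff] at h3
            have h4 := h3.1
            simp only at h4
            have := (ih x y).1 ⟨i, h1, h2, by
              rw [Prod.ext_iff]; exact ⟨by simp only; omega, h3.2⟩⟩
            exact ⟨by omega, by omega, this.2.2⟩
        · rintro ⟨h1, h2, h3⟩
          by_cases hx : x = 0
          · subst hx
            left; simp [h3, heightAt_zero]
          · obtain ⟨i, k1, k2, k3⟩ := (ih x y).2 ⟨by omega, by omega, h3⟩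
            right
            refine ⟨i, k1, k2, ?_⟩
            rw [← k3]

def Cp (ν : List Bool) (C : Set (ℕ × ℕ)) : ℕ → ℕ → Prop := fun x i => (x, northSteps ν - i) ∈ C

theorem Wmin_eq (ν : List Bool) :
    WW (Cp ν (APts ν \ TminSet ν)) (uu ν) (northSteps ν) = Wmin (northSteps ν) (uu ν) := by
  apply WW_congr
  intro i hi x hx
  have hA := (mem_APts' ν x i).2 hx
  have hA2 : x ≤ eastSteps ν ∧ heightAt ν x ≤ northSteps ν - i := (le_wd _ _ _).1 hx
  have hT : (x, northSteps ν - i) ∈ TminSet ν ↔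
      (x = 0 ∨ (1 ≤ x ∧ x ≤ eastSteps ν ∧ northSteps ν - i = heightAt ν x)) := by
    rw [← east_end]
    show (_ ∧ _) ↔ _
    simp only [hA, true_and]
  simp only [Cp, Cmin, Set.mem_sdiff, hA, true_and, hT, uu, le_wd]
  by_cases hx0 : x = 0
  · subst hx0; simp
  · rcases eq_or_lt_of_le hi with rfl | hi'
    · simp at hA2 ⊢; omega
    · omega

theorem row_list (ν : List Bool) (C : Set (ℕ × ℕ)) (y : ℕ) (hy : y ≤ northSteps ν) (t l : ℕ) :
    ((((List.range' t l).map fun x => (x, y)).filter fun p => decide (p ∈ C)).map (dOf ν)) =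
      rowW (Cp ν C) (northSteps ν - y) t l := by
  induction l generalizing t with
  | zero => rfl
  | succ l ih =>
    have hyy : northSteps ν - (northSteps ν - y) = y := by omega
    rw [List.range'_succ, rowW, ← ih (t+1), List.map_cons, List.filter_cons]
    by_cases h : (t, y) ∈ C
    · rw [if_pos (by simpa using h), if_pos (by simpa [Cp, hyy] using h)]
      simp [dOf]
    · rw [if_neg (by simpa using h), if_neg (by simpa [Cp, hyy] using h)]

theorem row_filter (ν : List Bool) (y : ℕ) :
    ((List.range (eastSteps ν + 1)).filter fun x => decide (heightAt ν x ≤ y)) =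
      List.range' 0 (wd ν y + 1) := by
  have hw : wd ν y ≤ eastSteps ν := Nat.findGreatest_le _
  rw [List.range_eq_range', show eastSteps ν + 1 = (wd ν y + 1) + (eastSteps ν - wd ν y) by omega,
    ← List.range'_append_1, List.filter_append, List.filter_eq_self.2, List.filter_eq_nil_iff.2,
    List.append_nil]
  · intro x hx
    rw [List.mem_range'_1] at hx
    simp only [decide_eq_true_eq]
    intro h
    have := (le_wd ν x y).2 ⟨by omega, h⟩
    omega
  · intro x hx
    rw [List.mem_range'_1] at hx
    simp only [decide_eq_true_eq]
    exact ((le_wd ν x y).1 (by omega)).2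

theorem WW_flat (C : ℕ → ℕ → Prop) (u : ℕ → ℕ) (n : ℕ) :
    WW C u n = ((List.range (n+1)).map fun t => rowW C (n-t) 0 (u (n-t) + 1)).flatten := by
  induction n with
  | zero => simp [WW]
  | succ n ih =>
    rw [WW, ih, List.range_succ_eq_map (n := n+1), List.map_cons, List.flatten_cons, List.map_map]
    congr 2
    apply List.map_congr_left
    intro t _
    simp

theorem word_eq (ν : List Bool) (C : Set (ℕ × ℕ)) :
    (((readingList ν).filter fun p => decide (p ∈ C)).map (dOf ν)) =
      WW (Cp ν C) (uu ν) (northSteps ν) := by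
  rw [WW_flat, readingList, List.filter_flatten, List.map_flatten, List.map_map, List.map_map]
  congr 1
  apply List.map_congr_left
  intro y hy
  rw [List.mem_range] at hy
  have hyy : northSteps ν - (northSteps ν - y) = y := by omega
  simp only [Function.comp, row_filter, uu, hyy]
  exact row_list ν C y (by omega) _ _

theorem prodOver_eq (ν : List Bool) (C : Set (ℕ × ℕ)) :
    prodOver ν C = ev (WW (Cp ν C) (uu ν) (northSteps ν)) := by
  rw [← word_eq, ev, List.map_map]; rfl

theorem reading_mem (ν : List Bool) (p : ℕ × ℕ) : p ∈ readingList ν ↔ p ∈ APts ν := by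
  obtain ⟨x, y⟩ := p
  simp only [readingList, List.mem_flatten, List.mem_map, List.mem_range, mem_APts]
  simp only [row_filter]
  constructor
  · rintro ⟨l, ⟨y', h1, rfl⟩, h2⟩
    simp at h2
    obtain ⟨h2, rfl⟩ := h2
    omega
  · rintro ⟨h1, h2⟩
    exact ⟨_, ⟨y, by omega, rfl⟩, by simp; omega⟩

theorem reading_nodup (ν : List Bool) : (readingList ν).Nodup := by
  rw [readingList, List.nodup_flatten]
  constructor
  · intro l hl
    simp only [List.mem_map] at hl
    obtain ⟨y, _, rfl⟩ := hl
    apply List.Nodup.map (fun a b h => by simpa using h)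
    exact List.nodup_range.filter _
  · rw [List.pairwise_map]
    refine List.nodup_range.imp ?_
    intro a b hab p hp hq
    simp only [List.mem_map] at hp hq
    obtain ⟨x, _, rfl⟩ := hp
    obtain ⟨x', _, h⟩ := hq
    simp at h
    exact hab h.2.symm

theorem ncard_eq (ν : List Bool) (C : Set (ℕ × ℕ)) (hC : C ⊆ APts ν) :
    C.ncard = (WW (Cp ν C) (uu ν) (northSteps ν)).length := by
  rw [← word_eq, List.length_map,
    ← List.toFinset_card_of_nodup ((reading_nodup ν).filter _), ← Set.ncard_coe_finset]
  congr 1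
  ext p
  simp only [List.coe_toFinset, List.mem_filter, reading_mem, decide_eq_true_eq]
  exact ⟨fun h => ⟨hC h, h⟩, fun h => h.2⟩

theorem tree_to (ν : List Bool) (T : Set (ℕ × ℕ)) (h : IsNuTree ν T) :
    Tr (northSteps ν) (uu ν) (Cp ν (APts ν \ T)) := by
  obtain ⟨hA, hP, hM⟩ := h
  have hu := uu_anti ν
  constructor
  · intro x1 i1 x2 i2 h1 h2 h3 h4
    by_contra hcon
    push Not at hcon
    have hx2 : x2 ≤ uu ν i2 := h4.trans (hu h2.le)
    have e1 : (x1, northSteps ν - i1) ∈ T := by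
      by_contra hh
      exact hcon.1 ⟨(mem_APts' ν _ _).2 (by omega), hh⟩
    have e2 : (x2, northSteps ν - i2) ∈ T := by
      by_contra hh
      exact hcon.2 ⟨(mem_APts' ν _ _).2 hx2, hh⟩
    exact hP e1 e2 (by simp; omega)
      (Or.inl ⟨h1, by simp only; omega, (mem_APts' ν _ _).2 h4⟩)
  · intro x i hi hx hC
    by_contra hcon
    apply hC.2
    have key : ∀ q ∈ T, ¬ Incompatible ν (x, northSteps ν - i) q := by
      rintro ⟨x', y'⟩ hq hinc
      have hqA := (mem_APts ν _ _).1 (hA hq)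
      have hy : northSteps ν - (northSteps ν - y') = y' := by omega
      apply hcon
      refine ⟨x', northSteps ν - y', fun hh => hh.2 (by rw [hy]; exact hq), by omega,
        by rw [uu, hy]; exact hqA.1, ?_⟩
      rcases hinc with ⟨k1, k2, k3⟩ | ⟨k1, k2, k3⟩
      · left
        simp only at k1 k2 k3
        exact ⟨k1, by omega, (mem_APts' ν _ _).1 k3⟩
      · right
        simp only at k1 k2 k3
        refine ⟨k1, by omega, ?_⟩
        rw [uu, hy]; exact ((mem_APts ν _ _).1 k3).1
    have := hM (insert (x, northSteps ν - i) T) (Set.insert_subset ((mem_APts' ν _ _).2 hx) hA)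
      (by
        rw [Set.pairwise_insert]
        refine ⟨hP, fun q hq _ => ⟨key q hq, fun hinc => key q hq hinc.symm⟩⟩)
      (Set.subset_insert _ _)
    rw [← this]; exact Set.mem_insert _ _

theorem to_tree (ν : List Bool) (C : Set (ℕ × ℕ)) (hCA : C ⊆ APts ν)
    (h : Tr (northSteps ν) (uu ν) (Cp ν C)) : IsNuTree ν (APts ν \ C) := by
  obtain ⟨hc, hm⟩ := h
  have hy : ∀ y ≤ northSteps ν, northSteps ν - (northSteps ν - y) = y := fun y h => by omega
  have aux : ∀ p q, p ∈ APts ν \ C → q ∈ APts ν \ C →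
      ¬ (p.1 < q.1 ∧ p.2 < q.2 ∧ (q.1, p.2) ∈ APts ν) := by
    rintro ⟨x1, y1⟩ ⟨x2, y2⟩ ⟨hp, hpC⟩ ⟨hq, hqC⟩ ⟨h1, h2, h3⟩
    simp only at h1 h2 h3
    rw [mem_APts] at hp hq h3
    have := hc x1 (northSteps ν - y1) x2 (northSteps ν - y2) h1 (by omega) (by omega)
      (by rw [uu, hy y1 hp.2]; exact h3.1)
    simp only [Cp, hy y1 hp.2, hy y2 hq.2] at this
    tauto
  refine ⟨Set.sdiff_subset, ?_, ?_⟩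
  · intro p hp q hq _ hinc
    rcases hinc with h | h
    · exact aux p q hp hq h
    · exact aux q p hq hp h
  · intro T' hA hP hsub
    apply Set.Subset.antisymm _ hsub
    rintro ⟨x, y⟩ hp
    refine ⟨hA hp, fun hC => ?_⟩
    have hpA := (mem_APts ν _ _).1 (hA hp)
    obtain ⟨x', i', h1, h2, h3, h4⟩ := hm x (northSteps ν - y) (by omega)
      (by rw [uu, hy y hpA.2]; exact hpA.1) (by rw [Cp, hy y hpA.2]; exact hC)
    have hq : (x', northSteps ν - i') ∈ T' := hsub ⟨(mem_APts' ν _ _).2 h3, h1⟩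
    rcases h4 with ⟨k1, k2, k3⟩ | ⟨k1, k2, k3⟩
    · refine hP hp hq (by simp; omega) (Or.inl ⟨k1, by simp only; omega, ?_⟩)
      rw [mem_APts]
      rw [uu, hy y hpA.2] at k3
      exact ⟨k3, hpA.2⟩
    · refine hP hp hq (by simp; omega) (Or.inr ⟨k1, by simp only; omega, ?_⟩)
      exact (mem_APts' ν _ _).2 k3

theorem piNu_eq (ν : List Bool) : piNu ν = ev (Wmin (northSteps ν) (uu ν)) := by
  rw [piNu, prodOver_eq, Wmin_eq]

theorem len_piNu (ν : List Bool) : lenInv (piNu ν) = (Wmin (northSteps ν) (uu ν)).length := by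
  rw [piNu_eq]
  exact (Wmin_red _ _ (uu_anti ν)).1

end NuPD

theorem nuTrees_are_reduced_pipe_dreams (ν : List Bool) :
    (∀ T, IsNuTree ν T →
      prodOver ν (APts ν \ T) = piNu ν ∧ (APts ν \ T).ncard = lenInv (piNu ν)) ∧
    (∀ C ⊆ APts ν, prodOver ν C = piNu ν → C.ncard = lenInv (piNu ν) →
      IsNuTree ν (APts ν \ C)) := by
  constructor
  · intro T hT
    have h := (NuPD.Tr_iff_PD _ _ _ (NuPD.uu_anti ν)).1 (NuPD.tree_to ν T hT)
    rw [NuPD.prodOver_eq, NuPD.ncard_eq ν _ Set.sdiff_subset, NuPD.len_piNu, NuPD.piNu_eq]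
    exact h
  · intro C hC h1 h2
    apply NuPD.to_tree ν C hC
    rw [NuPD.Tr_iff_PD _ _ _ (NuPD.uu_anti ν)]
    rw [NuPD.prodOver_eq, NuPD.piNu_eq] at h1
    rw [NuPD.ncard_eq ν _ hC, NuPD.len_piNu] at h2
    exact ⟨h1, h2⟩
end

section
/- Let ν be a lattice path. The ν-Tamari lattice Tam(ν) is order-isomorphic to the increasing flip poset of the subword complex SC(Q_ν, π_ν). -/
open scoped Classical

/-! ## Abstract trees -/

structure IsTree (r : ℕ → ℕ) (n : ℕ) (S : Finset (ℕ × ℕ)) : Prop where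
  sub : ∀ x y, (x, y) ∈ S → y ≤ n ∧ x ≤ r y
  compat : ∀ x y x' y', (x, y) ∈ S → (x', y') ∈ S → x < x' → y < y' → r y < x'
  card : S.card = r n + n + 1

structure IsPth (r : ℕ → ℕ) (n : ℕ) (Z : ℕ → ℕ) : Prop where
  z0 : Z 0 = 0
  mono : Monotone Z
  le : ∀ y, Z (y + 1) ≤ r y
  top : ∀ y, n < y → Z y = r n

def NonMin (S : Finset (ℕ × ℕ)) (x y : ℕ) : Prop := (x, y) ∈ S ∧ ∃ w < x, (w, y) ∈ S

noncomputable def rc (S : Finset (ℕ × ℕ)) (y : ℕ) : ℕ := (S.filter fun p => p.2 = y).card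

noncomputable def nmSet (S : Finset (ℕ × ℕ)) : Finset (ℕ × ℕ) := S.filter fun p => NonMin S p.1 p.2
noncomputable def mnSet (S : Finset (ℕ × ℕ)) : Finset (ℕ × ℕ) := S.filter fun p => ¬ NonMin S p.1 p.2

theorem IsTree.nm_unique {r n S} (h : IsTree r n S) {x y y' : ℕ}
    (h1 : NonMin S x y) (h2 : (x, y') ∈ S) : y' ≤ y := by
  obtain ⟨hx, w, hw, hwS⟩ := h1
  by_contra hlt
  push Not at hlt
  have := h.compat w y x y' hwS h2 hw hlt
  have := (h.sub x y hx).2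
  omega

theorem IsTree.nm_card {r n S} (h : IsTree r n S) (hr : Monotone r) :
    (nmSet S).image Prod.fst = Finset.Icc 1 (r n) ∧ (mnSet S).image Prod.snd = Finset.range (n + 1) ∧
    Set.InjOn Prod.fst (nmSet S : Set (ℕ × ℕ)) ∧ Set.InjOn Prod.snd (mnSet S : Set (ℕ × ℕ)) := by
  have i1 : Set.InjOn Prod.fst (nmSet S : Set (ℕ × ℕ)) := by
    rintro ⟨x, y⟩ hp ⟨x', y'⟩ hq (rfl : x = x')
    simp only [nmSet, Finset.coe_filter, Set.mem_setOf_eq] at hp hq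
    have := h.nm_unique hp.2 hq.1
    have := h.nm_unique hq.2 hp.1
    ext <;> simp; omega
  have i2 : Set.InjOn Prod.snd (mnSet S : Set (ℕ × ℕ)) := by
    rintro ⟨x, y⟩ hp ⟨x', y'⟩ hq (rfl : y = y')
    simp only [mnSet, Finset.coe_filter, Set.mem_setOf_eq] at hp hq
    rcases lt_trichotomy x x' with hl | hl | hl
    · exact absurd ⟨hq.1, x, hl, hp.1⟩ hq.2
    · rw [hl]
    · exact absurd ⟨hp.1, x', hl, hq.1⟩ hp.2
  have s1 : (nmSet S).image Prod.fst ⊆ Finset.Icc 1 (r n) := by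
    intro x hx
    simp only [nmSet, Finset.mem_image, Finset.mem_filter] at hx
    obtain ⟨⟨x', y⟩, ⟨hp, _, w, hw, _⟩, rfl⟩ := hx
    have := h.sub _ _ hp
    have := hr this.1
    simp only [Finset.mem_Icc] at *
    omega
  have s2 : (mnSet S).image Prod.snd ⊆ Finset.range (n + 1) := by
    intro x hx
    simp only [mnSet, Finset.mem_image, Finset.mem_filter] at hx
    obtain ⟨⟨x', y⟩, ⟨hp, _⟩, rfl⟩ := hx
    have := h.sub _ _ hp
    simp only [Finset.mem_range] at *
    omega
  have c1 := Finset.card_image_of_injOn i1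
  have c2 := Finset.card_image_of_injOn i2
  have c3 := Finset.card_le_card s1
  have c4 := Finset.card_le_card s2
  have c5 : (nmSet S).card + (mnSet S).card = S.card := Finset.card_filter_add_card_filter_not _
  have c6 := h.card
  simp only [Nat.card_Icc, Finset.card_range] at c3 c4
  refine ⟨Finset.eq_of_subset_of_card_le s1 ?_, Finset.eq_of_subset_of_card_le s2 ?_, i1, i2⟩
  · simp only [Nat.card_Icc]; omega
  · simp only [Finset.card_range]; omega

theorem IsTree.exists_min {r n S} (h : IsTree r n S) (hr : Monotone r) {y : ℕ} (hy : y ≤ n) :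
    ∃ e, (e, y) ∈ S ∧ ∀ w < e, (w, y) ∉ S := by
  have h2 := (h.nm_card hr).2.1
  have : y ∈ (mnSet S).image Prod.snd := by rw [h2]; simp; omega
  simp only [mnSet, Finset.mem_image, Finset.mem_filter] at this
  obtain ⟨⟨x', y⟩, ⟨hp, hq⟩, rfl⟩ := this
  refine ⟨x', hp, fun w hw hwS => hq ⟨hp, w, hw, hwS⟩⟩

theorem IsTree.exists_nm {r n S} (h : IsTree r n S) (hr : Monotone r) {z : ℕ} (hz : 1 ≤ z)
    (hz' : z ≤ r n) : ∃ y, NonMin S z y := by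
  have h2 := (h.nm_card hr).1
  have : z ∈ (nmSet S).image Prod.fst := by rw [h2]; simp; omega
  simp only [nmSet, Finset.mem_image, Finset.mem_filter] at this
  obtain ⟨⟨x', y⟩, ⟨hp, hq⟩, rfl⟩ := this
  exact ⟨y, hq⟩

/-- Row `y` is an upper set of the unpopped columns. -/
theorem IsTree.upper {r n S} (h : IsTree r n S) (hr : Monotone r) {e y z : ℕ} (he : (e, y) ∈ S)
    (hez : e < z) (hz : z ≤ r y) (hu : ∀ k < y, ¬ NonMin S z k) : (z, y) ∈ S := by
  obtain ⟨k, hk⟩ := h.exists_nm hr (z := z) (by omega) (hz.trans (hr (h.sub _ _ he).1))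
  rcases lt_trichotomy k y with hl | hl | hl
  · exact absurd hk (hu k hl)
  · exact hl ▸ hk.1
  · have := h.compat _ _ _ _ he hk.1 hez hl
    omega

theorem mem_row_iff {S : Finset (ℕ × ℕ)} {x y : ℕ} :
    x ∈ (S.filter fun p => p.2 = y).image Prod.fst ↔ (x, y) ∈ S := by
  simp only [Finset.mem_image, Finset.mem_filter]
  constructor
  · rintro ⟨⟨a, b⟩, ⟨h1, rfl⟩, rfl⟩; exact h1
  · intro h1; exact ⟨(x, y), ⟨h1, rfl⟩, rfl⟩

theorem row_card (S : Finset (ℕ × ℕ)) (y : ℕ) :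
    ((S.filter fun p => p.2 = y).image Prod.fst).card = rc S y := by
  apply Finset.card_image_of_injOn
  rintro ⟨x, y⟩ hp ⟨x', y'⟩ hq (rfl : x = x')
  simp at hp hq
  simp [hp.2, hq.2]

theorem tree_unique {r n S S'} (hr : Monotone r) (h : IsTree r n S) (h' : IsTree r n S')
    (hc : ∀ y, rc S y = rc S' y) : S = S' := by
  have key : ∀ y, ∀ x, (x, y) ∈ S ↔ (x, y) ∈ S' := by
    intro y
    induction y using Nat.strong_induction_on with
    | _ y ih =>
    have nm : ∀ k < y, ∀ z, NonMin S z k ↔ NonMin S' z k := by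
      intro k hk z
      simp only [NonMin, ih k hk]
    set R := (S.filter fun p => p.2 = y).image Prod.fst with hR
    set R' := (S'.filter fun p => p.2 = y).image Prod.fst with hR'
    have hcc : R.card = R'.card := by rw [hR, hR', row_card, row_card, hc]
    have : R ⊆ R' ∨ R' ⊆ R := by
      by_contra hcon
      push Not at hcon
      obtain ⟨⟨z, hz, hz'⟩, ⟨w, hw, hw'⟩⟩ :=
        And.intro (Finset.not_subset.1 hcon.1) (Finset.not_subset.1 hcon.2)
      rw [hR, mem_row_iff] at hz hw'
      rw [hR', mem_row_iff] at hz' hw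
      rcases lt_trichotomy z w with hl | hl | hl
      · refine hw' (h.upper hr hz hl (h'.sub _ _ hw).2 fun k hk hn => ?_)
        rw [nm k hk] at hn
        have := h'.nm_unique hn hw
        omega
      · subst hl; exact hz' hw
      · refine hz' (h'.upper hr hw hl (h.sub _ _ hz).2 fun k hk hn => ?_)
        rw [← nm k hk] at hn
        have := h.nm_unique hn hz
        omega
    have : R = R' := by
      rcases this with h1 | h1
      · exact Finset.eq_of_subset_of_card_le h1 hcc.ge
      · exact (Finset.eq_of_subset_of_card_le h1 hcc.le).symm
    intro x
    rw [← mem_row_iff, ← mem_row_iff (S := S')]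
    change x ∈ R ↔ x ∈ R'
    rw [this]
  ext ⟨x, y⟩
  exact key y x

/-- The path data of a tree. -/
noncomputable def zOf (S : Finset (ℕ × ℕ)) (y : ℕ) : ℕ := ((nmSet S).filter fun p => p.2 < y).card

theorem IsTree.zOf_pth {r n S} (h : IsTree r n S) (hr : Monotone r) : IsPth r n (zOf S) := by
  obtain ⟨e1, e2, i1, i2⟩ := h.nm_card hr
  refine ⟨by simp [zOf], ?_, ?_, ?_⟩
  · intro a b hab
    apply Finset.card_le_card
    intro p
    simp only [Finset.mem_filter]
    rintro ⟨h1, h2⟩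
    exact ⟨h1, by omega⟩
  · intro y
    have : ((nmSet S).filter fun p => p.2 < y + 1).card ≤ (Finset.Icc 1 (r y)).card := by
      apply Finset.card_le_card_of_injOn Prod.fst
      · rintro ⟨x, k⟩ hp
        simp only [nmSet, Finset.coe_filter, Set.mem_setOf_eq, Finset.mem_filter] at hp
        obtain ⟨⟨h1, -, w, hw, -⟩, h2⟩ := hp
        have := (h.sub _ _ h1).2
        have := hr (show k ≤ y by omega)
        simp only [Finset.coe_Icc, Set.mem_Icc]
        omega
      · exact i1.mono (by intro p; simp only [Finset.coe_filter, Set.mem_setOf_eq]; exact fun hp => hp.1)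
    simpa [zOf] using this
  · intro y hy
    have : (nmSet S).filter (fun p => p.2 < y) = nmSet S := by
      apply Finset.filter_true_of_mem
      rintro ⟨x, k⟩ hp
      simp only [nmSet, Finset.mem_filter] at hp
      have := (h.sub _ _ hp.1).1
      simp only; omega
    rw [zOf, this, ← Finset.card_image_of_injOn i1, e1]
    simp

theorem IsTree.rc_eq {r n S} (h : IsTree r n S) (hr : Monotone r) {y : ℕ} (hy : y ≤ n) :
    rc S y + zOf S y = zOf S (y + 1) + 1 := by
  obtain ⟨e, he, hmin⟩ := h.exists_min hr hy
  have h1 : (nmSet S).filter (fun p => p.2 < y + 1) =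
      (nmSet S).filter (fun p => p.2 < y) ∪ ((S.filter fun p => p.2 = y).erase (e, y)) := by
    ext ⟨x, k⟩
    simp only [nmSet, Finset.mem_filter, Finset.mem_union, Finset.mem_erase, ne_eq, Prod.mk.injEq]
    constructor
    · rintro ⟨⟨a1, a2⟩, a3⟩
      by_cases hk : k < y
      · exact Or.inl ⟨⟨a1, a2⟩, hk⟩
      · obtain rfl : k = y := by omega
        refine Or.inr ⟨?_, a1, rfl⟩
        rintro ⟨rfl, -⟩
        obtain ⟨-, w, hw, hw'⟩ := a2
        exact hmin w hw hw'
    · rintro (⟨⟨a1, a2⟩, a3⟩ | ⟨a1, a2, rfl⟩)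
      · exact ⟨⟨a1, a2⟩, by omega⟩
      · refine ⟨⟨a2, a2, e, ?_, he⟩, by omega⟩
        rcases lt_trichotomy e x with hl | hl | hl
        · exact hl
        · exact absurd ⟨hl.symm, rfl⟩ a1
        · exact absurd a2 (hmin x hl)
  have h2 : Disjoint ((nmSet S).filter (fun p => p.2 < y)) ((S.filter fun p => p.2 = y).erase (e, y)) := by
    rw [Finset.disjoint_left]
    rintro ⟨x, k⟩ hp hq
    simp only [Finset.mem_filter, Finset.mem_erase] at hp hq
    omega
  have h3 : (e, y) ∈ S.filter fun p => p.2 = y := by simp [he]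
  have h4 := Finset.card_erase_add_one h3
  simp only [zOf, rc]
  rw [h1, Finset.card_union_of_disjoint h2, ← h4]
  omega

theorem IsTree.rc_zero {r n S} (h : IsTree r n S) {y : ℕ} (hy : n < y) : rc S y = 0 := by
  simp only [rc, Finset.card_eq_zero]
  apply Finset.filter_false_of_mem
  rintro ⟨x, k⟩ hp
  have := (h.sub _ _ hp).1
  simp only; omega

/-! ## The tree of a path -/

def stk (r Z : ℕ → ℕ) : ℕ → ℕ → ℕ
  | 0, H => H
  | y + 1, H => if r y < H + Z (y + 1) then H + Z (y + 1) else stk r Z y H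

theorem stk_le {r n Z} (hr : Monotone r) (hZ : IsPth r n Z) :
    ∀ y H, H + Z y ≤ r y → stk r Z y H ≤ r y := by
  intro y
  induction y with
  | zero => intro H h; simp only [stk]; omega
  | succ y ih =>
    intro H h
    simp only [stk]
    split_ifs with h1
    · exact h
    · have h2 : r y ≤ r (y + 1) := hr (by omega)
      have := hZ.mono (show y ≤ y + 1 by omega)
      exact (ih H (by omega)).trans h2

theorem stk_lt {r n Z} (hr : Monotone r) (hZ : IsPth r n Z) :
    ∀ y H H', H < H' → H' + Z y ≤ r y → stk r Z y H < stk r Z y H' := by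
  intro y
  induction y with
  | zero => intro H H' h h'; simpa only [stk] using h
  | succ y ih =>
    intro H H' h h'
    simp only [stk]
    have h3 := hZ.mono (show y ≤ y + 1 by omega)
    split_ifs with h1 h2 h2
    · omega
    · omega
    · have := stk_le hr hZ y H (by omega)
      omega
    · exact ih H H' h (by omega)

/-- An old column in the stack has low height. -/
theorem stk_old {r n Z} (hr : Monotone r) (hZ : IsPth r n Z) {a y H : ℕ} (hay : a ≤ y)
    (hle : stk r Z y H ≤ r a) :
    stk r Z y H = stk r Z a H ∧ ∀ k, a ≤ k → k < y → H + Z (k + 1) ≤ r k := by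
  induction y, hay using Nat.le_induction with
  | base => exact ⟨rfl, fun k h1 h2 => by omega⟩
  | succ y hay ih =>
    simp only [stk] at hle ⊢
    have := hr hay
    split_ifs at hle ⊢ with h1
    · omega
    · obtain ⟨h2, h3⟩ := ih hle
      refine ⟨h2, fun k h4 h5 => ?_⟩
      rcases Nat.lt_or_ge k y with h6 | h6
      · exact h3 k h4 h6
      · obtain rfl : k = y := by omega
        omega

theorem stk_keep {r Z : ℕ → ℕ} {a y H : ℕ} (hay : a ≤ y)
    (h : ∀ k, a ≤ k → k < y → H + Z (k + 1) ≤ r k) : stk r Z y H = stk r Z a H := by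
  induction y, hay using Nat.le_induction with
  | base => rfl
  | succ y hay ih =>
    simp only [stk]
    have := h y hay (by omega)
    rw [if_neg (by omega)]
    exact ih fun k h1 h2 => h k h1 (by omega)

noncomputable def rowT (r Z : ℕ → ℕ) (y : ℕ) : Finset (ℕ × ℕ) :=
  (Finset.Icc (r y - Z (y + 1)) (r y - Z y)).image fun H => (stk r Z y H, y)

noncomputable def treeOf (r : ℕ → ℕ) (n : ℕ) (Z : ℕ → ℕ) : Finset (ℕ × ℕ) :=
  (Finset.range (n + 1)).biUnion (rowT r Z)

theorem IsPth.le0 {r n Z} (hZ : IsPth r n Z) (hr : Monotone r) (y : ℕ) : Z y ≤ r y := by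
  cases y with
  | zero => rw [hZ.z0]; omega
  | succ y => exact (hZ.le y).trans (hr (by omega))

theorem mem_treeOf {r n Z} (hr : Monotone r) (hZ : IsPth r n Z) {x y : ℕ} : (x, y) ∈ treeOf r n Z ↔
    y ≤ n ∧ ∃ H, r y ≤ H + Z (y + 1) ∧ H + Z y ≤ r y ∧ stk r Z y H = x := by
  simp only [treeOf, rowT, Finset.mem_biUnion, Finset.mem_range, Finset.mem_image, Finset.mem_Icc,
    Prod.mk.injEq]
  constructor
  · rintro ⟨k, hk, H, h1, h2, rfl⟩
    have := hZ.le0 hr k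
    exact ⟨by omega, H, by omega, by omega, h2⟩
  · rintro ⟨hk, H, h1, h2, h3⟩
    have := hZ.le0 hr y
    exact ⟨y, by omega, H, by omega, h3, rfl⟩

theorem rowT_card {r n Z} (hr : Monotone r) (hZ : IsPth r n Z) (y : ℕ) :
    (rowT r Z y).card + Z y = Z (y + 1) + 1 := by
  rw [rowT, Finset.card_image_of_injOn]
  · have := hZ.le0 hr y
    have := hZ.le y
    have := hZ.mono (show y ≤ y + 1 by omega)
    simp only [Nat.card_Icc]
    omega
  · intro H h1 H' h2 h3
    have := hZ.le0 hr y
    simp only [Finset.coe_Icc, Set.mem_Icc, Prod.mk.injEq, and_true] at h1 h2 h3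
    rcases lt_trichotomy H H' with hl | hl | hl
    · have := stk_lt hr hZ y H H' hl (by omega); omega
    · exact hl
    · have := stk_lt hr hZ y H' H hl (by omega); omega

theorem treeOf_isTree {r n Z} (hr : Monotone r) (hZ : IsPth r n Z) : IsTree r n (treeOf r n Z) := by
  refine ⟨?_, ?_, ?_⟩
  · intro x y h
    rw [mem_treeOf hr hZ] at h
    obtain ⟨h1, H, h2, h3, rfl⟩ := h
    exact ⟨h1, stk_le hr hZ y H h3⟩
  · intro x y x' y' h h' hx hy
    rw [mem_treeOf hr hZ] at h h'
    obtain ⟨h1, H, h2, h3, rfl⟩ := h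
    obtain ⟨h1', H', h2', h3', rfl⟩ := h'
    by_contra hcon
    obtain ⟨h4, h5⟩ := stk_old hr hZ hy.le (by omega : stk r Z y' H' ≤ r y)
    have h6 := h5 y le_rfl hy
    rw [h4] at hx
    rcases lt_trichotomy H H' with hl | hl | hl
    · omega
    · subst hl; omega
    · have := stk_lt hr hZ y H' H hl h3; omega
  · rw [treeOf, Finset.card_biUnion]
    · have : ∀ N, ∑ y ∈ Finset.range N, (rowT r Z y).card = Z N + N := by
        intro N
        induction N with
        | zero => simp [hZ.z0]
        | succ N ih =>
          rw [Finset.sum_range_succ, ih]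
          have := rowT_card hr hZ N
          omega
      rw [this, hZ.top (n + 1) (by omega)]
      omega
    · intro a _ b _ hab
      simp only [Finset.disjoint_left]
      rintro ⟨x, k⟩ h1 h2
      simp only [rowT, Finset.mem_image, Prod.mk.injEq] at h1 h2
      obtain ⟨_, _, _, rfl⟩ := h1
      obtain ⟨_, _, _, rfl⟩ := h2
      exact hab rfl

theorem treeOf_rc {r n Z} (hr : Monotone r) (hZ : IsPth r n Z) {y : ℕ} (hy : y ≤ n) :
    rc (treeOf r n Z) y + Z y = Z (y + 1) + 1 := by
  rw [← rowT_card hr hZ y, rc]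
  congr 2
  ext ⟨x, k⟩
  simp only [treeOf, Finset.mem_filter, Finset.mem_biUnion, Finset.mem_range, rowT, Finset.mem_image,
    Prod.mk.injEq]
  constructor
  · rintro ⟨⟨k', h1, H, h2, h3, rfl⟩, rfl⟩
    exact ⟨H, h2, h3, rfl⟩
  · rintro ⟨H, h2, h3, rfl⟩
    exact ⟨⟨y, by omega, H, h2, h3, rfl⟩, rfl⟩

theorem tree_eq_treeOf {r n S Z} (hr : Monotone r) (h : IsTree r n S) (hZ : IsPth r n Z)
    (hc : ∀ y ≤ n, rc S y + Z y = Z (y + 1) + 1) : S = treeOf r n Z := by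
  apply tree_unique hr h (treeOf_isTree hr hZ)
  intro y
  rcases Nat.lt_or_ge n y with hy | hy
  · rw [h.rc_zero hy, (treeOf_isTree hr hZ).rc_zero hy]
  · have := hc y hy
    have := treeOf_rc hr hZ hy
    omega

theorem exists_pth_of_tree {r n S} (hr : Monotone r) (h : IsTree r n S) :
    ∃ Z, IsPth r n Z ∧ S = treeOf r n Z :=
  ⟨zOf S, h.zOf_pth hr, tree_eq_treeOf hr h (h.zOf_pth hr) fun _ hy => h.rc_eq hr hy⟩

theorem treeOf_inj {r n Z Z'} (hr : Monotone r) (hZ : IsPth r n Z) (hZ' : IsPth r n Z')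
    (h : ∀ y ≤ n, rc (treeOf r n Z) y = rc (treeOf r n Z') y) : Z = Z' := by
  have : ∀ y ≤ n + 1, Z y = Z' y := by
    intro y
    induction y with
    | zero => intro _; rw [hZ.z0, hZ'.z0]
    | succ y ih =>
      intro hy
      have h1 := ih (by omega)
      have h2 := treeOf_rc hr hZ (show y ≤ n by omega)
      have h3 := treeOf_rc hr hZ' (show y ≤ n by omega)
      have h4 := h y (by omega)
      omega
  funext y
  rcases Nat.lt_or_ge n y with hy | hy
  · rw [hZ.top y hy, hZ'.top y hy]
  · exact this y (by omega)

/-! ## Covers and flips of trees -/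

def Cov (r : ℕ → ℕ) (n : ℕ) (Z Z' : ℕ → ℕ) : Prop :=
  ∃ a b, a < b ∧ b ≤ n ∧ Z a < Z (a + 1) ∧ r b + Z (a + 1) ≤ r a + Z (b + 1) ∧
    (∀ k, a < k → k < b → r a + Z (k + 1) < r k + Z (a + 1)) ∧
    ∀ k, Z' k = if a < k ∧ k ≤ b then Z k - 1 else Z k

theorem rc_erase {S : Finset (ℕ × ℕ)} {x y k : ℕ} (h : (x, y) ∈ S) :
    rc (S.erase (x, y)) k + (if k = y then 1 else 0) = rc S k := by
  simp only [rc]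
  rw [Finset.filter_erase]
  split_ifs with hk
  · subst hk
    apply Finset.card_erase_add_one
    simp [h]
  · rw [Finset.erase_eq_of_notMem]
    · simp
    · simp only [Finset.mem_filter, not_and]
      intro _ h2; exact hk h2.symm

theorem cov_flip {r n Z Z'} (hr : Monotone r) (hZ : IsPth r n Z) (hZ' : IsPth r n Z')
    (hc : Cov r n Z Z') : ∃ p ∈ treeOf r n Z, ∃ q ∈ treeOf r n Z', p.2 < q.2 ∧
      (treeOf r n Z).erase p = (treeOf r n Z').erase q := by
  obtain ⟨a, b, hab, hbn, hlt, hb, hk, hZk⟩ := hc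
  have hT := treeOf_isTree hr hZ
  have hla := hZ.le a
  have hla0 := hZ.le0 hr a
  have hmem : ∀ {x y : ℕ}, (x, y) ∈ treeOf r n Z ↔ _ := fun {x y} => mem_treeOf hr hZ (x := x) (y := y)
  set T := treeOf r n Z with hTdef
  obtain ⟨G, hG⟩ : ∃ G, G + Z (a + 1) = r a := ⟨r a - Z (a + 1), by omega⟩
  set e := stk r Z a G with he
  set z := stk r Z a (G + 1) with hz
  have hez : e < z := stk_lt hr hZ a G (G + 1) (by omega) (by omega)
  have heT : (e, a) ∈ T := hmem.2 ⟨by omega, G, by omega, by omega, rfl⟩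
  have hzT : (z, a) ∈ T := hmem.2 ⟨by omega, G + 1, by omega, by omega, rfl⟩
  have hzr : z ≤ r a := (hT.sub _ _ hzT).2
  have heb : (e, b) ∈ T := by
    refine hmem.2 ⟨hbn, G, by omega, ?_, ?_⟩
    · obtain ⟨b', rfl⟩ : ∃ b', b = b' + 1 := ⟨b - 1, by omega⟩
      have h1 : r b' ≤ r (b' + 1) := hr (by omega)
      rcases Nat.eq_or_lt_of_le (show a ≤ b' by omega) with h2 | h2
      · subst h2; omega
      · have := hk b' h2 (by omega); omega
    · apply stk_keep hab.le
      intro k h1 h2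
      rcases Nat.eq_or_lt_of_le h1 with h3 | h3
      · subst h3; omega
      · have := hk k h3 h2; omega
  have hznb : (z, b) ∉ T := by
    intro h
    have := hT.nm_unique ⟨hzT, e, hez, heT⟩ h
    omega
  set S := insert (z, b) (T.erase (e, a)) with hS
  have hSmem : ∀ x y, (x, y) ∈ S ↔ (x = z ∧ y = b) ∨ (¬ (x = e ∧ y = a) ∧ (x, y) ∈ T) := by
    intro x y; simp [hS]
  have hzbe : (z, b) ∉ T.erase (e, a) := fun h => hznb (Finset.mem_of_mem_erase h)
  have hStree : IsTree r n S := by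
    refine ⟨?_, ?_, ?_⟩
    · intro x y h
      rcases (hSmem x y).1 h with ⟨rfl, rfl⟩ | ⟨-, h⟩
      · exact ⟨hbn, hzr.trans (hr hab.le)⟩
      · exact hT.sub _ _ h
    · intro x y x' y' h h' hx hy
      rcases (hSmem x y).1 h with ⟨rfl, rfl⟩ | ⟨h1, h2⟩ <;>
      rcases (hSmem x' y').1 h' with ⟨rfl, rfl⟩ | ⟨h1', h2'⟩
      · omega
      · exact hT.compat e y x' y' heb h2' (by omega) hy
      · rcases lt_trichotomy y a with hl | hl | hl
        · exact hT.compat _ _ _ _ h2 hzT hx hl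
        · subst hl
          exfalso
          obtain ⟨-, H, h3, h4, h5⟩ := hmem.1 h2
          rcases Nat.lt_or_ge H (G + 1) with h6 | h6
          · obtain rfl : H = G := by omega
            exact h1 ⟨h5.symm, rfl⟩
          · rcases Nat.eq_or_lt_of_le h6 with h7 | h7
            · subst h7; omega
            · have := stk_lt hr hZ y (G + 1) H h7 h4
              omega
        · exfalso
          obtain ⟨-, H, h3, h4, h5⟩ := hmem.1 h2
          have h6 := (stk_old hr hZ hl.le (show stk r Z y H ≤ r a by omega)).2 a le_rfl hl
          have := hk y hl hy
          omega
      · exact hT.compat _ _ _ _ h2 h2' hx hy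
    · have := Finset.card_erase_add_one heT
      rw [hS, Finset.card_insert_of_notMem hzbe, this, hT.card]
  have hSe : S.erase (z, b) = T.erase (e, a) := by rw [hS, Finset.erase_insert hzbe]
  have hzS : (z, b) ∈ S := by simp [hS]
  have hSeq : S = treeOf r n Z' := by
    apply tree_eq_treeOf hr hStree hZ'
    intro y hy
    have h1 := rc_erase (k := y) hzS
    have h2 := rc_erase (k := y) heT
    rw [hSe] at h1
    have h3 := treeOf_rc hr hZ hy
    rw [← hTdef] at h3
    have h4 := hZk y
    have h5 := hZk (y + 1)
    have h6 := hZ.mono (show y ≤ y + 1 by omega)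
    have h7 : a + 1 ≤ y → Z (a + 1) ≤ Z y := fun h => hZ.mono h
    by_cases hya : y = a
    · subst hya
      split_ifs at * <;> omega
    · split_ifs at * <;> omega
  refine ⟨(e, a), heT, (z, b), hSeq ▸ hzS, hab, ?_⟩
  rw [← hSeq, hSe]

theorem flip_cov {r n Z Z'} (hr : Monotone r) (hZ : IsPth r n Z) (hZ' : IsPth r n Z')
    {p q : ℕ × ℕ} (hp : p ∈ treeOf r n Z) (hq : q ∈ treeOf r n Z') (hpq : p ≠ q) (hle : p.2 ≤ q.2)
    (he : (treeOf r n Z).erase p = (treeOf r n Z').erase q) : Cov r n Z Z' := by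
  have hT := treeOf_isTree hr hZ
  have hT' := treeOf_isTree hr hZ'
  have hmem : ∀ {x y : ℕ}, (x, y) ∈ treeOf r n Z ↔ _ := fun {x y} => mem_treeOf hr hZ (x := x) (y := y)
  have hrc := fun y (hy : y ≤ n) => treeOf_rc hr hZ hy
  have hrc' := fun y (hy : y ≤ n) => treeOf_rc hr hZ' hy
  have hinj : treeOf r n Z ≠ treeOf r n Z' := by
    intro h
    rw [← h] at he hq
    have : p ∈ (treeOf r n Z).erase q := Finset.mem_erase.2 ⟨hpq, hp⟩
    rw [← he] at this
    simp at this
  have hinj2 := treeOf_inj hr hZ hZ'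
  set T := treeOf r n Z with hTd
  set T' := treeOf r n Z' with hTd'
  obtain ⟨x, a⟩ := p
  obtain ⟨z, b⟩ := q
  simp only at hle
  have rcs : ∀ k, rc T k + (if k = b then 1 else 0) = rc T' k + (if k = a then 1 else 0) := by
    intro k
    have h1 := rc_erase (k := k) hp
    have h2 := rc_erase (k := k) hq
    rw [he] at h1
    omega
  have hab : a < b := by
    rcases Nat.eq_or_lt_of_le hle with h | h
    · subst h
      exfalso
      apply hinj
      rw [hTd, hTd', hinj2 fun y hy => by have := rcs y; omega]
    · exact h
  have hbn : b ≤ n := (hT'.sub _ _ hq).1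
  have hla := hZ.le a
  have hla0 := hZ.le0 hr a
  -- transfer
  have tr : ∀ {u v}, (u, v) ∈ T → (u, v) ≠ (x, a) → (u, v) ∈ T' := by
    intro u v h1 h2
    have : (u, v) ∈ T.erase (x, a) := Finset.mem_erase.2 ⟨h2, h1⟩
    rw [he] at this
    exact Finset.mem_of_mem_erase this
  have tr' : ∀ {u v}, (u, v) ∈ T' → (u, v) ≠ (z, b) → (u, v) ∈ T ∧ (u, v) ≠ (x, a) := by
    intro u v h1 h2
    have : (u, v) ∈ T'.erase (z, b) := Finset.mem_erase.2 ⟨h2, h1⟩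
    rw [← he] at this
    exact ⟨Finset.mem_of_mem_erase this, (Finset.mem_erase.1 this).1⟩
  have hxa' : (x, a) ∉ T' := by
    intro h
    exact (tr' h hpq).2 rfl
  have hzb : (z, b) ∉ T := by
    intro h
    have : (z, b) ∈ T.erase (x, a) := Finset.mem_erase.2 ⟨hpq.symm, h⟩
    rw [he] at this
    simp at this
  have hZk : ∀ k ≤ n + 1, Z' k + (if a < k ∧ k ≤ b then 1 else 0) = Z k := by
    intro k
    induction k with
    | zero => intro _; rw [hZ.z0, hZ'.z0]; simp
    | succ k ih =>
      intro hk
      have h1 := ih (by omega)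
      have h2 := rcs k
      have h3 := hrc k (by omega)
      have h4 := hrc' k (by omega)
      by_cases hka : k = a
      · subst hka; split_ifs at * <;> omega
      · split_ifs at * <;> omega
  have hlt : Z a < Z (a + 1) := by
    have h1 := hZk a (by omega)
    have h2 := hZk (a + 1) (by omega)
    have h3 := hZ'.mono (show a ≤ a + 1 by omega)
    split_ifs at * <;> omega
  obtain ⟨G, hG⟩ : ∃ G, G + Z (a + 1) = r a := ⟨r a - Z (a + 1), by omega⟩
  set e := stk r Z a G with hedef
  set z1 := stk r Z a (G + 1) with hz1def
  have hez : e < z1 := stk_lt hr hZ a G (G + 1) (by omega) (by omega)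
  have heT : (e, a) ∈ T := hmem.2 ⟨by omega, G, by omega, by omega, rfl⟩
  have hzT : (z1, a) ∈ T := hmem.2 ⟨by omega, G + 1, by omega, by omega, rfl⟩
  have hzr : z1 ≤ r a := (hT.sub _ _ hzT).2
  -- elements of row a of T
  have hrow : ∀ w, (w, a) ∈ T → w = e ∨ z1 ≤ w := by
    intro w hw
    obtain ⟨-, H, h3, h4, h5⟩ := hmem.1 hw
    rcases Nat.lt_or_ge H (G + 1) with h6 | h6
    · obtain rfl : H = G := by omega
      exact Or.inl h5.symm
    · rcases Nat.eq_or_lt_of_le h6 with h7 | h7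
      · subst h7; right; omega
      · have := stk_lt hr hZ a (G + 1) H h7 h4
        right; omega
  -- p is the minimum of row a
  have hxe : x = e := by
    by_contra hne
    have h1 : (e, a) ∈ T' := tr heT (by simp; omega)
    have h2 : e < x := by
      rcases hrow x hp with h | h
      · exact absurd h hne
      · omega
    apply hxa'
    refine hT'.upper hr h1 h2 (hT.sub _ _ hp).2 ?_
    rintro k hk ⟨h3, w, h4, h5⟩
    have h6 := tr' h3 (by simp; omega)
    have h7 := tr' h5 (by simp; omega)
    have := hT.nm_unique ⟨h6.1, w, h4, h7.1⟩ hp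
    omega
  subst hxe
  have hz1b : z = z1 := by
    obtain ⟨k, h1, w, h2, h3⟩ := hT'.exists_nm hr (z := z1) (by omega) (hzr.trans (hr (by omega)))
    by_contra hne
    have h4 := (tr' h1 (by simp; omega)).1
    have h5 : k ≤ a := hT.nm_unique ⟨hzT, e, hez, heT⟩ h4
    have h6 := tr' h3 (by simp; omega)
    have h7 := hT.nm_unique ⟨h4, w, h2, h6.1⟩ hzT
    obtain rfl : k = a := by omega
    rcases hrow w h6.1 with h8 | h8
    · exact h6.2 (by rw [h8])
    · omega
  subst hz1b
  have hzT' : (z1, a) ∈ T' := tr hzT (by simp; omega)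
  -- the first return row
  have hex : ∃ k, a < k ∧ r k + Z (a + 1) ≤ r a + Z (k + 1) := by
    refine ⟨n, by omega, ?_⟩
    have := hZ.top (n + 1) (by omega)
    omega
  let b0 := Nat.find hex
  have hb0 := Nat.find_spec hex
  have hbmin : ∀ k, a < k → k < b0 → r a + Z (k + 1) < r k + Z (a + 1) := by
    intro k h1 h2
    have := Nat.find_min hex h2
    by_contra h3
    exact this ⟨h1, by omega⟩
  change a < b0 ∧ r b0 + Z (a + 1) ≤ r a + Z (b0 + 1) at hb0
  have hb0n : b0 ≤ n := by
    apply Nat.find_min' hex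
    refine ⟨by omega, ?_⟩
    have := hZ.top (n + 1) (by omega)
    omega
  clear_value b0
  have heb : (e, b0) ∈ T := by
    refine hmem.2 ⟨hb0n, G, by omega, ?_, ?_⟩
    · obtain ⟨b', rfl⟩ : ∃ b', b0 = b' + 1 := ⟨b0 - 1, by omega⟩
      have h1 : r b' ≤ r (b' + 1) := hr (by omega)
      rcases Nat.eq_or_lt_of_le (show a ≤ b' by omega) with h2 | h2
      · subst h2; omega
      · have := hbmin b' h2 (by omega); omega
    · apply stk_keep hb0.1.le
      intro k h1 h2
      rcases Nat.eq_or_lt_of_le h1 with h3 | h3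
      · subst h3; omega
      · have := hbmin k h3 h2; omega
  have hbb : b = b0 := by
    rcases lt_trichotomy b b0 with hl | hl | hl
    · exfalso
      obtain ⟨w, h1, h2⟩ := hT.exists_min hr hbn
      have h3 : r a < w := by
        by_contra hcon
        obtain ⟨-, H, h3, h4, h5⟩ := hmem.1 h1
        have h6 := (stk_old hr hZ hab.le (show stk r Z b H ≤ r a by omega)).2 a le_rfl hab
        have := hbmin b hab hl
        omega
      have h4 := (hT.sub _ _ h1).2
      obtain ⟨k, h5⟩ := hT.exists_nm hr (z := w) (by omega) (h4.trans (hr hbn))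
      have h6 := hT.nm_unique h5 h1
      have h7 : k ≠ b := by
        rintro rfl
        obtain ⟨_, u, h8, h9⟩ := h5
        exact h2 u h8 h9
      have h8 : (w, k) ∈ T' := tr h5.1 (by simp; omega)
      have := hT'.compat _ _ _ _ hq h8 (by omega) (by omega)
      omega
    · exact hl
    · exfalso
      have h1 : (e, b0) ∈ T' := tr heb (by simp; omega)
      have h2 := hT'.compat _ _ _ _ h1 hq hez hl
      have : r a ≤ r b0 := hr hb0.1.le
      omega
  subst hbb
  refine ⟨a, b, hab, hbn, hlt, hb0.2, hbmin, ?_⟩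
  intro k
  rcases Nat.lt_or_ge (n + 1) k with h1 | h1
  · rw [hZ.top k (by omega), hZ'.top k (by omega), if_neg (by omega)]
  · have := hZk k h1
    split_ifs at * <;> omega

/-! ## Pipes -/

noncomputable def ltr (n : ℕ) (P : Set (ℕ × ℕ)) (y x : ℕ) : Equiv.Perm ℕ :=
  if (x, y) ∈ P then 1 else Equiv.swap (n - y + x + 1) (n - y + x + 2)

noncomputable def rowU (n : ℕ) (P : Set (ℕ × ℕ)) (y : ℕ) : ℕ → Equiv.Perm ℕ
  | 0 => 1
  | x + 1 => rowU n P y x * ltr n P y x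

noncomputable def UU (r : ℕ → ℕ) (n : ℕ) (P : Set (ℕ × ℕ)) : ℕ → Equiv.Perm ℕ
  | 0 => 1
  | y + 1 => UU r n P y * rowU n P y (r y + 1)

theorem ltr_fix {n P y x p} (h : p ≠ n - y + x + 1) (h' : p ≠ n - y + x + 2) : ltr n P y x p = p := by
  unfold ltr
  split_ifs
  · rfl
  · exact Equiv.swap_apply_of_ne_of_ne h h'

theorem rowU_fix {n P y p} : ∀ x, (p ≤ n - y ∨ n - y + x + 2 ≤ p) → rowU n P y x p = p := by
  intro x
  induction x with
  | zero => intro _; rfl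
  | succ x ih =>
    intro h
    rw [rowU, Equiv.Perm.mul_apply, ltr_fix (by omega) (by omega)]
    exact ih (by omega)

theorem rowU_stable {n P y p x x'} (hx : x ≤ x') (hp : p ≤ n - y + x) :
    rowU n P y x' p = rowU n P y x p := by
  induction x', hx using Nat.le_induction with
  | base => rfl
  | succ x' hx ih => rw [rowU, Equiv.Perm.mul_apply, ltr_fix (by omega) (by omega), ih]

theorem UU_fix {r n P p} : ∀ y, y ≤ n + 1 → p + y ≤ n + 1 → UU r n P y p = p := by
  intro y
  induction y with
  | zero => intro _ _; rfl
  | succ y ih =>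
    intro h1 h2
    rw [UU, Equiv.Perm.mul_apply, rowU_fix _ (by omega)]
    exact ih (by omega) (by omega)

theorem UU_big {r n P p y} (hy : y ≤ n + 1) (hp : n + 1 < p + y) : n + 1 < UU r n P y p + y := by
  by_contra hcon
  have := UU_fix (r := r) (P := P) (p := UU r n P y p) y hy (by omega)
  have := (UU r n P y).injective this
  omega

/-- value in column `j` after row `y`, crossing -/
theorem UU_cross {r n P y j} (hj : j ≤ r y) (h : (j, y) ∉ P) :
    UU r n P (y + 1) (n - y + j + 1) = UU r n P y (n - y + j + 2) := by
  rw [UU, Equiv.Perm.mul_apply, rowU_stable (x := j + 1) (by omega) (by omega), rowU,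
    Equiv.Perm.mul_apply, ltr, if_neg h, Equiv.swap_apply_left, rowU_fix _ (by omega)]

theorem UU_elbow {r n P y j} (hj : j ≤ r y) (h : (j, y) ∈ P) :
    UU r n P (y + 1) (n - y + j + 1) = (UU r n P y * rowU n P y j) (n - y + j + 1) := by
  rw [UU, Equiv.Perm.mul_apply, rowU_stable (x := j + 1) (by omega) (by omega), rowU,
    Equiv.Perm.mul_apply, ltr, if_pos h]
  rfl

theorem carry_elbow {r n P y j} (h : (j, y) ∈ P) :
    (UU r n P y * rowU n P y (j + 1)) (n - y + j + 2) = UU r n P y (n - y + j + 2) := by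
  rw [Equiv.Perm.mul_apply, rowU, Equiv.Perm.mul_apply, ltr, if_pos h, Equiv.Perm.one_apply,
    rowU_fix _ (by omega)]

theorem carry_cross {r n P y x x'} (hx : x ≤ x') (h : ∀ j, x ≤ j → j < x' → (j, y) ∉ P) :
    (UU r n P y * rowU n P y x') (n - y + x' + 1) = (UU r n P y * rowU n P y x) (n - y + x + 1) := by
  induction x', hx using Nat.le_induction with
  | base => rfl
  | succ x' hx ih =>
    rw [← ih fun j h1 h2 => h j h1 (by omega), Equiv.Perm.mul_apply, rowU, Equiv.Perm.mul_apply, ltr,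
      if_neg (h x' hx (by omega))]
    have : n - y + (x' + 1) + 1 = n - y + x' + 2 := by omega
    rw [this, Equiv.swap_apply_right]
    rfl

/-! ### counting small values -/

noncomputable def cn (u : Equiv.Perm ℕ) (lo hi v : ℕ) : ℕ :=
  ∑ p ∈ Finset.Ico lo hi, if u p ≤ v then 1 else 0

theorem cn_mul {u g : Equiv.Perm ℕ} {lo hi v : ℕ} (hg : ∀ p, (p < lo ∨ hi ≤ p) → g p = p) :
    cn (u * g) lo hi v = cn u lo hi v := by
  unfold cn
  apply Finset.sum_equiv g
  · intro p
    simp only [Finset.mem_Ico]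
    constructor
    · intro h
      by_contra hcon
      have := g.injective (hg (g p) (by omega))
      omega
    · intro h
      by_contra hcon
      have := hg p (by omega)
      omega
  · intro p _; rfl

theorem cn_congr {u u' : Equiv.Perm ℕ} {lo hi v : ℕ} (h : ∀ p, lo ≤ p → p < hi → u p = u' p) :
    cn u lo hi v = cn u' lo hi v := by
  unfold cn
  apply Finset.sum_congr rfl
  intro p hp
  simp only [Finset.mem_Ico] at hp
  rw [h p hp.1 hp.2]

theorem cn_mono {u : Equiv.Perm ℕ} {lo hi hi' v : ℕ} (h : hi ≤ hi') : cn u lo hi v ≤ cn u lo hi' v := by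
  unfold cn
  apply Finset.sum_le_sum_of_subset
  exact Finset.Ico_subset_Ico le_rfl h

theorem cn_row {r n P y x v} (hy : y ≤ n) (hx : x ≤ r y) (hv : n + 1 - y ≤ v) :
    cn (UU r n P (y + 1)) (n - y + 1) (n - y + x + 2) v +
      (if (UU r n P y * rowU n P y (x + 1)) (n - y + x + 2) ≤ v then 1 else 0) =
    1 + cn (UU r n P y) (n - y + 2) (n - y + x + 3) v := by
  have h1 : cn (UU r n P (y + 1)) (n - y + 1) (n - y + x + 2) v =
      cn (UU r n P y * rowU n P y (x + 1)) (n - y + 1) (n - y + x + 2) v := by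
    apply cn_congr
    intro p h1 h2
    rw [UU, Equiv.Perm.mul_apply, rowU_stable (x := x + 1) (by omega) (by omega)]
    rfl
  have h2 : cn (UU r n P y * rowU n P y (x + 1)) (n - y + 1) (n - y + x + 3) v =
      cn (UU r n P y) (n - y + 1) (n - y + x + 3) v := by
    apply cn_mul
    intro p hp
    exact rowU_fix _ (by omega)
  rw [h1]
  have h3 : cn (UU r n P y * rowU n P y (x + 1)) (n - y + 1) (n - y + x + 3) v = _ :=
    Finset.sum_Ico_succ_top (show n - y + 1 ≤ n - y + x + 2 by omega) _
  have h4 : cn (UU r n P y) (n - y + 1) (n - y + x + 3) v = _ :=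
    Finset.sum_eq_sum_Ico_succ_bot (show n - y + 1 < n - y + x + 3 by omega) _
  rw [UU_fix y (by omega) (by omega), if_pos (by omega)] at h4
  rw [← h2, h3] at h4
  exact h4

theorem cn_row_mono {r n P y x v} (hy : y ≤ n) (hx : x ≤ r y) (hv : n + 1 - y ≤ v) :
    cn (UU r n P y) (n - y + 2) (n - y + x + 3) v ≤
      cn (UU r n P (y + 1)) (n - y + 1) (n - y + x + 2) v := by
  have := cn_row (P := P) hy hx hv
  split_ifs at this <;> omega

theorem cn_row_elbow {r n P y x v} (hy : y ≤ n) (hx : x ≤ r y) (hv : n + 1 - y ≤ v) (h : (x, y) ∈ P) :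
    cn (UU r n P (y + 1)) (n - y + 1) (n - y + x + 2) v =
    1 + cn (UU r n P y) (n - y + 2) (n - y + x + 2) v := by
  have h1 := cn_row (P := P) hy hx hv
  rw [carry_elbow h] at h1
  have h3 : cn (UU r n P y) (n - y + 2) (n - y + x + 3) v = _ :=
    Finset.sum_Ico_succ_top (show n - y + 2 ≤ n - y + x + 2 by omega) _
  rw [h3] at h1
  unfold cn at *
  omega

theorem cn_up {r n P x v y y'} (hr : Monotone r) (hyy : y ≤ y') (hy' : y' ≤ n + 1) (hx : x ≤ r y)
    (hv : n + 1 - y ≤ v) :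
    cn (UU r n P y) (n + 2 - y) (n + 3 - y + x) v ≤ cn (UU r n P y') (n + 2 - y') (n + 3 - y' + x) v := by
  induction y', hyy using Nat.le_induction with
  | base => rfl
  | succ k hk ih =>
    have h1 := ih (by omega)
    have h2 := cn_row_mono (P := P) (r := r) (n := n) (y := k) (x := x) (v := v) (by omega)
      (hx.trans (hr hk)) (by omega)
    rw [show n - k + 2 = n + 2 - k by omega, show n - k + x + 3 = n + 3 - k + x by omega,
      show n - k + 1 = n + 2 - (k + 1) by omega,
      show n - k + x + 2 = n + 3 - (k + 1) + x by omega] at h2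
    exact h1.trans h2

theorem cn_two {r n P x₁ y₁ x₂ y₂} (hr : Monotone r) (h1 : (x₁, y₁) ∈ P) (h2 : (x₂, y₂) ∈ P)
    (hx : x₁ < x₂) (hy : y₁ < y₂) (hn : y₂ ≤ n) (hx2 : x₂ ≤ r y₁) :
    2 ≤ cn (UU r n P (n + 1)) 1 (x₂ + 2) (n + 1 - y₁) := by
  have e1 := cn_row_elbow (P := P) (r := r) (n := n) (v := n + 1 - y₁) (show y₁ ≤ n by omega)
    (show x₁ ≤ r y₁ by omega) le_rfl h1
  have e2 := cn_row_elbow (P := P) (r := r) (n := n) (v := n + 1 - y₁) (show y₂ ≤ n by omega)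
    (hx2.trans (hr hy.le)) (by omega) h2
  have m0 : r y₁ ≤ r (y₁ + 1) := hr (by omega)
  have m1 := cn_up (n := n) (P := P) (v := n + 1 - y₁) (x := x₁) hr (show y₁ + 1 ≤ y₂ by omega) (by omega)
    (by omega) (by omega)
  have m2 := cn_up (n := n) (P := P) (v := n + 1 - y₁) (x := x₂) hr (show y₂ + 1 ≤ n + 1 by omega) le_rfl
    (hx2.trans (hr (by omega))) (by omega)
  have m3 := cn_mono (u := UU r n P y₂) (lo := n + 2 - y₂) (v := n + 1 - y₁)
    (show n + 3 - y₂ + x₁ ≤ n + 2 - y₂ + x₂ by omega)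
  rw [show n - y₁ + 1 = n + 2 - (y₁ + 1) by omega,
    show n - y₁ + x₁ + 2 = n + 3 - (y₁ + 1) + x₁ by omega] at e1
  rw [show n - y₂ + 1 = n + 2 - (y₂ + 1) by omega,
    show n - y₂ + x₂ + 2 = n + 3 - (y₂ + 1) + x₂ by omega, show n - y₂ + 2 = n + 2 - y₂ by omega,
    show n + 3 - (y₂ + 1) + x₂ = n + 2 - y₂ + x₂ by omega] at e2
  rw [show n + 3 - (y₂ + 1) + x₂ = n + 2 - y₂ + x₂ by omega,
    show n + 2 - (n + 1) = 1 by omega, show n + 3 - (n + 1) + x₂ = x₂ + 2 by omega] at m2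
  omega

theorem stk_zero {r n Z} (hZ : IsPth r n Z) : ∀ y, stk r Z y 0 = 0 := by
  intro y
  induction y with
  | zero => rfl
  | succ y ih =>
    have := hZ.le y
    rw [stk, if_neg (by omega), ih]

theorem tree_inv {r n Z} (hr : Monotone r) (hZ : IsPth r n Z) {y₁ y : ℕ} (hy : y₁ + 1 ≤ y)
    (hyn : y ≤ n + 1) :
    ∃ G, (∀ k, y₁ ≤ k → k < y → G + Z (k + 1) ≤ r k) ∧
      (∃ k, y₁ ≤ k ∧ k < y ∧ G + Z (k + 1) = r k) ∧
      UU r n (treeOf r n Z) y (n + 2 - y + stk r Z y₁ G) ≤ n + 1 - y₁ ∧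
      cn (UU r n (treeOf r n Z) y) (n + 2 - y) (n + 3 - y + r y₁) (n + 1 - y₁) ≤ 1 := by
  have hmem : ∀ {x y : ℕ}, (x, y) ∈ (treeOf r n Z : Set (ℕ × ℕ)) ↔ _ :=
    fun {x y} => (Finset.mem_coe.trans (mem_treeOf hr hZ (x := x) (y := y)))
  set P : Set (ℕ × ℕ) := (treeOf r n Z : Set (ℕ × ℕ)) with hP
  -- the first elbow in a row
  have first : ∀ y G, y ≤ n → G + Z (y + 1) = r y →
      UU r n P (y + 1) (n + 2 - (y + 1) + stk r Z y G) = n + 1 - y := by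
    intro y G hyn hG
    have h0 := hZ.mono (show y ≤ y + 1 by omega)
    have hel : (stk r Z y G, y) ∈ P := hmem.2 ⟨hyn, G, by omega, by omega, rfl⟩
    have hle := stk_le hr hZ y G (by omega)
    rw [show n + 2 - (y + 1) + stk r Z y G = n - y + stk r Z y G + 1 by omega, UU_elbow hle hel,
      carry_cross (x := 0) (by omega)]
    · simp only [rowU, mul_one, add_zero]
      rw [UU_fix y (by omega) (by omega)]
      omega
    · intro j _ hj hjP
      obtain ⟨-, H, h1, h2, h3⟩ := hmem.1 hjP
      rcases Nat.eq_or_lt_of_le (show G ≤ H by omega) with h4 | h4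
      · subst h4; omega
      · have := stk_lt hr hZ y G H h4 h2
        omega
  induction y, hy using Nat.le_induction with
  | base =>
    have h0 := hZ.le y₁
    refine ⟨r y₁ - Z (y₁ + 1), ?_, ⟨y₁, le_rfl, by omega, by omega⟩, ?_, ?_⟩
    · intro k h1 h2
      obtain rfl : k = y₁ := by omega
      omega
    · exact (first y₁ _ (by omega) (by omega)).le
    · have h1 := cn_row (P := P) (r := r) (n := n) (v := n + 1 - y₁) (show y₁ ≤ n by omega) le_rfl le_rfl
      have h2 : cn (UU r n P y₁) (n - y₁ + 2) (n - y₁ + r y₁ + 3) (n + 1 - y₁) = 0 := by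
        apply Finset.sum_eq_zero
        intro p hp
        simp only [Finset.mem_Ico] at hp
        have := UU_big (r := r) (n := n) (P := P) (p := p) (y := y₁) (by omega) (by omega)
        rw [if_neg (by omega)]
      rw [h2] at h1
      rw [show n - y₁ + 1 = n + 2 - (y₁ + 1) by omega,
        show n - y₁ + r y₁ + 2 = n + 3 - (y₁ + 1) + r y₁ by omega] at h1
      omega
  | succ y hy ih =>
    obtain ⟨G, g1, ⟨k₀, g2, g3, g4⟩, g5, g6⟩ := ih (by omega)
    have hryy : r y₁ ≤ r y := hr (by omega)
    have hrow := cn_row (P := P) (r := r) (n := n) (v := n + 1 - y₁) (show y ≤ n by omega) hryy (by omega)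
    have hold : ∀ x, x ≤ r y₁ → (x, y) ∈ P → ∃ H, r y ≤ H + Z (y + 1) ∧ H + Z y ≤ r y ∧
        stk r Z y H = x ∧ H ≤ G := by
      intro x hx hxP
      obtain ⟨-, H, h1, h2, h3⟩ := hmem.1 hxP
      have h4 := (stk_old hr hZ (show y₁ ≤ y by omega) (show stk r Z y H ≤ r y₁ by omega)).2 k₀ g2 g3
      exact ⟨H, h1, h2, h3, by omega⟩
    have hkeep : ∀ H, H ≤ G → stk r Z y H = stk r Z y₁ H := by
      intro H hH
      apply stk_keep (by omega)
      intro k h1 h2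
      have := g1 k h1 h2
      omega
    have hGy : G + Z y ≤ r y := by
      have h1 := g1 (y - 1) (by omega) (by omega)
      rw [show y - 1 + 1 = y by omega] at h1
      exact h1.trans (hr (by omega))
    have hzle : stk r Z y₁ G ≤ r y₁ := by
      apply stk_le hr hZ
      have := g1 y₁ le_rfl (by omega)
      have := hZ.mono (show y₁ ≤ y₁ + 1 by omega)
      omega
    rw [show n - y + 1 = n + 2 - (y + 1) by omega,
      show n - y + r y₁ + 2 = n + 3 - (y + 1) + r y₁ by omega,
      show n - y + 2 = n + 2 - y by omega,
      show n - y + r y₁ + 3 = n + 3 - y + r y₁ by omega] at hrow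
    have hcar : n + 3 - (y + 1) + r y₁ = n - y + (r y₁ + 1) + 1 := by omega
    by_cases hcase : r y ≤ G + Z (y + 1)
    · -- row y reaches the small pipe
      have hly := hZ.le y
      refine ⟨r y - Z (y + 1), ?_, ⟨y, by omega, by omega, by omega⟩, ?_, ?_⟩
      · intro k h1 h2
        rcases Nat.lt_or_ge k y with h3 | h3
        · have := g1 k h1 h3
          omega
        · obtain rfl : k = y := by omega
          omega
      · rw [← hkeep _ (by omega), first y _ (by omega) (by omega)]
        omega
      · have hel : (stk r Z y₁ G, y) ∈ P := hmem.2 ⟨by omega, G, hcase, hGy, hkeep G le_rfl⟩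
        rw [hcar, carry_cross (x := stk r Z y₁ G + 1) (by omega)] at hrow
        · rw [show n - y + (stk r Z y₁ G + 1) + 1 = n - y + stk r Z y₁ G + 2 by omega,
            carry_elbow hel, show n - y + stk r Z y₁ G + 2 = n + 2 - y + stk r Z y₁ G by omega,
            if_pos g5, ← hcar] at hrow
          omega
        · intro j h1 h2 h3
          obtain ⟨H, h4, h5, h6, h7⟩ := hold j (by omega) h3
          have h8 := hkeep G le_rfl
          rcases Nat.eq_or_lt_of_le h7 with h9 | h9
          · subst h9; omega
          · have := stk_lt hr hZ y H G h9 hGy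
            omega
    · have hno : ∀ x, x ≤ r y₁ → (x, y) ∉ P := by
        intro x hx hxP
        obtain ⟨H, h4, h5, h6, h7⟩ := hold x hx hxP
        omega
      refine ⟨G, ?_, ⟨k₀, g2, by omega, g4⟩, ?_, ?_⟩
      · intro k h1 h2
        rcases Nat.lt_or_ge k y with h3 | h3
        · exact g1 k h1 h3
        · obtain rfl : k = y := by omega
          omega
      · rw [show n + 2 - (y + 1) + stk r Z y₁ G = n - y + stk r Z y₁ G + 1 by omega,
          UU_cross (by omega) (hno _ hzle),
          show n - y + stk r Z y₁ G + 2 = n + 2 - y + stk r Z y₁ G by omega]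
        exact g5
      · rw [hcar, carry_cross (x := 0) (by omega) (fun j _ h2 => hno j (by omega))] at hrow
        simp only [rowU, mul_one, add_zero] at hrow
        rw [UU_fix y (by omega) (by omega), if_pos (by omega), ← hcar] at hrow
        omega

theorem tree_final {r n Z} (hr : Monotone r) (hZ : IsPth r n Z) {y : ℕ} (hy : y ≤ n) :
    UU r n (treeOf r n Z) (n + 1) 1 = 1 ∧
      cn (UU r n (treeOf r n Z) (n + 1)) 1 (r y + 2) (n + 1 - y) ≤ 1 := by
  have key : ∀ y ≤ n, UU r n (treeOf r n Z) (n + 1) 1 ≤ n + 1 - y ∧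
      cn (UU r n (treeOf r n Z) (n + 1)) 1 (r y + 2) (n + 1 - y) ≤ 1 := by
    intro y hy
    obtain ⟨G, g1, -, g3, g4⟩ := tree_inv hr hZ (show y + 1 ≤ n + 1 by omega) le_rfl
    have h1 := g1 n hy (by omega)
    have h2 := hZ.top (n + 1) (by omega)
    obtain rfl : G = 0 := by omega
    rw [stk_zero hZ] at g3
    rw [show n + 2 - (n + 1) = 1 by omega] at g3 g4
    rw [show n + 3 - (n + 1) + r y = r y + 2 by omega] at g4
    exact ⟨g3, g4⟩
  refine ⟨?_, (key y hy).2⟩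
  have h1 := (key n le_rfl).1
  have h2 := UU_fix (r := r) (n := n) (P := treeOf r n Z) (p := 0) (n + 1) le_rfl (by omega)
  have h3 : UU r n (treeOf r n Z) (n + 1) 1 ≠ 0 := by
    intro h
    have := (UU r n (treeOf r n Z) (n + 1)).injective (h.trans h2.symm)
    omega
  omega

/-! ## Inversions -/

def InvS (u : Equiv.Perm ℕ) : Set (ℕ × ℕ) := {q : ℕ × ℕ | q.1 < q.2 ∧ u q.2 < u q.1}

def InvB (u : Equiv.Perm ℕ) (k : ℕ) : Prop := (InvS u).Finite ∧ (InvS u).ncard ≤ k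

theorem invB_one : InvB 1 0 := by
  have : InvS 1 = ∅ := by
    apply Set.eq_empty_of_forall_notMem
    rintro q ⟨h1, h2⟩
    simp only [Equiv.Perm.one_apply] at h2
    omega
  simp [InvB, this]

theorem invB_swap {u : Equiv.Perm ℕ} {k : ℕ} (i : ℕ) (h : InvB u k) :
    InvB (u * Equiv.swap i (i + 1)) (k + 1) := by
  have hsub : InvS (u * Equiv.swap i (i + 1)) ⊆
      insert (i, i + 1) ((Prod.map (Equiv.swap i (i + 1)) (Equiv.swap i (i + 1))) '' InvS u) := by
    rintro ⟨a, b⟩ ⟨h1, h2⟩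
    simp only [Equiv.Perm.mul_apply] at h1 h2
    by_cases hlt : Equiv.swap i (i + 1) a < Equiv.swap i (i + 1) b
    · right
      exact ⟨(_, _), ⟨hlt, h2⟩, by simp [Prod.map]⟩
    · left
      simp only [Equiv.swap_apply_def] at hlt
      simp only [Prod.mk.injEq]
      split_ifs at hlt <;> omega
  have hf : ((Prod.map (Equiv.swap i (i + 1)) (Equiv.swap i (i + 1))) '' InvS u).Finite := h.1.image _
  refine ⟨(hf.insert _).subset hsub, ?_⟩
  refine (Set.ncard_le_ncard hsub (hf.insert _)).trans ((Set.ncard_insert_le _ _).trans ?_)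
  have := Set.ncard_image_le (f := (Prod.map (Equiv.swap i (i + 1)) (Equiv.swap i (i + 1)))) h.1
  have := h.2
  omega

noncomputable def crc (P : Set (ℕ × ℕ)) (y x : ℕ) : ℕ := ((Finset.range x).filter fun j => (j, y) ∉ P).card

theorem invB_row {u : Equiv.Perm ℕ} {k n P y} (h : InvB u k) :
    ∀ x, InvB (u * rowU n P y x) (k + crc P y x) := by
  intro x
  induction x with
  | zero => simpa [rowU, crc] using h
  | succ x ih =>
    rw [rowU, ← mul_assoc, ltr]
    split_ifs with hP
    · have : crc P y (x + 1) = crc P y x := by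
        unfold crc
        rw [Finset.range_add_one, Finset.filter_insert, if_neg (by simpa using hP)]
      rw [this, mul_one]; exact ih
    · have : crc P y (x + 1) = crc P y x + 1 := by
        unfold crc
        rw [Finset.range_add_one, Finset.filter_insert, if_pos hP, Finset.card_insert_of_notMem (by simp)]
      rw [this, ← add_assoc]
      exact invB_swap _ ih

theorem invB_UU {r n P} : ∀ y, InvB (UU r n P y) (∑ k ∈ Finset.range y, crc P k (r k + 1)) := by
  intro y
  induction y with
  | zero => simpa [UU] using invB_one
  | succ y ih => rw [UU, Finset.sum_range_succ]; exact invB_row ih _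

theorem crc_rc {r : ℕ → ℕ} {n : ℕ} {S : Finset (ℕ × ℕ)} (hS : ∀ x y, (x, y) ∈ S → y ≤ n ∧ x ≤ r y) (y : ℕ) :
    crc (S : Finset (ℕ × ℕ)) y (r y + 1) + rc S y = r y + 1 := by
  rw [← row_card, crc]
  have h := Finset.card_filter_add_card_filter_not (s := Finset.range (r y + 1)) (fun j => (j, y) ∈ S)
  rw [Finset.card_range] at h
  have : (S.filter fun p => p.2 = y).image Prod.fst = (Finset.range (r y + 1)).filter fun j => (j, y) ∈ S := by
    ext x
    rw [mem_row_iff, Finset.mem_filter, Finset.mem_range]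
    exact ⟨fun h => ⟨by have := (hS _ _ h).2; omega, h⟩, fun h => h.2⟩
  rw [this]
  simp only [Finset.mem_coe]
  omega

theorem crc_sum {r n Z} (hr : Monotone r) (hZ : IsPth r n Z) :
    ∑ k ∈ Finset.range (n + 1), crc (treeOf r n Z : Finset (ℕ × ℕ)) k (r k + 1) = ∑ k ∈ Finset.range n, r k := by
  have key : ∀ y ≤ n + 1, ∑ k ∈ Finset.range y, crc (treeOf r n Z : Finset (ℕ × ℕ)) k (r k + 1) + Z y =
      ∑ k ∈ Finset.range y, r k := by
    intro y
    induction y with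
    | zero => simp [hZ.z0]
    | succ y ih =>
      intro hy
      have h1 := ih (by omega)
      have h2 := crc_rc (treeOf_isTree hr hZ).sub y
      have h3 := treeOf_rc hr hZ (show y ≤ n by omega)
      rw [Finset.sum_range_succ, Finset.sum_range_succ]
      omega
  have := key (n + 1) le_rfl
  rw [hZ.top (n + 1) (by omega), Finset.sum_range_succ (fun k => r k)] at this
  omega

/-! ## Rothe diagram -/

def Rothe (u : Equiv.Perm ℕ) : Set (ℕ × ℕ) := {q | q.2 < u q.1 ∧ q.1 < u.symm q.2}

theorem rothe_image (u : Equiv.Perm ℕ) : Rothe u = (fun q : ℕ × ℕ => (q.1, u q.2)) '' InvS u := by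
  ext ⟨p, v⟩
  constructor
  · rintro ⟨h1, h2⟩
    exact ⟨(p, u.symm v), ⟨h2, by simpa using h1⟩, by simp⟩
  · rintro ⟨⟨a, b⟩, ⟨h1, h2⟩, h3⟩
    simp only [Prod.mk.injEq] at h3 h1 h2
    obtain ⟨rfl, rfl⟩ := h3
    exact ⟨h2, by simpa using h1⟩

theorem rothe_card (u : Equiv.Perm ℕ) : (Rothe u).ncard = (InvS u).ncard := by
  rw [rothe_image]
  apply Set.ncard_image_of_injective
  rintro ⟨a, b⟩ ⟨c, d⟩ h
  simpa using h

theorem rothe_inj {u u' : Equiv.Perm ℕ} (h : Rothe u = Rothe u') : u = u' := by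
  have aux : ∀ {u u' : Equiv.Perm ℕ}, Rothe u = Rothe u' → ∀ p, (∀ q < p, u q = u' q) → ¬ u p < u' p := by
    intro u u' h p hq hlt
    have : (p, u p) ∈ Rothe u' := by
      refine ⟨hlt, ?_⟩
      by_contra hle
      simp only [not_lt] at hle
      rcases hle.lt_or_eq with h1 | h1
      · have := hq _ h1
        rw [Equiv.apply_symm_apply] at this
        have := u.injective this
        omega
      · have : u' p = u p := ((Equiv.symm_apply_eq u').1 h1).symm
        omega
    rw [← h] at this
    have := this.1
    simp at this
  suffices key : ∀ p, u p = u' p from Equiv.ext key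
  intro p
  induction p using Nat.strong_induction_on with
  | _ p ih =>
    have h1 := aux h p ih
    have h2 := aux h.symm p fun q hq => (ih q hq).symm
    omega

def D0 (r : ℕ → ℕ) (n : ℕ) : Set (ℕ × ℕ) := {q | ∃ y < n, q.2 = n + 1 - y ∧ 2 ≤ q.1 ∧ q.1 ≤ r y + 1}

theorem D0_eq (r : ℕ → ℕ) (n : ℕ) : D0 r n = (((Finset.range n).sigma fun y => Finset.range (r y)).image
    (fun s => (s.2 + 2, n + 1 - s.1)) : Finset (ℕ × ℕ)) := by
  ext ⟨p, v⟩
  simp only [D0, Set.mem_ofPred_eq, Finset.coe_image, Set.mem_image, Finset.mem_coe, Finset.mem_sigma,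
    Finset.mem_range, Prod.mk.injEq]
  constructor
  · rintro ⟨y, h1, h2, h3, h4⟩
    exact ⟨⟨y, p - 2⟩, ⟨h1, by simp only; omega⟩, by simp only; omega, h2.symm⟩
  · rintro ⟨⟨y, x⟩, ⟨h1, h2⟩, h3, h4⟩
    simp only at *
    exact ⟨y, h1, h4.symm, by omega, by omega⟩

theorem D0_card (r : ℕ → ℕ) (n : ℕ) : (D0 r n).ncard = ∑ k ∈ Finset.range n, r k := by
  rw [D0_eq, Set.ncard_coe_finset, Finset.card_image_of_injOn, Finset.card_sigma]
  · simp
  · rintro ⟨a, b⟩ h1 ⟨c, d⟩ h2 h3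
    simp only [Finset.coe_sigma, Set.mem_sigma_iff, Finset.mem_coe, Finset.mem_range, Prod.mk.injEq] at h1 h2 h3
    obtain rfl : a = c := by omega
    obtain rfl : b = d := by omega
    rfl

theorem tree_rothe {r n Z} (hr : Monotone r) (hZ : IsPth r n Z) :
    Rothe (UU r n (treeOf r n Z : Finset (ℕ × ℕ)) (n + 1)) = D0 r n ∧
    lenInv (UU r n (treeOf r n Z : Finset (ℕ × ℕ)) (n + 1)) = ∑ k ∈ Finset.range n, r k := by
  set u := UU r n (treeOf r n Z : Finset (ℕ × ℕ)) (n + 1) with hu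
  have hB := invB_UU (r := r) (n := n) (P := (treeOf r n Z : Finset (ℕ × ℕ))) (n + 1)
  rw [crc_sum hr hZ, ← hu] at hB
  have u0 : u 0 = 0 := UU_fix _ le_rfl (by omega)
  have u1 : u 1 = 1 := (tree_final hr hZ le_rfl).1
  have hsub : D0 r n ⊆ Rothe u := by
    rintro ⟨p, v⟩ ⟨y, hy, h1, h2, h3⟩
    simp only at h1 h2 h3
    have hc := (tree_final hr hZ hy.le).2
    rw [← hu] at hc
    have big : ∀ q, 2 ≤ q → q ≤ r y + 1 → n + 1 - y < u q := by
      intro q q1 q2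
      by_contra hle
      have : 2 ≤ cn u 1 (r y + 2) (n + 1 - y) := by
        have hss : ({1, q} : Finset ℕ) ⊆ Finset.Ico 1 (r y + 2) := by
          intro a; simp only [Finset.mem_insert, Finset.mem_singleton, Finset.mem_Ico]; omega
        have := Finset.sum_le_sum_of_subset (f := fun p => if u p ≤ n + 1 - y then 1 else 0) hss
        rw [Finset.sum_pair (by omega), if_pos (by omega), if_pos (by omega)] at this
        exact this
      omega
    refine ⟨by simp only; rw [h1]; exact big p h2 h3, ?_⟩
    simp only
    by_contra hle
    have e : u (u.symm v) = v := u.apply_symm_apply v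
    rcases Nat.lt_or_ge (u.symm v) 2 with h4 | h4
    · interval_cases h : u.symm v <;> omega
    · have := big _ h4 (by omega)
      omega
  have hfin : (Rothe u).Finite := by rw [rothe_image]; exact hB.1.image _
  have heq := Set.eq_of_subset_of_ncard_le hsub (by rw [D0_card, rothe_card]; exact hB.2) hfin
  refine ⟨heq.symm, ?_⟩
  change (InvS u).ncard = _
  rw [← rothe_card, ← heq, D0_card]

theorem tree_UU_eq {r n Z Z'} (hr : Monotone r) (hZ : IsPth r n Z) (hZ' : IsPth r n Z') :
    UU r n (treeOf r n Z : Finset (ℕ × ℕ)) (n + 1) = UU r n (treeOf r n Z' : Finset (ℕ × ℕ)) (n + 1) :=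
  rothe_inj ((tree_rothe hr hZ).1.trans (tree_rothe hr hZ').1.symm)

theorem isTree_of_UU {r n Z} {S : Finset (ℕ × ℕ)} (hr : Monotone r) (hZ : IsPth r n Z)
    (hS : ∀ x y, (x, y) ∈ S → y ≤ n ∧ x ≤ r y) (hc : S.card = r n + n + 1)
    (h : UU r n (S : Finset (ℕ × ℕ)) (n + 1) = UU r n (treeOf r n Z : Finset (ℕ × ℕ)) (n + 1)) : IsTree r n S := by
  refine ⟨hS, ?_, hc⟩
  intro x y x' y' h1 h2 hx hy
  by_contra hle
  have a := cn_two (P := (S : Set (ℕ × ℕ))) hr h1 h2 hx hy (hS _ _ h2).1 (by omega)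
  have b := (tree_final hr hZ (show y ≤ n by have := (hS _ _ h2).1; omega)).2
  rw [h] at a
  have := cn_mono (u := UU r n (treeOf r n Z : Finset (ℕ × ℕ)) (n + 1)) (lo := 1) (v := n + 1 - y)
    (show x' + 2 ≤ r y + 2 by omega)
  omega

/-! ## Lattice paths as sequences -/

/-- abscissa of the last point at height `y` -/
def lastX : List Bool → ℕ → ℕ
  | [], _ => 0
  | false :: l, y => lastX l y + 1
  | true :: _, 0 => 0
  | true :: l, y + 1 => lastX l y

def Zof (μ : List Bool) : ℕ → ℕ
  | 0 => 0
  | y + 1 => lastX μ y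

theorem lastX_mono (l : List Bool) : Monotone (lastX l) := by
  apply monotone_nat_of_le_succ
  induction l with
  | nil => intro y; simp [lastX]
  | cons b l ih =>
    intro y
    cases b
    · simpa [lastX] using ih y
    · cases y with
      | zero => simp [lastX]
      | succ y => simpa [lastX] using ih y

theorem lastX_top (l : List Bool) : ∀ y, l.count true ≤ y → lastX l y = l.count false := by
  induction l with
  | nil => intro y _; simp [lastX]
  | cons b l ih =>
    intro y h
    cases b
    · simp at h; simp [lastX, ih y h]
    · cases y with
      | zero => simp at h
      | succ y => simp at h; simp [lastX, ih y h]

theorem lastX_le (l : List Bool) (y : ℕ) : lastX l y ≤ l.count false := by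
  rw [← lastX_top l (max y (l.count true)) (le_max_right _ _)]
  exact lastX_mono l (le_max_left _ _)

theorem Zof_mono (l : List Bool) : Monotone (Zof l) := by
  apply monotone_nat_of_le_succ
  intro y
  cases y with
  | zero => simp [Zof]
  | succ y => exact lastX_mono l (by omega)

theorem lastX_append (A B : List Bool) (y : ℕ) : lastX (A ++ B) y =
    if y < A.count true then lastX A y else A.count false + lastX B (y - A.count true) := by
  induction A generalizing y with
  | nil => simp
  | cons b A ih =>
    cases b
    · simp only [List.cons_append, lastX, ih]
      simp
      split_ifs <;> omega
    · cases y with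
      | zero => simp [lastX]
      | succ y =>
        simp only [List.cons_append, lastX, ih]
        simp

theorem height_iff (ν : List Bool) : ∀ x y, x ≤ ν.count false → (heightAt ν x ≤ y ↔ x ≤ lastX ν y) := by
  induction ν with
  | nil => intro x y h; simp at h; subst h; simp [heightAt]
  | cons b l ih =>
    intro x y h
    cases x with
    | zero => simp [heightAt]
    | succ x =>
      cases b
      · simp at h
        simp [heightAt, lastX, ih x y h]
      · simp at h
        cases y with
        | zero => simp [heightAt, lastX]
        | succ y => simp [heightAt, lastX, ih (x + 1) y h]

theorem mem_APts {ν : List Bool} {x y : ℕ} : (x, y) ∈ APts ν ↔ y ≤ northSteps ν ∧ x ≤ lastX ν y := by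
  constructor
  · rintro ⟨h1, h2, h3⟩
    exact ⟨h3, (height_iff ν x y h1).1 h2⟩
  · rintro ⟨h1, h2⟩
    have h3 : x ≤ eastSteps ν := h2.trans (lastX_le ν y)
    exact ⟨h3, (height_iff ν x y h3).2 h2, h1⟩

theorem horiz_eq {ν : List Bool} {x y : ℕ} (h : (x, y) ∈ APts ν) : horiz ν (x, y) = lastX ν y - x := by
  rw [mem_APts] at h
  have : {k | (x + k, y) ∈ APts ν} = Set.Iic (lastX ν y - x) := by
    ext k
    simp only [Set.mem_ofPred_eq, mem_APts, Set.mem_Iic]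
    omega
  simp only [horiz]
  rw [this, csSup_Iic]

theorem pointAt_of {μ : List Bool} : ∀ {x y : ℕ}, y ≤ μ.count true → Zof μ y ≤ x → x ≤ lastX μ y →
    pointAt μ (x + y) = (x, y) := by
  induction μ with
  | nil => intro x y h1 h2 h3; simp [lastX] at h1 h3; subst h1 h3; simp [pointAt]
  | cons b l ih =>
    intro x y h1 h2 h3
    cases b
    · simp at h1
      cases x with
      | zero =>
        cases y with
        | zero => simp [pointAt]
        | succ y => simp [Zof, lastX] at h2
      | succ x =>
        have : Zof l y ≤ x := by
          cases y with
          | zero => simp [Zof]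
          | succ y => simpa [Zof, lastX] using h2
        have := ih h1 this (by simpa [lastX] using h3)
        simp only [pointAt, Prod.mk.injEq] at this ⊢
        rw [show x + 1 + y = x + y + 1 by omega, List.take_succ_cons]
        simp [this.1, this.2]
    · simp at h1
      cases y with
      | zero => simp [lastX] at h3; subst h3; simp [pointAt]
      | succ y =>
        have h2' : Zof l y ≤ x := by
          cases y with
          | zero => simp [Zof]
          | succ y => simpa [Zof, lastX] using h2
        have := ih (by simpa using h1) h2' (by simpa [lastX] using h3)
        simp only [pointAt, Prod.mk.injEq] at this ⊢
        rw [← add_assoc, List.take_succ_cons]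
        simp [this.1, this.2]

theorem count_len (l : List Bool) : l.count false + l.count true = l.length := by
  induction l with
  | nil => rfl
  | cons b l ih => cases b <;> simp <;> omega

theorem pointAt_spec {μ : List Bool} {i x y : ℕ} (hi : i ≤ μ.length) (h : pointAt μ i = (x, y)) :
    x + y = i ∧ y ≤ μ.count true ∧ Zof μ y ≤ x ∧ x ≤ lastX μ y := by
  simp only [pointAt, Prod.mk.injEq] at h
  obtain ⟨rfl, rfl⟩ := h
  have hap := lastX_append (μ.take i) (μ.drop i)
  rw [List.take_append_drop] at hap
  refine ⟨?_, ?_, ?_, ?_⟩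
  · rw [count_len]; simp [hi]
  · exact (List.take_sublist i μ).count_le _
  · cases hc : (μ.take i).count true with
    | zero => simp [Zof]
    | succ y =>
      simp only [Zof]
      rw [hap, if_pos (by omega)]
      exact lastX_le _ _
  · rw [hap, if_neg (by omega)]; omega

theorem isNuPath_iff {ν μ : List Bool} : IsNuPath ν μ ↔
    eastSteps μ = eastSteps ν ∧ northSteps μ = northSteps ν ∧ IsPth (lastX ν) (northSteps ν) (Zof μ) := by
  unfold IsNuPath
  refine and_congr_right fun hE => and_congr_right fun hN => ?_
  have hN' : μ.count true = ν.count true := hN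
  have hE' : μ.count false = ν.count false := hE
  constructor
  · intro h
    refine ⟨rfl, Zof_mono μ, ?_, ?_⟩
    · intro y
      simp only [Zof]
      rcases le_or_gt y (μ.count true) with hy | hy
      · have h1 := pointAt_of hy (Zof_mono μ (show y ≤ y + 1 by omega)) le_rfl
        simp only [Zof] at h1
        have h2 := h (lastX μ y + y) (by rw [← count_len]; have := lastX_le μ y; omega)
        rw [h1, mem_APts] at h2
        exact h2.2
      · rw [lastX_top μ y hy.le, lastX_top ν y (by omega)]; omega
    · intro y hy
      cases y with
      | zero => omega
      | succ y =>
        simp only [northSteps] at hy ⊢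
        simp only [Zof]
        rw [lastX_top μ y (by omega), lastX_top ν _ le_rfl]; omega
  · intro h i hi
    obtain ⟨⟨x, y⟩, hp⟩ : ∃ p, pointAt μ i = p := ⟨_, rfl⟩
    obtain ⟨h1, h2, h3, h4⟩ := pointAt_spec hi hp
    rw [hp, mem_APts]
    exact ⟨by simp only [northSteps]; omega, h4.trans (h.le y)⟩

theorem exists_path : ∀ (n : ℕ) (X : ℕ → ℕ) (M : ℕ), Monotone X → (∀ y, n ≤ y → X y = M) →
    ∃ μ : List Bool, μ.count false = M ∧ μ.count true = n ∧ ∀ y, lastX μ y = X y := by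
  have hrep : ∀ k l y, lastX (List.replicate k false ++ l) y = k + lastX l y := by
    intro k l y
    rw [lastX_append]
    simp [List.count_replicate]
  intro n
  induction n with
  | zero =>
    intro X M hX h
    refine ⟨List.replicate M false ++ [], by simp, by simp [List.count_replicate], ?_⟩
    intro y
    rw [hrep, h y (by omega)]; simp [lastX]
  | succ n ih =>
    intro X M hX h
    obtain ⟨μ, h1, h2, h3⟩ := ih (fun y => X (y + 1) - X 0) (M - X 0)
      (fun a b hab => Nat.sub_le_sub_right (hX (by omega)) _) (fun y hy => by rw [h (y + 1) (by omega)])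
    have hM : X 0 ≤ M := by rw [← h (n + 1) le_rfl]; exact hX (by omega)
    refine ⟨List.replicate (X 0) false ++ true :: μ, ?_, ?_, ?_⟩
    · simp [h1]; omega
    · simp [h2, List.count_replicate]
    · intro y
      rw [hrep]
      cases y with
      | zero => simp [lastX]
      | succ y =>
        simp only [lastX, h3]
        have := hX (show 0 ≤ y + 1 by omega)
        omega

theorem path_inj : ∀ {μ μ' : List Bool}, μ.count true = μ'.count true → (∀ y, lastX μ y = lastX μ' y) →
    μ = μ' := by
  intro μ
  induction μ with
  | nil =>
    intro μ' h1 h2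
    cases μ' with
    | nil => rfl
    | cons b l =>
      cases b
      · have := h2 0; simp [lastX] at this
      · simp at h1
  | cons b l ih =>
    intro μ' h1 h2
    cases μ' with
    | nil =>
      cases b
      · have := h2 0; simp [lastX] at this
      · simp at h1
    | cons b' l' =>
      cases b <;> cases b'
      · rw [ih (by simpa using h1) (fun y => by simpa [lastX] using h2 y)]
      · have := h2 0; simp [lastX] at this
      · have := h2 0; simp [lastX] at this
      · rw [ih (by simpa using h1) (fun y => by simpa [lastX] using h2 (y + 1))]

theorem Zof_swap (A B C : List Bool) (k : ℕ) : Zof (A ++ B ++ [false] ++ C) k =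
    if A.count true < k ∧ k ≤ A.count true + B.count true then Zof (A ++ [false] ++ B ++ C) k - 1
    else Zof (A ++ [false] ++ B ++ C) k := by
  cases k with
  | zero => simp [Zof]
  | succ y =>
    simp only [Zof, List.append_assoc]
    simp only [lastX_append, List.count_cons, List.count_nil]
    simp
    split_ifs <;> try omega

theorem getD_false {μ : List Bool} {i : ℕ} (h : i < μ.length) (d : Bool) : μ.getD i d = false ↔
    (μ.take (i + 1)).count false = (μ.take i).count false + 1 := by
  rw [List.take_succ_eq_append_getElem h, List.getD_eq_getElem _ _ h]
  cases μ[i] <;> simp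

theorem getD_true {μ : List Bool} {i : ℕ} (h : i < μ.length) (d : Bool) : μ.getD i d = true ↔
    (μ.take (i + 1)).count true = (μ.take i).count true + 1 := by
  rw [List.take_succ_eq_append_getElem h, List.getD_eq_getElem _ _ h]
  cases μ[i] <;> simp

theorem split_path {μ : List Bool} {i j : ℕ} (h0 : 0 < i) (hij : i < j) (hj : j ≤ μ.length)
    (h : μ.getD (i - 1) true = false) :
    μ = μ.take (i - 1) ++ [false] ++ (μ.drop i).take (j - i) ++ μ.drop j := by
  have e1 : μ.take (i - 1) ++ [false] = μ.take i := by
    obtain ⟨k, rfl⟩ : ∃ k, i = k + 1 := ⟨i - 1, by omega⟩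
    simp only [Nat.add_sub_cancel] at h ⊢
    rw [List.take_succ_eq_append_getElem (show k < μ.length by omega)]
    rw [List.getD_eq_getElem _ _ (show k < μ.length by omega)] at h
    rw [h]
  have e2 : μ.take i ++ (μ.drop i).take (j - i) = μ.take j := by
    conv_rhs => rw [show j = i + (j - i) by omega, List.take_add]
  rw [e1, e2, List.take_append_drop]

theorem split_count {μ : List Bool} {i j : ℕ} (h0 : 0 < i) (hij : i < j) (hj : j ≤ μ.length)
    (h : μ.getD (i - 1) true = false) :
    (μ.take (i - 1)).count true = (pointAt μ i).2 ∧
    (μ.take (i - 1)).count true + ((μ.drop i).take (j - i)).count true = (pointAt μ j).2 := by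
  have e1 : μ.take (i - 1) ++ [false] = μ.take i := by
    obtain ⟨k, rfl⟩ : ∃ k, i = k + 1 := ⟨i - 1, by omega⟩
    simp only [Nat.add_sub_cancel] at h ⊢
    rw [List.take_succ_eq_append_getElem (show k < μ.length by omega)]
    rw [List.getD_eq_getElem _ _ (show k < μ.length by omega)] at h
    rw [h]
  have e2 : μ.take i ++ (μ.drop i).take (j - i) = μ.take j := by
    conv_rhs => rw [show j = i + (j - i) by omega, List.take_add]
  simp only [pointAt]
  rw [← e2, List.count_append, ← e1]
  simp

theorem cover_iff {ν μ μ' : List Bool} (hμ : IsNuPath ν μ) (hμ' : IsNuPath ν μ') :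
    TamariCover ν μ μ' ↔ Cov (lastX ν) (northSteps ν) (Zof μ) (Zof μ') := by
  obtain ⟨hE, hN, hZ⟩ := isNuPath_iff.1 hμ
  obtain ⟨hE', hN', hZ'⟩ := isNuPath_iff.1 hμ'
  have hr := lastX_mono ν
  simp only [northSteps, eastSteps] at hE hN hE' hN'
  have hlen := count_len μ
  constructor
  · rintro ⟨-, -, i, j, h0, hij, hj, hd1, hd2, hh, hne, rfl⟩
    obtain ⟨⟨x, a⟩, hp⟩ : ∃ p, pointAt μ i = p := ⟨_, rfl⟩
    obtain ⟨⟨xj, b⟩, hq⟩ : ∃ p, pointAt μ j = p := ⟨_, rfl⟩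
    obtain ⟨p1, p2, p3, p4⟩ := pointAt_spec (by omega) hp
    obtain ⟨q1, q2, q3, q4⟩ := pointAt_spec hj hq
    have c1 := (getD_false (by omega) _).1 hd1
    have c2 := (getD_true (by omega) _).1 hd2
    obtain ⟨s1, s2⟩ := split_count h0 hij hj hd1
    rw [hp] at s1
    rw [hq] at s2
    simp only at s1 s2
    rw [Nat.sub_add_cancel h0] at c1
    have ep : pointAt μ (i - 1) = (x - 1, a) := by
      simp only [pointAt, Prod.mk.injEq] at hp ⊢; omega
    have en : pointAt μ (i + 1) = (x, a + 1) := by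
      have l1 := count_len (μ.take (i + 1))
      simp only [List.length_take] at l1
      simp only [pointAt, Prod.mk.injEq] at hp ⊢; omega
    obtain ⟨o1, o2, o3, o4⟩ := pointAt_spec (by omega) ep
    obtain ⟨n1, n2, n3, n4⟩ := pointAt_spec (by omega) en
    have hx : x = Zof μ (a + 1) := by simp only [Zof] at n3 ⊢; omega
    have hab : a < b := by
      by_contra hle
      have : Zof μ (b + 1) ≤ Zof μ (a + 1) := Zof_mono μ (by omega)
      simp only [Zof] at this hx; omega
    have hpt : ∀ k z, k ≤ ν.count true → Zof μ k ≤ z → z ≤ lastX μ k →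
        pointAt μ (z + k) = (z, k) ∧ horiz ν (z, k) = lastX ν k - z := by
      intro k z g1 g2 g3
      exact ⟨pointAt_of (by omega) g2 g3, horiz_eq (mem_APts.2 ⟨g1, g3.trans (hZ.le k)⟩)⟩
    rw [hq, hp, (hpt b xj (by omega) q3 q4).2, (hpt a x (by omega) p3 p4).2] at hh
    have le1 := hZ.le a
    have le2 := hZ.le b
    simp only [Zof] at le1 le2
    have hrab := hr hab.le
    have hw : ∀ k, a ≤ k → k < b → lastX ν a + lastX μ k ≤ lastX ν k + x := by
      intro k hk
      induction k, hk using Nat.le_induction with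
      | base => intro _; simp only [Zof] at hx; omega
      | succ k hk ih =>
        intro hkb
        have h1 := ih (by omega)
        by_contra hcon
        have h2 : lastX ν k ≤ lastX ν (k + 1) := hr (by omega)
        have h4 : lastX ν a ≤ lastX ν k := hr (by omega)
        have h3 := hpt (k + 1) (lastX ν (k + 1) + x - lastX ν a) (by omega)
          (by simp only [Zof]; omega) (by omega)
        have h5 : lastX μ (k + 1) ≤ Zof μ b := Zof_mono μ (show k + 1 + 1 ≤ b by omega)
        have := hne (lastX ν (k + 1) + x - lastX ν a + (k + 1)) (by omega) (by omega)
        rw [h3.1, h3.2, hp, (hpt a x (by omega) p3 p4).2] at this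
        omega
    refine ⟨a, b, hab, by simp only [northSteps]; omega, by omega, ?_, ?_, ?_⟩
    · simp only [Zof] at hx ⊢; omega
    · intro k k1 k2
      have h1 := hw k k1.le k2
      have h3 := hpt k (lastX μ k) (by omega) (Zof_mono μ (show k ≤ k + 1 by omega)) le_rfl
      have h5 : lastX μ k ≤ Zof μ b := Zof_mono μ (show k + 1 ≤ b by omega)
      have h6 : Zof μ (a + 1) ≤ Zof μ (k + 1) := Zof_mono μ (by omega)
      have h7 := hZ.le k
      simp only [Zof] at hx h6 h7
      have := hne (lastX μ k + k) (by omega) (by omega)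
      rw [h3.1, h3.2, hp, (hpt a x (by omega) p3 p4).2] at this
      simp only [Zof]
      omega
    · intro k
      rw [Zof_swap, ← split_path h0 hij hj hd1, s2, s1]
  · rintro ⟨a, b, hab, hbn, hlt, hb, hmid, hk⟩
    simp only [northSteps] at hbn
    have le1 := hZ.le a
    have le2 := hZ.le b
    have hrab := hr hab.le
    have hpt : ∀ k z, k ≤ ν.count true → Zof μ k ≤ z → z ≤ lastX μ k →
        pointAt μ (z + k) = (z, k) ∧ horiz ν (z, k) = lastX ν k - z := by
      intro k z g1 g2 g3
      exact ⟨pointAt_of (by omega) g2 g3, horiz_eq (mem_APts.2 ⟨g1, g3.trans (hZ.le k)⟩)⟩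
    obtain ⟨x, hx⟩ : ∃ x, x = Zof μ (a + 1) := ⟨_, rfl⟩
    obtain ⟨xj, hxj⟩ : ∃ xj, xj = lastX ν b + x - lastX ν a := ⟨_, rfl⟩
    have lo : Zof μ b ≤ xj := by
      rcases Nat.lt_or_ge (a + 1) b with h | h
      · have h1 := hmid (b - 1) (by omega) (by omega)
        rw [Nat.sub_add_cancel (by omega)] at h1
        have h2 : lastX ν (b - 1) ≤ lastX ν b := hr (by omega)
        omega
      · obtain rfl : b = a + 1 := by omega
        omega
    have hi : xj ≤ lastX μ b := by simp only [Zof] at hb hx; omega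
    have mab : Zof μ (a + 1) ≤ Zof μ b := Zof_mono μ (by omega)
    obtain ⟨hp, hph⟩ := hpt a x (by omega) (by omega) (by simp only [Zof] at hx; omega)
    obtain ⟨hq, hqh⟩ := hpt b xj (by omega) lo hi
    obtain ⟨ho, -⟩ := hpt a (x - 1) (by omega) (by omega) (by simp only [Zof] at hx; omega)
    obtain ⟨hn, -⟩ := hpt (a + 1) x (by omega) (by omega)
      (by rw [hx]; exact lastX_mono μ (by omega))
    have hjl := lastX_le μ b
    rw [show x - 1 + a = x + a - 1 by omega] at ho
    have hd1 : μ.getD (x + a - 1) true = false := by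
      rw [getD_false (by omega), Nat.sub_add_cancel (by omega)]
      simp only [pointAt, Prod.mk.injEq] at hp ho
      omega
    have hd2 : μ.getD (x + a) false = true := by
      rw [getD_true (by omega)]
      rw [← add_assoc] at hn
      simp only [pointAt, Prod.mk.injEq] at hp hn
      omega
    have h0 : 0 < x + a := by omega
    have hij : x + a < xj + b := by omega
    have hj : xj + b ≤ μ.length := by omega
    refine ⟨hμ, hμ', x + a, xj + b, h0, hij, hj, hd1, hd2, ?_, ?_, ?_⟩
    · rw [hp, hq, hph, hqh]; omega
    · intro k k1 k2
      obtain ⟨⟨z, y⟩, hz⟩ : ∃ p, pointAt μ k = p := ⟨_, rfl⟩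
      obtain ⟨z1, z2, z3, z4⟩ := pointAt_spec (by omega) hz
      rw [hz, hp, hph, (hpt y z (by omega) z3 z4).2]
      rcases Nat.lt_or_ge a y with h1 | h1
      · rcases Nat.lt_or_ge y b with h2 | h2
        · have := hmid y h1 h2
          simp only [Zof] at this hx le1
          omega
        · rcases h2.lt_or_eq with h3 | h3
          · have : Zof μ (b + 1) ≤ Zof μ y := Zof_mono μ (by omega)
            change lastX μ b ≤ Zof μ y at this
            omega
          · subst h3
            omega
      · have : Zof μ (y + 1) ≤ Zof μ (a + 1) := Zof_mono μ (by omega)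
        simp only [Zof] at this hx
        omega
    · obtain ⟨s1, s2⟩ := split_count h0 hij hj hd1
      rw [hp] at s1
      rw [hq] at s2
      simp only at s1 s2
      have hs := split_path h0 hij hj hd1
      apply path_inj
      · have := congrArg (List.count true) hs
        simp only [List.count_append] at this ⊢
        omega
      · intro y
        have := Zof_swap (μ.take (x + a - 1)) ((μ.drop (x + a)).take (xj + b - (x + a))) (μ.drop (xj + b)) (y + 1)
        rw [← hs, s2, s1, ← hk] at this
        exact this.symm

/-! ## Words -/

theorem filter_range_lt {k : ℕ} : ∀ {N : ℕ}, k ≤ N → (List.range N).filter (fun x => decide (x < k)) = List.range k := by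
  intro N h
  induction N, h using Nat.le_induction with
  | base => rw [List.filter_eq_self]; simp
  | succ N hN ih =>
    rw [List.range_succ, List.filter_append, ih]
    simp; omega

def rowsL (r : ℕ → ℕ) (N : ℕ) : List (ℕ × ℕ) :=
  ((List.range N).map fun y => (List.range (r y + 1)).map fun x => (x, y)).flatten

theorem readingList_eq (ν : List Bool) : readingList ν = rowsL (lastX ν) (northSteps ν + 1) := by
  unfold readingList rowsL
  congr 1
  apply List.map_congr_left
  intro y _
  congr 1
  have := lastX_le ν y
  rw [← filter_range_lt (show lastX ν y + 1 ≤ eastSteps ν + 1 by simp only [eastSteps]; omega)]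
  apply List.filter_congr
  intro x hx
  simp only [List.mem_range, eastSteps] at hx
  simp only [decide_eq_decide]
  rw [height_iff ν x y (by omega)]
  omega

theorem rowsL_succ (r : ℕ → ℕ) (N : ℕ) :
    rowsL r (N + 1) = rowsL r N ++ (List.range (r N + 1)).map fun x => (x, N) := by
  simp [rowsL, List.range_succ]

theorem mem_rowsL {r : ℕ → ℕ} {N x y : ℕ} : (x, y) ∈ rowsL r N ↔ y < N ∧ x ≤ r y := by
  induction N with
  | zero => simp [rowsL]
  | succ N ih =>
    rw [rowsL_succ, List.mem_append, ih]
    simp only [List.mem_map, List.mem_range, Prod.mk.injEq]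
    constructor
    · rintro (h | ⟨a, h1, rfl, rfl⟩) <;> omega
    · intro h
      rcases Nat.lt_or_ge y N with h1 | h1
      · left; omega
      · obtain rfl : y = N := by omega
        right; exact ⟨x, by omega, rfl, rfl⟩

theorem rowsL_length (r : ℕ → ℕ) (N : ℕ) : (rowsL r N).length = ∑ y ∈ Finset.range N, (r y + 1) := by
  induction N with
  | zero => simp [rowsL]
  | succ N ih => rw [rowsL_succ, List.length_append, ih, Finset.sum_range_succ]; simp

theorem rowsL_sorted (r : ℕ → ℕ) (N : ℕ) :
    (rowsL r N).Pairwise fun p q => p.2 < q.2 ∨ p.2 = q.2 ∧ p.1 < q.1 := by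
  induction N with
  | zero => simp [rowsL]
  | succ N ih =>
    rw [rowsL_succ, List.pairwise_append]
    refine ⟨ih, ?_, ?_⟩
    · rw [List.pairwise_map]
      simp only [lt_self_iff_false, true_and, false_or]
      exact List.pairwise_lt_range
    · rintro ⟨x, y⟩ h1 ⟨x', y'⟩ h2
      rw [mem_rowsL] at h1
      simp only [List.mem_map, List.mem_range, Prod.mk.injEq] at h2
      obtain ⟨a, -, -, rfl⟩ := h2
      left; exact h1.1

theorem rowsL_prod (ν : List Bool) (P : Set (ℕ × ℕ)) (r : ℕ → ℕ) (N : ℕ) :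
    (((rowsL r N).filter fun p => decide (p ∉ P)).map (labelPerm ν)).prod = UU r (northSteps ν) P N := by
  have row : ∀ y x, ((((List.range x).map fun x => (x, y)).filter fun p => decide (p ∉ P)).map (labelPerm ν)).prod
      = rowU (northSteps ν) P y x := by
    intro y x
    induction x with
    | zero => simp [rowU]
    | succ x ih =>
      rw [List.range_succ, List.map_append, List.filter_append, List.map_append, List.prod_append, ih, rowU]
      congr 1
      rw [ltr]
      by_cases h : (x, y) ∈ P
      · simp [h]
      · simp [h, labelPerm, dOf, add_comm x]
  induction N with
  | zero => simp [rowsL, UU]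
  | succ N ih =>
    rw [rowsL_succ, List.filter_append, List.map_append, List.prod_append, ih, row, UU]

/-- element of the list at a position -/
def at0 (L : List (ℕ × ℕ)) (i : ℕ) : ℕ × ℕ := L.getD i (0, 0)

noncomputable def posOf (L : List (ℕ × ℕ)) (S : Finset (ℕ × ℕ)) : Finset ℕ :=
  (Finset.range L.length).filter fun i => at0 L i ∈ S

theorem mem_posOf {L S i} : i ∈ posOf L S ↔ i < L.length ∧ at0 L i ∈ S := by
  simp [posOf]

theorem at0_map (L : List (ℕ × ℕ)) : (List.range L.length).map (at0 L) = L := by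
  apply List.ext_getElem
  · simp
  · intro i h1 h2
    simp [at0, h2]

theorem prodAt_eq (ν : List Bool) (L : List (ℕ × ℕ)) (S : Finset (ℕ × ℕ)) :
    prodAt (L.map (labelPerm ν)) (Finset.range (L.map (labelPerm ν)).length \ posOf L S) =
    ((L.filter fun p => decide (p ∉ (S : Set (ℕ × ℕ)))).map (labelPerm ν)).prod := by
  conv_rhs => rw [← at0_map L, List.filter_map, List.map_map]
  unfold prodAt
  rw [List.length_map]
  congr 1
  have e : (List.range L.length).filter (fun i => decide (i ∈ Finset.range L.length \ posOf L S)) =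
      (List.range L.length).filter ((fun p => decide (p ∉ (S : Set (ℕ × ℕ)))) ∘ at0 L) := by
    apply List.filter_congr
    intro i hi
    rw [List.mem_range] at hi
    simp [mem_posOf, hi]
  rw [e]
  apply List.map_congr_left
  intro i hi
  simp only [List.mem_filter, List.mem_range] at hi
  simp [at0, hi.1]

theorem at0_lt {L : List (ℕ × ℕ)}
    (hL : L.Pairwise fun p q => p.2 < q.2 ∨ p.2 = q.2 ∧ p.1 < q.1) {i j : ℕ} (hij : i < j) (hj : j < L.length) :
    (at0 L i).2 < (at0 L j).2 ∨ (at0 L i).2 = (at0 L j).2 ∧ (at0 L i).1 < (at0 L j).1 := by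
  have := List.pairwise_iff_getElem.1 hL i j (by omega) hj hij
  simpa [at0, hj, show i < L.length by omega] using this

theorem at0_inj {L : List (ℕ × ℕ)}
    (hL : L.Pairwise fun p q => p.2 < q.2 ∨ p.2 = q.2 ∧ p.1 < q.1) {i j : ℕ} (hi : i < L.length) (hj : j < L.length) (h : at0 L i = at0 L j) : i = j := by
  rcases lt_trichotomy i j with h1 | h1 | h1
  · have := at0_lt hL h1 hj
    rw [h] at this; omega
  · exact h1
  · have := at0_lt hL h1 hi
    rw [h] at this; omega

theorem posOf_image {L : List (ℕ × ℕ)}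
    (hL : L.Pairwise fun p q => p.2 < q.2 ∨ p.2 = q.2 ∧ p.1 < q.1) {I : Finset ℕ} (hI : I ⊆ Finset.range L.length) : posOf L (I.image (at0 L)) = I := by
  ext i
  simp only [mem_posOf, Finset.mem_image]
  constructor
  · rintro ⟨h1, j, h2, h3⟩
    have := at0_inj hL (Finset.mem_range.1 (hI h2)) h1 h3
    exact this ▸ h2
  · intro h
    exact ⟨Finset.mem_range.1 (hI h), i, h, rfl⟩

theorem posOf_card {L : List (ℕ × ℕ)}
    (hL : L.Pairwise fun p q => p.2 < q.2 ∨ p.2 = q.2 ∧ p.1 < q.1) {S : Finset (ℕ × ℕ)} (hS : ∀ p ∈ S, p ∈ L) : (posOf L S).card = S.card := by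
  have : S = (posOf L S).image (at0 L) := by
    ext p
    simp only [Finset.mem_image, mem_posOf]
    constructor
    · intro h
      obtain ⟨i, hi, rfl⟩ := List.mem_iff_getElem.1 (hS p h)
      exact ⟨i, ⟨hi, by simpa [at0, hi] using h⟩, by simp [at0, hi]⟩
    · rintro ⟨i, ⟨-, h⟩, rfl⟩; exact h
  conv_rhs => rw [this]
  rw [Finset.card_image_of_injOn]
  intro i hi j hj h
  exact at0_inj hL (mem_posOf.1 hi).1 (mem_posOf.1 hj).1 h

theorem posOf_erase {L : List (ℕ × ℕ)}
    (hL : L.Pairwise fun p q => p.2 < q.2 ∨ p.2 = q.2 ∧ p.1 < q.1) {S : Finset (ℕ × ℕ)} {i : ℕ} (hi : i < L.length) :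
    (posOf L S).erase i = posOf L (S.erase (at0 L i)) := by
  ext k
  simp only [Finset.mem_erase, mem_posOf]
  constructor
  · rintro ⟨h1, h2, h3⟩
    exact ⟨h2, fun h => h1 (at0_inj hL h2 hi h), h3⟩
  · rintro ⟨h2, h1, h3⟩
    exact ⟨fun h => h1 (h ▸ rfl), h2, h3⟩

theorem posOf_inj {L : List (ℕ × ℕ)} {S S' : Finset (ℕ × ℕ)} (hS : ∀ p ∈ S, p ∈ L) (hS' : ∀ p ∈ S', p ∈ L)
    (h : posOf L S = posOf L S') : S = S' := by
  have aux : ∀ {S S' : Finset (ℕ × ℕ)}, (∀ p ∈ S, p ∈ L) → posOf L S = posOf L S' → S ⊆ S' := by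
    intro S S' hS h p hp
    obtain ⟨i, hi, rfl⟩ := List.mem_iff_getElem.1 (hS p hp)
    have : i ∈ posOf L S := mem_posOf.2 ⟨hi, by simpa [at0, hi] using hp⟩
    rw [h, mem_posOf] at this
    simpa [at0, hi] using this.2
  exact (aux hS h).antisymm (aux hS' h.symm)

/-! ## The minimal tree -/

theorem Zof_pth (ν : List Bool) : IsPth (lastX ν) (northSteps ν) (Zof ν) := by
  refine ⟨rfl, Zof_mono ν, fun y => le_rfl, ?_⟩
  intro y hy
  cases y with
  | zero => omega
  | succ y =>
    simp only [northSteps] at hy ⊢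
    simp only [Zof]
    rw [lastX_top ν y (by omega), lastX_top ν _ le_rfl]

theorem stk_min (ν : List Bool) : ∀ y H, 1 ≤ H → stk (lastX ν) (Zof ν) y H = H + Zof ν y := by
  intro y H hH
  cases y with
  | zero => simp [stk, Zof]
  | succ y =>
    have h : lastX ν y < H + Zof ν (y + 1) := by simp only [Zof]; omega
    simp only [stk, if_pos h]

theorem Tmin_eq (ν : List Bool) : TminSet ν = (treeOf (lastX ν) (northSteps ν) (Zof ν) : Finset (ℕ × ℕ)) := by
  ext ⟨x, y⟩
  rw [Finset.mem_coe, mem_treeOf (lastX_mono ν) (Zof_pth ν)]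
  have hlen := count_len ν
  have hle := (Zof_pth ν).le0 (lastX_mono ν) y
  have hle2 := lastX_le ν y
  constructor
  · rintro ⟨h1, h2⟩
    rw [mem_APts] at h1
    refine ⟨h1.1, ?_⟩
    rcases h2 with h2 | ⟨i, hi, h3, h4⟩
    · simp only at h2
      subst h2
      exact ⟨0, by simp [Zof], by omega, stk_zero (Zof_pth ν) y⟩
    · have c := (getD_false hi _).1 h3
      obtain ⟨a1, a2, a3, a4⟩ := pointAt_spec (show i + 1 ≤ ν.length by omega) h4.symm
      have ep : pointAt ν i = (x - 1, y) := by
        have l1 := count_len (ν.take i)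
        simp only [List.length_take] at l1
        simp only [pointAt, Prod.mk.injEq] at h4 ⊢
        omega
      obtain ⟨b1, b2, b3, b4⟩ := pointAt_spec (by omega) ep
      exact ⟨x - Zof ν y, by simp only [Zof]; omega, by omega, by rw [stk_min _ _ _ (by omega)]; omega⟩
  · rintro ⟨h1, H, h2, h3, rfl⟩
    rcases Nat.eq_zero_or_pos H with rfl | hH
    · rw [stk_zero (Zof_pth ν)]
      exact ⟨mem_APts.2 ⟨h1, by omega⟩, Or.inl rfl⟩
    · rw [stk_min _ _ _ hH]
      refine ⟨mem_APts.2 ⟨h1, by omega⟩, Or.inr ⟨H - 1 + Zof ν y + y, ?_, ?_, ?_⟩⟩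
      · simp only [northSteps] at h1; omega
      · have p1 := pointAt_of (μ := ν) (x := H - 1 + Zof ν y) (y := y) h1 (by omega) (by omega)
        have p2 := pointAt_of (μ := ν) (x := H + Zof ν y) (y := y) h1 (by omega) (by omega)
        rw [getD_false (by simp only [northSteps] at h1; omega)]
        rw [show H + Zof ν y + y = H - 1 + Zof ν y + y + 1 by omega] at p2
        simp only [pointAt, Prod.mk.injEq] at p1 p2
        omega
      · rw [show H - 1 + Zof ν y + y + 1 = H + Zof ν y + y by omega]
        exact (pointAt_of h1 (by omega) (by omega)).symm

theorem piNu_eq (ν : List Bool) : piNu ν = UU (lastX ν) (northSteps ν)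
    (treeOf (lastX ν) (northSteps ν) (Zof ν) : Finset (ℕ × ℕ)) (northSteps ν + 1) := by
  rw [← rowsL_prod ν, piNu, prodOver, readingList_eq]
  congr 2
  apply List.filter_congr
  rintro ⟨x, y⟩ hp
  rw [mem_rowsL] at hp
  have : (x, y) ∈ APts ν := mem_APts.2 ⟨by omega, hp.2⟩
  rw [← Tmin_eq]
  simp [this]

theorem facet_iff (ν : List Bool) (I : Finset ℕ) : IsFacet (Qword ν) (piNu ν) I ↔
    ∃ Z, IsPth (lastX ν) (northSteps ν) Z ∧ I = posOf (readingList ν) (treeOf (lastX ν) (northSteps ν) Z) := by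
  have hr := lastX_mono ν
  have hmem : ∀ x y, (x, y) ∈ readingList ν ↔ y ≤ northSteps ν ∧ x ≤ lastX ν y := by
    intro x y; rw [readingList_eq, mem_rowsL]; omega
  have hL := rowsL_sorted (lastX ν) (northSteps ν + 1)
  have hlen := rowsL_length (lastX ν) (northSteps ν + 1)
  rw [← readingList_eq] at hL hlen
  rw [Finset.sum_range_succ, Finset.sum_add_distrib] at hlen
  simp only [Finset.sum_const, Finset.card_range, smul_eq_mul, mul_one] at hlen
  have hprod : ∀ S : Finset (ℕ × ℕ), prodAt (Qword ν) (Finset.range (Qword ν).length \ posOf (readingList ν) S) =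
      UU (lastX ν) (northSteps ν) (S : Finset (ℕ × ℕ)) (northSteps ν + 1) := by
    intro S
    rw [Qword, prodAt_eq, readingList_eq, ← rowsL_prod ν]
    congr 2
    apply List.filter_congr
    intro p _
    simp
  have hql : (Qword ν).length = (readingList ν).length := by simp [Qword]
  have hinv := (tree_rothe hr (Zof_pth ν)).2
  rw [← piNu_eq] at hinv
  constructor
  · rintro ⟨h1, h2, h3⟩
    have hI := posOf_image hL (I := I) (by rwa [← hql])
    set S := I.image (at0 (readingList ν)) with hSdef
    have hSL : ∀ p ∈ S, p ∈ readingList ν := by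
      intro p hp
      obtain ⟨i, hi, rfl⟩ := Finset.mem_image.1 hp
      have := Finset.mem_range.1 (h1 hi)
      rw [hql] at this
      simp [at0, this]
    have hcard := posOf_card hL hSL
    rw [hI] at hcard
    rw [Finset.card_sdiff_of_subset h1, Finset.card_range] at h3
    have hIc := Finset.card_le_card h1
    rw [Finset.card_range] at hIc
    rw [← hI, hprod, piNu_eq] at h2
    have hT : IsTree (lastX ν) (northSteps ν) S :=
      isTree_of_UU hr (Zof_pth ν) (fun x y h => (hmem x y).1 (hSL _ h)) (by omega) h2
    obtain ⟨Z, hZ, hSZ⟩ := exists_pth_of_tree hr hT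
    exact ⟨Z, hZ, by rw [← hSZ, hI]⟩
  · rintro ⟨Z, hZ, rfl⟩
    have hT := treeOf_isTree hr hZ
    have hsub : posOf (readingList ν) (treeOf (lastX ν) (northSteps ν) Z) ⊆ Finset.range (Qword ν).length := by
      rw [hql]; exact Finset.filter_subset _ _
    refine ⟨hsub, ?_, ?_⟩
    · rw [hprod, piNu_eq]; exact tree_UU_eq hr hZ (Zof_pth ν)
    · rw [Finset.card_sdiff_of_subset hsub, Finset.card_range,
        posOf_card hL (fun p hp => (hmem p.1 p.2).2 (hT.sub _ _ hp)), hT.card]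
      omega

theorem flip_iff {ν : List Bool} {Z Z' : ℕ → ℕ} (hZ : IsPth (lastX ν) (northSteps ν) Z)
    (hZ' : IsPth (lastX ν) (northSteps ν) Z') :
    IncFlip (Qword ν) (piNu ν) (posOf (readingList ν) (treeOf (lastX ν) (northSteps ν) Z))
      (posOf (readingList ν) (treeOf (lastX ν) (northSteps ν) Z')) ↔ Cov (lastX ν) (northSteps ν) Z Z' := by
  have hr := lastX_mono ν
  have hmem : ∀ x y, (x, y) ∈ readingList ν ↔ y ≤ northSteps ν ∧ x ≤ lastX ν y := by
    intro x y; rw [readingList_eq, mem_rowsL]; omega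
  have hL := rowsL_sorted (lastX ν) (northSteps ν + 1)
  rw [← readingList_eq] at hL
  have hSL : ∀ {Z}, IsPth (lastX ν) (northSteps ν) Z →
      ∀ p ∈ treeOf (lastX ν) (northSteps ν) Z, p ∈ readingList ν := fun hZ p hp =>
    (hmem p.1 p.2).2 ((treeOf_isTree hr hZ).sub _ _ hp)
  constructor
  · rintro ⟨-, -, i, hi, j, hj, hij, he⟩
    rw [mem_posOf] at hi hj
    rw [posOf_erase hL hi.1, posOf_erase hL hj.1] at he
    have he' := posOf_inj (fun p hp => hSL hZ p (Finset.mem_of_mem_erase hp))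
      (fun p hp => hSL hZ' p (Finset.mem_of_mem_erase hp)) he
    have hlt := at0_lt hL hij hj.1
    refine flip_cov hr hZ hZ' hi.2 hj.2 ?_ ?_ he'
    · intro h
      have := at0_inj hL hi.1 hj.1 h
      omega
    · omega
  · intro hc
    obtain ⟨p, hp, q, hq, hpq, he⟩ := cov_flip hr hZ hZ' hc
    refine ⟨(facet_iff ν _).2 ⟨Z, hZ, rfl⟩, (facet_iff ν _).2 ⟨Z', hZ', rfl⟩, ?_⟩
    obtain ⟨i, hi, ei⟩ := List.mem_iff_getElem.1 (hSL hZ p hp)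
    obtain ⟨j, hj, ej⟩ := List.mem_iff_getElem.1 (hSL hZ' q hq)
    have ai : at0 (readingList ν) i = p := by simp [at0, hi, ei]
    have aj : at0 (readingList ν) j = q := by simp [at0, hj, ej]
    refine ⟨i, mem_posOf.2 ⟨hi, ai ▸ hp⟩, j, mem_posOf.2 ⟨hj, aj ▸ hq⟩, ?_, ?_⟩
    · by_contra hle
      rcases (not_lt.1 hle).lt_or_eq with h | h
      · have := at0_lt hL h hi
        rw [ai, aj] at this; omega
      · rw [h, ai] at aj
        rw [aj] at hpq; omega
    · rw [posOf_erase hL hi, posOf_erase hL hj, ai, aj, he]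

theorem main_bij (ν : List Bool) :
    Set.BijOn (fun μ => posOf (readingList ν) (treeOf (lastX ν) (northSteps ν) (Zof μ)))
      {μ | IsNuPath ν μ} {I | IsFacet (Qword ν) (piNu ν) I} := by
  have hr := lastX_mono ν
  have hSL : ∀ {Z}, IsPth (lastX ν) (northSteps ν) Z →
      ∀ p ∈ treeOf (lastX ν) (northSteps ν) Z, p ∈ readingList ν := by
    intro Z hZ p hp
    have := (treeOf_isTree hr hZ).sub p.1 p.2 hp
    rw [readingList_eq]
    exact mem_rowsL.2 ⟨by omega, this.2⟩
  refine ⟨?_, ?_, ?_⟩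
  · intro μ hμ
    exact (facet_iff ν _).2 ⟨_, (isNuPath_iff.1 hμ).2.2, rfl⟩
  · intro μ hμ μ' hμ' h
    obtain ⟨a1, a2, a3⟩ := isNuPath_iff.1 hμ
    obtain ⟨b1, b2, b3⟩ := isNuPath_iff.1 hμ'
    have h1 := posOf_inj (hSL a3) (hSL b3) h
    have h2 := treeOf_inj hr a3 b3 (fun y _ => by rw [h1])
    exact path_inj (a2.trans b2.symm) (fun y => congrFun h2 (y + 1))
  · intro I hI
    obtain ⟨Z, hZ, rfl⟩ := (facet_iff ν I).1 hI
    obtain ⟨μ, h1, h2, h3⟩ := exists_path (northSteps ν) (fun y => Z (y + 1)) (eastSteps ν)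
      (fun a b hab => hZ.mono (by omega))
      (fun y hy => by
        rw [hZ.top (y + 1) (by omega), lastX_top ν _ (by exact le_rfl)]; rfl)
    have hZZ : Zof μ = Z := by
      funext y
      cases y with
      | zero => rw [hZ.z0]; rfl
      | succ y => exact h3 y
    exact ⟨μ, isNuPath_iff.2 ⟨h1, h2, hZZ ▸ hZ⟩, by simp only [hZZ]⟩

theorem tamari_iso_increasing_flip_poset (ν : List Bool) :
    ∃ φ : List Bool → Finset ℕ,
      Set.BijOn φ {μ | IsNuPath ν μ} {I | IsFacet (Qword ν) (piNu ν) I} ∧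
      ∀ μ μ', IsNuPath ν μ → IsNuPath ν μ' →
        (TamariLE ν μ μ' ↔ FlipLE (Qword ν) (piNu ν) (φ μ) (φ μ')) := by
  have hB := main_bij ν
  refine ⟨_, hB, ?_⟩
  intro μ μ' hμ hμ'
  constructor
  · apply Relation.ReflTransGen.lift
    intro a b hab
    exact (flip_iff (isNuPath_iff.1 hab.1).2.2 (isNuPath_iff.1 hab.2.1).2.2).2
      ((cover_iff hab.1 hab.2.1).1 hab)
  · intro h
    have key : ∀ J, FlipLE (Qword ν) (piNu ν)
        (posOf (readingList ν) (treeOf (lastX ν) (northSteps ν) (Zof μ))) J →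
        ∀ κ, IsNuPath ν κ → posOf (readingList ν) (treeOf (lastX ν) (northSteps ν) (Zof κ)) = J →
        TamariLE ν μ κ := by
      intro J hJ
      induction hJ with
      | refl =>
        intro κ hκ he
        have : κ = μ := hB.2.1 hκ hμ he
        rw [this]
        exact Relation.ReflTransGen.refl
      | tail h1 h2 ih =>
        intro κ hκ he
        obtain ⟨τ, hτ, rfl⟩ := hB.2.2 h2.1
        subst he
        exact (ih τ hτ rfl).tail ((cover_iff hτ hκ).2
          ((flip_iff (isNuPath_iff.1 hτ).2.2 (isNuPath_iff.1 hκ).2.2).1 h2))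
    exact key _ h μ' hμ' rfl
end
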